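/- arXiv:1204.3468 — 12 statements merged into one kernel-verified Lean document; each statement's English description precedes it below -/
import Mathlib

section
/- The identity (32/π²) · ∫₀^{π/2} ∫₀^{π/2} ∫₀^{π/2} cos²ψ · sin φ · sin²ψ dψ dφ dθ + (96/π²) · ∫₀^{π/2} ∫₀^{π/2} ∫₀^{π/2} cos φ · sin ψ · cos ψ · sin φ · sin²ψ dψ dφ dθ = 1 + 6/π holds. (This is the second moment E(vl²) of the projected volume of a unit 4-cube onto a uniformly random 3-subspace.) -/
open Real

/-- The second moment `E(vl²)` of the projected volume of a unit 4-cube onto a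
uniformly random 3-subspace equals `1 + 6/π`. -/
theorem second_moment_volume_projection_4cube :
    (32 / π ^ 2) *
      (∫ _θ in (0:ℝ)..(π/2), ∫ φ in (0:ℝ)..(π/2), ∫ ψ in (0:ℝ)..(π/2),
        Real.cos ψ ^ 2 * Real.sin φ * Real.sin ψ ^ 2)
    + (96 / π ^ 2) *
      (∫ _θ in (0:ℝ)..(π/2), ∫ φ in (0:ℝ)..(π/2), ∫ ψ in (0:ℝ)..(π/2),
        Real.cos φ * Real.sin ψ * Real.cos ψ * Real.sin φ * Real.sin ψ ^ 2)
    = 1 + 6 / π := by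
  have h1 : ∫ ψ in (0:ℝ)..(π/2), Real.sin ψ ^ 2 * Real.cos ψ ^ 2 = π / 16 := by
    rw [integral_sin_sq_mul_cos_sq]
    have : Real.sin (4 * (π / 2)) = 0 := by
      rw [show 4 * (π / 2) = 2 * π by ring]; exact Real.sin_two_pi
    rw [this]; simp; ring
  have h2 : ∫ ψ in (0:ℝ)..(π/2), Real.sin ψ ^ 3 * Real.cos ψ = 1 / 4 := by
    have := integral_sin_pow_mul_cos_pow_odd (a := 0) (b := π / 2) 3 0
    simp only [mul_zero, zero_add, pow_one, pow_zero, mul_one] at this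
    rw [this]; simp; norm_num
  have h3 : ∫ φ in (0:ℝ)..(π/2), Real.sin φ * Real.cos φ = 1 / 2 := by
    rw [integral_sin_mul_cos₁]; simp
  have h4 : ∫ φ in (0:ℝ)..(π/2), Real.sin φ = 1 := by
    rw [integral_sin]; simp
  have e1 : ∀ φ : ℝ, ∫ ψ in (0:ℝ)..(π/2),
      Real.cos ψ ^ 2 * Real.sin φ * Real.sin ψ ^ 2 = (π / 16) * Real.sin φ := by
    intro φ
    rw [← h1, ← intervalIntegral.integral_mul_const]
    congr 1; ext ψ; ring
  have e2 : ∀ φ : ℝ, ∫ ψ in (0:ℝ)..(π/2),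
      Real.cos φ * Real.sin ψ * Real.cos ψ * Real.sin φ * Real.sin ψ ^ 2
        = (1 / 4) * (Real.sin φ * Real.cos φ) := by
    intro φ
    rw [← h2, ← intervalIntegral.integral_mul_const]
    congr 1; ext ψ; ring
  simp only [e1, e2, intervalIntegral.integral_const_mul, h3, h4,
    intervalIntegral.integral_const, smul_eq_mul]
  have := Real.pi_ne_zero
  field_simp
  ring
end

section
/- Let n ≥ 2 and let μ be the uniform probability measure on the unit sphere of the Euclidean space ℝⁿ (the normalized rotation-invariant surface measure). Then ∫ (Σ_{j=1}^{n} |x_j|)² dμ(x) = 1 + 2(n−1)/π. (This is the second moment of the projected (n−1)-dimensional volume of a unit n-cube onto a uniformly random hyperplane.) -/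
open Real MeasureTheory

lemma aux_refl {n : ℕ} (i j : Fin n) (hij : i ≠ j) (t : ℝ) :
    ∃ R : EuclideanSpace ℝ (Fin n) ≃ₗᵢ[ℝ] EuclideanSpace ℝ (Fin n),
      ∀ x, R x i = x i * cos t + x j * sin t ∧ R x j = x i * sin t - x j * cos t := by
  let f : EuclideanSpace ℝ (Fin n) →ₗ[ℝ] EuclideanSpace ℝ (Fin n) :=
    { toFun := fun x => x + EuclideanSpace.single i (x i * (cos t - 1) + x j * sin t)
        + EuclideanSpace.single j (x i * sin t - x j * (cos t + 1))
      map_add' := by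
        intro x y
        ext k
        simp only [PiLp.add_apply, PiLp.single_apply]
        split_ifs <;> ring
      map_smul' := by
        intro c x
        ext k
        simp only [PiLp.add_apply, PiLp.single_apply, PiLp.smul_apply, smul_eq_mul,
          RingHom.id_apply]
        split_ifs <;> ring }
  have hf : ∀ x, f x = x + EuclideanSpace.single i (x i * (cos t - 1) + x j * sin t)
        + EuclideanSpace.single j (x i * sin t - x j * (cos t + 1)) := fun x => rfl
  have hn : ∀ x, ‖f x‖ = ‖x‖ := by
    intro x
    rw [← sq_eq_sq₀ (norm_nonneg _) (norm_nonneg _), hf, norm_add_sq_real, norm_add_sq_real,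
      inner_add_left]
    simp only [EuclideanSpace.inner_single_right, EuclideanSpace.norm_single, PiLp.single_apply,
      if_neg hij.symm, Real.norm_eq_abs, sq_abs]
    simp
    have h := sin_sq_add_cos_sq t
    linear_combination ((x i)^2 + (x j)^2) * h
  let g : EuclideanSpace ℝ (Fin n) →ₗᵢ[ℝ] EuclideanSpace ℝ (Fin n) := ⟨f, hn⟩
  refine ⟨g.toLinearIsometryEquiv rfl, fun x => ?_⟩
  have hg : g.toLinearIsometryEquiv rfl x = f x := rfl
  rw [hg, hf]
  simp [hij, hij.symm]
  constructor <;> ring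

lemma aux_base : ∫ t in (0:ℝ)..(π/2), |sin (2 * t)| = 1 := by
  have : ∫ t in (0:ℝ)..(π/2), |sin (2 * t)| = ∫ t in (0:ℝ)..(π/2), sin (2 * t) := by
    apply intervalIntegral.integral_congr
    intro t ht
    rw [Set.uIcc_of_le (by positivity)] at ht
    exact abs_of_nonneg (sin_nonneg_of_nonneg_of_le_pi (by linarith [ht.1]) (by linarith [ht.2]))
  rw [this, intervalIntegral.integral_comp_mul_left (fun t => sin t) two_ne_zero, integral_sin]
  have : 2 * (π / 2) = π := by ring
  rw [this]
  norm_num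

lemma aux_int (a b : ℝ) :
    ∫ t in (0:ℝ)..(π/2), |a * cos t + b * sin t| * |a * sin t - b * cos t|
      = (a ^ 2 + b ^ 2) / 2 := by
  let z : ℂ := ⟨a, b⟩
  let φ := z.arg
  have ha : a = ‖z‖ * cos φ := (Complex.norm_mul_cos_arg z).symm
  have hb : b = ‖z‖ * sin φ := (Complex.norm_mul_sin_arg z).symm
  generalize ‖z‖ = r at ha hb
  generalize φ = p at ha hb
  have h1 : ∀ t, |a * cos t + b * sin t| * |a * sin t - b * cos t|
      = r ^ 2 / 2 * |sin (2 * (t - p))| := by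
    intro t
    have e1 : a * cos t + b * sin t = r * cos (t - p) := by rw [cos_sub, ha, hb]; ring
    have e2 : a * sin t - b * cos t = r * sin (t - p) := by rw [sin_sub, ha, hb]; ring
    rw [e1, e2, ← abs_mul, sin_two_mul, ← abs_of_nonneg (by positivity : 0 ≤ r ^ 2 / 2), ← abs_mul]
    congr 1; ring
  simp_rw [h1]
  rw [intervalIntegral.integral_const_mul,
    intervalIntegral.integral_comp_sub_right (fun t => |sin (2 * t)|)]
  have hp : Function.Periodic (fun t => |sin (2 * t)|) (π/2) := by
    intro t
    have : 2 * (t + π / 2) = 2 * t + π := by ring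
    simp only [this, sin_add_pi, abs_neg]
  have := hp.intervalIntegral_add_eq (0 - p) 0
  rw [zero_add, aux_base] at this
  rw [show π / 2 - p = 0 - p + π / 2 by ring, this, ha, hb]
  linear_combination (-r^2/2) * sin_sq_add_cos_sq p

lemma aux_pair {n : ℕ} (μ : Measure (EuclideanSpace ℝ (Fin n))) [IsProbabilityMeasure μ]
    (hae : ∀ᵐ x ∂μ, ‖x‖ = 1)
    (hinv : ∀ R : EuclideanSpace ℝ (Fin n) ≃ₗᵢ[ℝ] EuclideanSpace ℝ (Fin n),
      Measure.map R μ = μ) (i j : Fin n) (hij : i ≠ j) :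
    ∫ x, |x i| * |x j| ∂μ = ∫ x, (x i ^ 2 + x j ^ 2) / π ∂μ := by
  have hx : ∀ x : EuclideanSpace ℝ (Fin n), ‖x‖ = 1 → ∀ k, |x k| ≤ 1 := by
    intro x h k
    simpa [h] using PiLp.norm_apply_le x k
  have h1 : ∀ t : ℝ, ∫ x, |x i * cos t + x j * sin t| * |x i * sin t - x j * cos t| ∂μ
      = ∫ x, |x i| * |x j| ∂μ := by
    intro t
    obtain ⟨R, hR⟩ := aux_refl i j hij t
    conv_rhs => rw [← hinv R]
    rw [integral_map R.continuous.measurable.aemeasurable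
      (Continuous.aestronglyMeasurable (by fun_prop))]
    simp only [hR]
  have hint : Integrable (Function.uncurry fun (t : ℝ) (x : EuclideanSpace ℝ (Fin n)) =>
      |x i * cos t + x j * sin t| * |x i * sin t - x j * cos t|)
      ((volume.restrict (Set.uIoc 0 (π/2))).prod μ) := by
    have : IsFiniteMeasure (volume.restrict (Set.uIoc 0 (π/2))) := by
      rw [Set.uIoc]; infer_instance
    refine Integrable.of_bound (C := 4) (Continuous.aestronglyMeasurable (by
      unfold Function.uncurry; fun_prop)) ?_
    have := (Measure.quasiMeasurePreserving_snd
      (μ := volume.restrict (Set.uIoc 0 (π/2))) (ν := μ)).ae hae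
    filter_upwards [this] with ⟨t, x⟩ h
    have hi := hx x h i
    have hj := hx x h j
    have hc := abs_cos_le_one t
    have hs := abs_sin_le_one t
    have b : ∀ u v : ℝ, |u| ≤ 1 → |v| ≤ 1 → |u * v| ≤ 1 := by
      intro u v hu hv
      rw [abs_mul]; exact mul_le_one₀ hu (abs_nonneg _) hv
    have k1 : |x i * cos t + x j * sin t| ≤ 2 :=
      (abs_add_le _ _).trans (by linarith [b _ _ hi hc, b _ _ hj hs])
    have k2 : |x i * sin t - x j * cos t| ≤ 2 :=
      (abs_sub _ _).trans (by linarith [b _ _ hi hs, b _ _ hj hc])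
    simp only [Function.uncurry, norm_mul, norm_eq_abs, abs_abs]
    nlinarith [abs_nonneg (x i * cos t + x j * sin t), abs_nonneg (x i * sin t - x j * cos t)]
  have h2 := intervalIntegral_integral_swap hint
  simp_rw [h1, aux_int] at h2
  rw [intervalIntegral.integral_const, integral_div] at h2
  rw [integral_div]
  simp only [smul_eq_mul] at h2
  field_simp at h2 ⊢
  linarith

theorem second_moment_projected_volume_ncube (n : ℕ) (hn : 2 ≤ n)
    (μ : Measure (EuclideanSpace ℝ (Fin n))) [IsProbabilityMeasure μ]
    (hsphere : μ (Metric.sphere (0 : EuclideanSpace ℝ (Fin n)) 1) = 1)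
    (hinv : ∀ R : EuclideanSpace ℝ (Fin n) ≃ₗᵢ[ℝ] EuclideanSpace ℝ (Fin n),
      Measure.map R μ = μ) :
    ∫ x, (∑ j, |x j|) ^ 2 ∂μ = 1 + 2 * ((n : ℝ) - 1) / π := by
  have hae : ∀ᵐ x ∂μ, ‖x‖ = 1 := by
    have := (prob_compl_eq_zero_iff (μ := μ) Metric.isClosed_sphere.measurableSet).2 hsphere
    filter_upwards [compl_mem_ae_iff.2 this] with x h
    simpa using h
  have hx : ∀ x : EuclideanSpace ℝ (Fin n), ‖x‖ = 1 → ∀ k, |x k| ≤ 1 := by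
    intro x h k
    simpa [h] using PiLp.norm_apply_le x k
  have hI : ∀ i j, Integrable (fun x : EuclideanSpace ℝ (Fin n) => |x i| * |x j|) μ := by
    intro i j
    refine Integrable.of_bound (C := 1) (Continuous.aestronglyMeasurable (by fun_prop)) ?_
    filter_upwards [hae] with x h
    simpa using mul_le_one₀ (hx x h i) (abs_nonneg _) (hx x h j)
  have hS : ∀ i, Integrable (fun x : EuclideanSpace ℝ (Fin n) => x i ^ 2) μ := by
    intro i
    simpa [← pow_two] using hI i i
  have hsum : ∑ i, ∫ x, x i ^ 2 ∂μ = 1 := by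
    rw [← integral_finsetSum _ (fun i _ => hS i)]
    rw [integral_congr_ae (g := fun _ => (1:ℝ))]
    · simp
    · filter_upwards [hae] with x h
      have := EuclideanSpace.real_norm_sq_eq x
      rw [h] at this
      simpa using this.symm
  have hp : ∀ i j, ∫ x, |x i| * |x j| ∂μ = (∫ x, x i ^ 2 ∂μ) / π + (∫ x, x j ^ 2 ∂μ) / π
      + if i = j then (∫ x, x i ^ 2 ∂μ) * (1 - 2 / π) else 0 := by
    intro i j
    split_ifs with h
    · subst h
      simp only [← pow_two, sq_abs]
      ring
    · rw [aux_pair μ hae hinv i j h, integral_div, integral_add (hS i) (hS j)]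
      ring
  simp_rw [pow_two (∑ j, |_|), Finset.sum_mul_sum]
  rw [integral_finsetSum _ (fun i _ => integrable_finsetSum _ (fun j _ => hI i j))]
  simp_rw [integral_finsetSum _ (fun j _ => hI _ j), hp]
  simp only [Finset.sum_add_distrib, Finset.sum_const, Finset.sum_ite_eq, Finset.mem_univ, if_true,
    ← Finset.sum_div, ← Finset.sum_mul, hsum, Finset.card_univ, Fintype.card_fin, nsmul_eq_mul,
    ← Finset.mul_sum]
  field_simp
  ring
end

section
/- The identity (96/π²) · ∫₀^{π/2} ∫₀^{π/2} ∫₀^{π/2} √(cos²φ · sin²ψ + cos²ψ) · sin φ · sin²ψ dψ dφ dθ = 8 holds; equivalently, ∫₀^{π/2} ∫₀^{π/2} √(cos²φ sin²ψ + cos²ψ) sin φ sin²ψ dψ dφ = π/6. (This is the mean surface area E(ar) of the projection of a unit 4-cube onto a uniformly random 3-subspace of ℝ⁴.) -/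
open Real

lemma aux_inner (ψ : ℝ) (h0 : 0 < ψ) (h1 : ψ < π / 2) :
    ∫ φ in (0:ℝ)..(π/2),
        Real.sqrt (Real.cos φ ^ 2 * Real.sin ψ ^ 2 + Real.cos ψ ^ 2) *
          Real.sin φ * Real.sin ψ ^ 2
      = sin ψ ^ 2 / 2 + sin ψ * cos ψ ^ 2 / 2 * arsinh (sin ψ / cos ψ) := by
  have hs : 0 < sin ψ := sin_pos_of_pos_of_lt_pi h0 (by linarith [pi_pos])
  have hc : 0 < cos ψ := cos_pos_of_mem_Ioo ⟨by linarith, h1⟩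
  have hsc := sin_sq_add_cos_sq ψ
  set s := sin ψ
  set c := cos ψ
  have key : ∀ φ : ℝ, HasDerivAt (fun φ => -(s ^ 2 * (cos φ / 2 * √(cos φ ^ 2 * s ^ 2 + c ^ 2))
      + s * c ^ 2 / 2 * arsinh (s * cos φ / c)))
      (√(cos φ ^ 2 * s ^ 2 + c ^ 2) * sin φ * s ^ 2) φ := by
    intro φ
    have hp : 0 < cos φ ^ 2 * s ^ 2 + c ^ 2 := by positivity
    have hd := hasDerivAt_cos φ
    have e1 : √(1 + (s * cos φ / c) ^ 2) = √(cos φ ^ 2 * s ^ 2 + c ^ 2) / c := by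
      rw [show 1 + (s * cos φ / c) ^ 2 = (cos φ ^ 2 * s ^ 2 + c ^ 2) / c ^ 2 by field_simp; ring,
        sqrt_div hp.le, sqrt_sq hc.le]
    have hq := (((hd.pow 2).mul_const (s ^ 2)).add_const (c ^ 2)).sqrt hp.ne'
    have ha := ((hd.const_mul s).div_const c).arsinh
    have := ((((hd.div_const 2).mul hq).const_mul (s ^ 2)).add
      (ha.const_mul (s * c ^ 2 / 2))).neg
    refine this.congr_deriv ?_
    simp only [e1, smul_eq_mul, Pi.pow_apply]
    have hr := sq_sqrt hp.le
    have hrp := sqrt_pos.2 hp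
    set r := √(cos φ ^ 2 * s ^ 2 + c ^ 2)
    field_simp
    simp only [Nat.cast_ofNat, Nat.add_one_sub_one, pow_one]
    linear_combination (-2 * sin φ) * hr
  rw [intervalIntegral.integral_eq_sub_of_hasDerivAt (fun φ _ => key φ)
    (Continuous.intervalIntegrable (by fun_prop) _ _)]
  simp
  rw [hsc]
  simp
  ring

lemma aux_outer (ψ : ℝ) (h0 : 0 < ψ) (h1 : ψ < π / 2) :
    HasDerivAt (fun ψ => ψ / 3 - sin ψ * cos ψ / 6 - cos ψ ^ 3 / 6 * arsinh (sin ψ / cos ψ))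
      (sin ψ ^ 2 / 2 + sin ψ * cos ψ ^ 2 / 2 * arsinh (sin ψ / cos ψ)) ψ := by
  have hs : 0 < sin ψ := sin_pos_of_pos_of_lt_pi h0 (by linarith [pi_pos])
  have hc : 0 < cos ψ := cos_pos_of_mem_Ioo ⟨by linarith, h1⟩
  have hsc := sin_sq_add_cos_sq ψ
  have e1 : √(1 + (sin ψ / cos ψ) ^ 2) = 1 / cos ψ := by
    rw [show 1 + (sin ψ / cos ψ) ^ 2 = (1 / cos ψ) ^ 2 by field_simp; linarith]
    exact sqrt_sq (by positivity)
  have hds := hasDerivAt_sin ψ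
  have hdc := hasDerivAt_cos ψ
  have := (((hasDerivAt_id ψ).div_const 3).sub ((hds.mul hdc).div_const 6)).sub
    (((hdc.pow 3).div_const 6).mul (hds.div hdc hc.ne').arsinh)
  refine this.congr_deriv ?_
  simp only [e1, smul_eq_mul, Pi.pow_apply, Pi.div_apply]
  set A := arsinh (sin ψ / cos ψ)
  have hs2 : sin ψ ^ 2 = 1 - cos ψ ^ 2 := by linarith
  field_simp
  simp only [Nat.cast_ofNat, Nat.add_one_sub_one]
  ring_nf
  simp only [hs2]
  ring

lemma aux_arsinh_le {x : ℝ} (hx : 0 ≤ x) : arsinh x ≤ x := by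
  rw [← sinh_le_sinh, sinh_arsinh]
  exact self_le_sinh_iff.2 hx

lemma aux_cont : ContinuousOn
    (fun ψ => ψ / 3 - sin ψ * cos ψ / 6 - cos ψ ^ 3 / 6 * arsinh (sin ψ / cos ψ))
    (Set.Icc 0 (π / 2)) := by
  intro x hx
  rcases hx.2.lt_or_eq with h | h
  · have hc : 0 < cos x := cos_pos_of_mem_Ioo ⟨by linarith [hx.1, pi_pos], h⟩
    have : ContinuousAt (fun ψ => sin ψ / cos ψ) x :=
      continuous_sin.continuousAt.div continuous_cos.continuousAt hc.ne'
    have h2 := continuous_arsinh.continuousAt.comp this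
    apply ContinuousAt.continuousWithinAt
    refine ContinuousAt.sub (by fun_prop) (ContinuousAt.mul (by fun_prop) h2)
  · subst h
    refine ContinuousWithinAt.sub (by fun_prop) ?_
    unfold ContinuousWithinAt
    beta_reduce
    rw [show cos (π / 2) ^ 3 / 6 * arsinh (sin (π / 2) / cos (π / 2)) = 0 by simp]
    have hnn : ∀ ψ ∈ Set.Icc 0 (π / 2), 0 ≤ sin ψ ∧ 0 ≤ cos ψ := fun ψ hψ =>
      ⟨sin_nonneg_of_nonneg_of_le_pi hψ.1 (by linarith [hψ.2, pi_pos]),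
        cos_nonneg_of_neg_pi_div_two_le_of_le (by linarith [hψ.1, pi_pos]) hψ.2⟩
    refine squeeze_zero' (g := fun ψ => sin ψ * cos ψ ^ 2 / 6) ?_ ?_ ?_
    · filter_upwards [self_mem_nhdsWithin] with ψ hψ
      obtain ⟨a, b⟩ := hnn ψ hψ
      have := arsinh_nonneg_iff.2 (div_nonneg a b)
      positivity
    · filter_upwards [self_mem_nhdsWithin] with ψ hψ
      obtain ⟨a, b⟩ := hnn ψ hψ
      rcases b.eq_or_lt with b | b
      · simp [← b]
      · calc _ ≤ cos ψ ^ 3 / 6 * (sin ψ / cos ψ) := by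
              gcongr
              exact aux_arsinh_le (by positivity)
          _ = _ := by field_simp
    · have : Continuous (fun ψ : ℝ => sin ψ * cos ψ ^ 2 / 6) := by fun_prop
      have h := this.tendsto (π / 2)
      simp only [cos_pi_div_two] at h
      norm_num at h
      exact h.mono_left nhdsWithin_le_nhds

lemma aux_main : (∫ φ in (0:ℝ)..(π/2), ∫ ψ in (0:ℝ)..(π/2),
        Real.sqrt (Real.cos φ ^ 2 * Real.sin ψ ^ 2 + Real.cos ψ ^ 2) *
          Real.sin φ * Real.sin ψ ^ 2 = π / 6) := by
  have hp : (0:ℝ) ≤ π / 2 := by positivity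
  rw [MeasureTheory.intervalIntegral_intervalIntegral_swap]
  · rw [intervalIntegral.integral_eq_sub_of_hasDerivAt_of_le hp aux_cont]
    · simp; ring
    · intro ψ hψ
      rw [aux_inner ψ hψ.1 hψ.2]
      exact aux_outer ψ hψ.1 hψ.2
    · apply Continuous.intervalIntegrable
      apply intervalIntegral.continuous_parametric_intervalIntegral_of_continuous'
      unfold Function.uncurry
      fun_prop
  · have hc : Continuous (Function.uncurry fun φ ψ : ℝ =>
        √(cos φ ^ 2 * sin ψ ^ 2 + cos ψ ^ 2) * sin φ * sin ψ ^ 2) := by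
      unfold Function.uncurry
      fun_prop
    exact (hc.continuousOn.integrableOn_compact
      (isCompact_uIcc.prod isCompact_uIcc)).mono_set
        (Set.prod_mono Set.uIoc_subset_uIcc Set.uIoc_subset_uIcc)

/-- The mean surface area `E(ar)` of the projection of a unit 4-cube onto a uniformly
random 3-subspace of `ℝ⁴` equals `8`; equivalently the underlying double integral
equals `π/6`. -/
theorem mean_surface_area_projection_4cube :
    ((96 / π ^ 2) *
      ∫ _θ in (0:ℝ)..(π/2), ∫ φ in (0:ℝ)..(π/2), ∫ ψ in (0:ℝ)..(π/2),
        Real.sqrt (Real.cos φ ^ 2 * Real.sin ψ ^ 2 + Real.cos ψ ^ 2) *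
          Real.sin φ * Real.sin ψ ^ 2 = 8)
    ∧
    (∫ φ in (0:ℝ)..(π/2), ∫ ψ in (0:ℝ)..(π/2),
        Real.sqrt (Real.cos φ ^ 2 * Real.sin ψ ^ 2 + Real.cos ψ ^ 2) *
          Real.sin φ * Real.sin ψ ^ 2 = π / 6) := by
  refine ⟨?_, aux_main⟩
  rw [aux_main, intervalIntegral.integral_const]
  have := pi_ne_zero
  simp only [smul_eq_mul]
  field_simp
  ring
end

section
/- ∫₀^{∞} (t/(1+t²)²) · (∫₀^{π/2} √(1 + t² sin²θ) dθ) dt = π²/8. -/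
open Real

lemma aux_subst (θ : ℝ) (h0 : 0 < θ) (h1 : θ < π/2) :
    ∫⁻ t in Set.Ioi (0:ℝ), ENNReal.ofReal (t / (1 + t ^ 2) ^ 2 * Real.sqrt (1 + t ^ 2 * Real.sin θ ^ 2))
    = ∫⁻ x in Set.Ioo (0:ℝ) 1, ENNReal.ofReal (sin θ ^ 2 / (1 - x ^ 2 * cos θ ^ 2) ^ 2) := by
  have hs : 0 < sin θ := sin_pos_of_pos_of_lt_pi h0 (by linarith [pi_pos])
  have hcs : cos θ ^ 2 = 1 - sin θ ^ 2 := by rw [← sin_sq_add_cos_sq θ]; ring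
  rw [hcs]
  generalize sin θ = s at *
  have him : (fun t : ℝ => (Real.sqrt (1 + t ^ 2 * s ^ 2))⁻¹) '' Set.Ioi 0 = Set.Ioo 0 1 := by
    ext x
    simp only [Set.mem_image, Set.mem_Ioi, Set.mem_Ioo]
    constructor
    · rintro ⟨t, ht, rfl⟩
      have h : 1 < Real.sqrt (1 + t ^ 2 * s ^ 2) := by
        rw [Real.lt_sqrt (by norm_num)]
        have : 0 < t ^ 2 * s ^ 2 := by positivity
        linarith
      exact ⟨by positivity, inv_lt_one_of_one_lt₀ h⟩
    · rintro ⟨hx0, hx1⟩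
      have hp : 0 < 1 - x ^ 2 := by nlinarith
      refine ⟨Real.sqrt (1 - x^2) / (x * s), by positivity, ?_⟩
      have : 1 + (Real.sqrt (1 - x^2) / (x * s)) ^ 2 * s ^ 2 = (x⁻¹) ^ 2 := by
        rw [div_pow, Real.sq_sqrt hp.le]
        field_simp
        ring
      rw [this, Real.sqrt_sq (by positivity), inv_inv]
  have hder : ∀ t ∈ Set.Ioi (0:ℝ), HasDerivWithinAt (fun t : ℝ => (Real.sqrt (1 + t ^ 2 * s ^ 2))⁻¹)
      (-(t * s ^ 2 / Real.sqrt (1 + t ^ 2 * s ^ 2)) / (Real.sqrt (1 + t ^ 2 * s ^ 2)) ^ 2) (Set.Ioi 0) t := by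
    intro t ht
    have hp : 0 < 1 + t ^ 2 * s ^ 2 := by positivity
    have h1 : HasDerivAt (fun t : ℝ => 1 + t ^ 2 * s ^ 2) (2 * t * s ^ 2) t := by
      have := ((hasDerivAt_pow 2 t).mul_const (s ^ 2)).const_add 1
      simpa using this
    have h2 := (h1.sqrt hp.ne').inv (by positivity)
    refine HasDerivWithinAt.congr_deriv (f' := _) (by exact h2.hasDerivWithinAt) ?_
    field_simp
  have hinj : Set.InjOn (fun t : ℝ => (Real.sqrt (1 + t ^ 2 * s ^ 2))⁻¹) (Set.Ioi 0) := by
    intro a ha b hb hab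
    simp only [Set.mem_Ioi] at ha hb
    have h := inv_injective hab
    rw [Real.sqrt_inj (by positivity) (by positivity)] at h
    have h' : a ^ 2 * s ^ 2 = b ^ 2 * s ^ 2 := by linarith
    have h'' := mul_right_cancel₀ (by positivity) h'
    exact (pow_left_inj₀ ha.le hb.le (by norm_num)).1 h''
  rw [← him, MeasureTheory.lintegral_image_eq_lintegral_abs_deriv_mul measurableSet_Ioi hder hinj]
  refine MeasureTheory.setLIntegral_congr_fun measurableSet_Ioi ?_
  intro t ht
  simp only [Set.mem_Ioi] at ht
  simp only
  rw [← ENNReal.ofReal_mul (abs_nonneg _)]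
  congr 1
  have hp : 0 < 1 + t ^ 2 * s ^ 2 := by positivity
  have hr : 0 < Real.sqrt (1 + t ^ 2 * s ^ 2) := by positivity
  have hrr := Real.sq_sqrt hp.le
  rw [neg_div, abs_neg, abs_of_nonneg (by positivity)]
  have e : 1 - (Real.sqrt (1 + t ^ 2 * s ^ 2))⁻¹ ^ 2 * (1 - s ^ 2)
      = s ^ 2 * (1 + t ^ 2) / (Real.sqrt (1 + t ^ 2 * s ^ 2)) ^ 2 := by
    rw [inv_pow, hrr]
    field_simp
    ring
  rw [e]
  field_simp

lemma aux_theta (x : ℝ) (h0 : 0 < x) (h1 : x < 1) :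
    ∫⁻ θ in Set.Ioo (0:ℝ) (π/2), ENNReal.ofReal (sin θ ^ 2 / (1 - x ^ 2 * cos θ ^ 2) ^ 2)
    = ENNReal.ofReal (π / 4 * (1 / Real.sqrt (1 - x ^ 2))) := by
  have hp : 0 < 1 - x ^ 2 := by nlinarith
  obtain ⟨b, hb, hbb, hbe⟩ : ∃ b, 0 < b ∧ x ^ 2 = 1 - b ^ 2 ∧ Real.sqrt (1 - x ^ 2) = b :=
    ⟨_, Real.sqrt_pos.2 hp, by rw [Real.sq_sqrt hp.le]; ring, rfl⟩
  rw [hbe, hbb]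
  have hD : ∀ θ : ℝ, 0 < 1 - (1 - b ^ 2) * cos θ ^ 2 := by
    intro θ
    have := cos_sq_le_one θ
    rw [← hbb]
    nlinarith [sq_nonneg x, sq_nonneg (cos θ)]
  have hE : ∀ θ : ℝ, 0 < b * cos θ ^ 2 + sin θ ^ 2 := by
    intro θ
    have := sin_sq_add_cos_sq θ
    by_cases hc : cos θ = 0
    · rw [hc] at this ⊢; nlinarith
    · positivity
  have hcont : Continuous fun θ : ℝ => sin θ ^ 2 / (1 - (1 - b ^ 2) * cos θ ^ 2) ^ 2 := by
    refine Continuous.div (by fun_prop) (by fun_prop) ?_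
    intro θ; have := hD θ; positivity
  have hder : ∀ θ : ℝ, HasDerivAt (fun θ : ℝ => -(sin θ * cos θ) / (2 * (1 - (1 - b ^ 2) * cos θ ^ 2))
      + (θ + arctan ((1 - b) * (sin θ * cos θ) / (b * cos θ ^ 2 + sin θ ^ 2))) / (2 * b))
      (sin θ ^ 2 / (1 - (1 - b ^ 2) * cos θ ^ 2) ^ 2) θ := by
    intro θ
    have hs := hasDerivAt_sin θ
    have hc := hasDerivAt_cos θ
    have d1 := hD θ
    have d2 := hE θ
    have k := ((hs.mul hc).neg.div ((((hc.pow 2).const_mul (1 - b^2)).const_sub 1).const_mul 2) (by simp only [Pi.pow_apply]; positivity)).add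
      (((hasDerivAt_id θ).add ((((hs.mul hc).const_mul (1-b)).div (((hc.pow 2).const_mul b).add (hs.pow 2)) (by simp only [Pi.pow_apply, Pi.add_apply]; positivity)).arctan)).div_const (2 * b))
    refine HasDerivAt.congr_deriv (f' := _) (by exact k) ?_
    simp only [Pi.pow_apply, Pi.add_apply, Pi.mul_apply, Pi.neg_apply, Pi.div_apply]
    have hsc := sin_sq_add_cos_sq θ
    generalize sin θ = s at *
    generalize cos θ = c at *
    have hD' : 1 - (1 - b ^ 2) * c ^ 2 = s ^ 2 + b ^ 2 * c ^ 2 := by linear_combination hsc.symm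
    have hD1 : 0 < s ^ 2 + b ^ 2 * c ^ 2 := hD' ▸ d1
    have key : 1 + ((1 - b) * (s * c) / (b * c ^ 2 + s ^ 2)) ^ 2
        = (s ^ 2 + b ^ 2 * c ^ 2) / (b * c ^ 2 + s ^ 2) ^ 2 := by
      field_simp
      linear_combination (s^2 + b^2 * c^2) * hsc
    rw [key, hD']
    have A : (1 +
          1 / ((s ^ 2 + b ^ 2 * c ^ 2) / (b * c ^ 2 + s ^ 2) ^ 2) *
            (((1 - b) * (c * c + s * -s) * (b * c ^ 2 + s ^ 2) -
                (1 - b) * (s * c) * (b * (((2:ℕ):ℝ) * c ^ (2 - 1) * -s) + ((2:ℕ):ℝ) * s ^ (2 - 1) * c)) /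
              (b * c ^ 2 + s ^ 2) ^ 2)) = b / (s ^ 2 + b ^ 2 * c ^ 2) := by
      push_cast
      field_simp
      linear_combination ((1 - b) * (b * c ^ 2 - s ^ 2) + b) * hsc
    rw [A]
    push_cast
    clear A key hD'
    obtain ⟨D, hDD⟩ : ∃ D, D = s ^ 2 + b ^ 2 * c ^ 2 := ⟨_, rfl⟩
    rw [← hDD] at hD1 ⊢
    field_simp
    linear_combination (2 * s ^ 2 - D) * hsc + 2 * s ^ 2 * hDD
  have hint := intervalIntegral.integral_eq_sub_of_hasDerivAt (a := 0) (b := π/2)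
    (fun θ _ => hder θ) (hcont.intervalIntegrable _ _)
  rw [intervalIntegral.integral_of_le (by positivity), MeasureTheory.integral_Ioc_eq_integral_Ioo] at hint
  rw [← MeasureTheory.ofReal_integral_eq_lintegral_ofReal]
  · rw [hint]
    congr 1
    simp
    field_simp
    try norm_num
  · exact (hcont.integrableOn_Icc (a := 0) (b := π/2)).mono_set Set.Ioo_subset_Icc_self
  · exact Filter.Eventually.of_forall fun θ => by positivity

lemma aux_x : ∫⁻ x in Set.Ioo (0:ℝ) 1, ENNReal.ofReal (π / 4 * (1 / Real.sqrt (1 - x ^ 2)))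
    = ENNReal.ofReal (π ^ 2 / 8) := by
  have hder : ∀ x ∈ Set.Ioo (0:ℝ) 1, HasDerivAt (fun x => π / 4 * arcsin x) (π / 4 * (1 / Real.sqrt (1 - x ^ 2))) x := by
    intro x hx
    exact (hasDerivAt_arcsin (by linarith [hx.1]) (by linarith [hx.2])).const_mul _
  have hc : ContinuousOn (fun x => π / 4 * arcsin x) (Set.Icc 0 1) := by fun_prop
  have hI := intervalIntegral.integrableOn_deriv_of_nonneg hc hder (fun x _ => by positivity)
  have hint := intervalIntegral.integral_eq_sub_of_hasDerivAt_of_le zero_le_one hc hder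
    ((intervalIntegrable_iff_integrableOn_Ioc_of_le zero_le_one).2 hI)
  rw [intervalIntegral.integral_of_le zero_le_one, MeasureTheory.integral_Ioc_eq_integral_Ioo] at hint
  rw [← MeasureTheory.ofReal_integral_eq_lintegral_ofReal]
  · rw [hint]
    congr 1
    simp
    ring
  · exact hI.mono_set Set.Ioo_subset_Ioc_self
  · exact Filter.Eventually.of_forall fun θ => by positivity

/-- `∫₀^∞ t/(1+t²)² · E(it) dt = π²/8`, where `E(it) = ∫₀^{π/2} √(1 + t² sin²θ) dθ`
is the complete elliptic integral of the second kind with imaginary modulus. -/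
theorem integral_E_over_sq :
    ∫ t in Set.Ioi (0:ℝ),
        t / (1 + t ^ 2) ^ 2 *
          ∫ θ in (0:ℝ)..(π/2), Real.sqrt (1 + t ^ 2 * Real.sin θ ^ 2)
      = π ^ 2 / 8 := by
  have hpi : (0:ℝ) ≤ π / 2 := by positivity
  rw [MeasureTheory.integral_eq_lintegral_of_nonneg_ae]
  · have e1 : ∀ t ∈ Set.Ioi (0:ℝ), ENNReal.ofReal (t / (1 + t ^ 2) ^ 2 *
          ∫ θ in (0:ℝ)..(π/2), Real.sqrt (1 + t ^ 2 * Real.sin θ ^ 2))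
        = ∫⁻ θ in Set.Ioo (0:ℝ) (π/2), ENNReal.ofReal (t / (1 + t ^ 2) ^ 2 * Real.sqrt (1 + t ^ 2 * Real.sin θ ^ 2)) := by
      intro t ht
      simp only [Set.mem_Ioi] at ht
      rw [intervalIntegral.integral_of_le hpi, MeasureTheory.integral_Ioc_eq_integral_Ioo,
        ← MeasureTheory.integral_const_mul, MeasureTheory.ofReal_integral_eq_lintegral_ofReal]
      · have hcont : Continuous fun θ : ℝ => t / (1 + t ^ 2) ^ 2 * Real.sqrt (1 + t ^ 2 * Real.sin θ ^ 2) := by fun_prop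
        exact (hcont.integrableOn_Icc (a := 0) (b := π/2)).mono_set Set.Ioo_subset_Icc_self
      · exact Filter.Eventually.of_forall fun θ => by positivity
    rw [MeasureTheory.setLIntegral_congr_fun measurableSet_Ioi e1,
      MeasureTheory.lintegral_lintegral_swap,
      MeasureTheory.setLIntegral_congr_fun measurableSet_Ioo (fun θ hθ => aux_subst θ hθ.1 hθ.2),
      MeasureTheory.lintegral_lintegral_swap,
      MeasureTheory.setLIntegral_congr_fun measurableSet_Ioo (fun x hx => aux_theta x hx.1 hx.2),
      aux_x, ENNReal.toReal_ofReal (by positivity)]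
    · apply Measurable.aemeasurable
      unfold Function.uncurry
      fun_prop
    · apply Measurable.aemeasurable
      unfold Function.uncurry
      fun_prop
  · filter_upwards [MeasureTheory.ae_restrict_mem measurableSet_Ioi] with t ht
    simp only [Set.mem_Ioi] at ht
    have : 0 ≤ ∫ θ in (0:ℝ)..(π/2), Real.sqrt (1 + t ^ 2 * Real.sin θ ^ 2) :=
      intervalIntegral.integral_nonneg hpi (fun _ _ => Real.sqrt_nonneg _)
    simp only [Pi.zero_apply]
    positivity
  · apply Continuous.aestronglyMeasurable
    apply Continuous.mul
    · exact Continuous.div (by fun_prop) (by fun_prop) (fun t => by positivity)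
    · apply intervalIntegral.continuous_parametric_intervalIntegral_of_continuous'
      unfold Function.uncurry
      fun_prop
end

section
/- ∫₀^{∞} (t/(1+t²)³) · (∫₀^{π/2} √(1 + t² sin²θ) dθ) dt = 3π²/64. -/
open Real Filter Topology MeasureTheory

lemma tend_aux (n : ℕ) (hn : 1 ≤ n) (l : Filter ℝ) (hl : Tendsto (fun x : ℝ => |x|) l atTop) :
    Tendsto (fun x : ℝ => x / (1 + x^2)^n) l (𝓝 0) := by
  have h1 : Tendsto (fun x : ℝ => |x|⁻¹) l (𝓝 0) := tendsto_inv_atTop_zero.comp hl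
  refine squeeze_zero_norm' ?_ h1
  filter_upwards [hl.eventually_gt_atTop 0] with x hx
  rw [Real.norm_eq_abs, abs_div, abs_of_pos (by positivity : (0:ℝ) < (1+x^2)^n),
    div_le_iff₀ (by positivity)]
  have h2 : 1 + x^2 ≤ (1+x^2)^n := le_self_pow₀ (by nlinarith [sq_nonneg x]) (by omega)
  have h3 : |x| ≤ |x|⁻¹ * (1 + x^2) := by
    rw [← sq_abs]; field_simp; nlinarith
  exact h3.trans (by gcongr)

lemma int_bdd (n : ℕ) (hn : 1 ≤ n) : Integrable (fun x : ℝ => 1 / (1 + x^2)^n) := by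
  refine integrable_inv_one_add_sq.mono' (Measurable.aestronglyMeasurable (by fun_prop)) (ae_of_all _ fun x => ?_)
  have h2 : 1 + x^2 ≤ (1+x^2)^n := le_self_pow₀ (by nlinarith [sq_nonneg x]) (by omega)
  rw [Real.norm_eq_abs, abs_of_pos (by positivity), one_div]
  gcongr

lemma int2 : ∫ x : ℝ, 1 / (1 + x^2)^2 = π / 2 := by
  have tt := tend_aux 1 le_rfl
  have h := integral_of_hasDerivAt_of_tendsto
    (f := fun x : ℝ => 1/2 * (x / (1+x^2)^1) + 1/2 * arctan x)
    (f' := fun x : ℝ => 1 / (1 + x^2)^2) (m := 1/2 * 0 + 1/2 * (-(π/2))) (n := 1/2 * 0 + 1/2 * (π/2))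
    ?_ (int_bdd 2 (by norm_num)) ?_ ?_
  · rw [h]; ring
  · intro x
    have hx : (1 + x^2) ≠ 0 := by positivity
    have hd : HasDerivAt (fun x : ℝ => 1 + x^2) (2 * x) x := by
      simpa using (hasDerivAt_pow 2 x).const_add 1
    have := ((((hasDerivAt_id x).div (hd.pow 1) (pow_ne_zero 1 hx)).const_mul (1/2)).add
      ((hasDerivAt_arctan x).const_mul (1/2)))
    refine this.congr_deriv ?_
    simp
    field_simp
    ring
  · exact ((tt _ tendsto_abs_atBot_atTop).const_mul _).add
      ((tendsto_arctan_atBot.mono_right nhdsWithin_le_nhds).const_mul _)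
  · exact ((tt _ tendsto_abs_atTop_atTop).const_mul _).add
      ((tendsto_arctan_atTop.mono_right nhdsWithin_le_nhds).const_mul _)

lemma int3 : ∫ x : ℝ, 1 / (1 + x^2)^3 = 3 * π / 8 := by
  have tt := tend_aux 1 le_rfl
  have tt2 := tend_aux 2 (by norm_num)
  have h := integral_of_hasDerivAt_of_tendsto
    (f := fun x : ℝ => 1/4 * (x / (1+x^2)^2) + 3/8 * (x / (1+x^2)^1) + 3/8 * arctan x)
    (f' := fun x : ℝ => 1 / (1 + x^2)^3) (m := 1/4*0+3/8 * 0 + 3/8 * (-(π/2))) (n := 1/4*0+3/8 * 0 + 3/8 * (π/2))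
    ?_ (int_bdd 3 (by norm_num)) ?_ ?_
  · rw [h]; ring
  · intro x
    have hx : (1 + x^2) ≠ 0 := by positivity
    have hd : HasDerivAt (fun x : ℝ => 1 + x^2) (2 * x) x := by
      simpa using (hasDerivAt_pow 2 x).const_add 1
    have := ((((hasDerivAt_id x).div (hd.pow 2) (pow_ne_zero 2 hx)).const_mul (1/4)).add
      (((hasDerivAt_id x).div (hd.pow 1) (pow_ne_zero 1 hx)).const_mul (3/8))).add
      ((hasDerivAt_arctan x).const_mul (3/8))
    refine this.congr_deriv ?_
    simp
    field_simp
    ring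
  · exact (((tt2 _ tendsto_abs_atBot_atTop).const_mul _).add ((tt _ tendsto_abs_atBot_atTop).const_mul _)).add
      ((tendsto_arctan_atBot.mono_right nhdsWithin_le_nhds).const_mul _)
  · exact (((tt2 _ tendsto_abs_atTop_atTop).const_mul _).add ((tt _ tendsto_abs_atTop_atTop).const_mul _)).add
      ((tendsto_arctan_atTop.mono_right nhdsWithin_le_nhds).const_mul _)

lemma inner_int (q : ℝ) : ∫ p : ℝ, √(1 + q^2) / (1 + p^2 + q^2)^3 = 3 * π / 8 * (1 / (1+q^2)^2) := by
  have ha : 0 < √(1+q^2) := by positivity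
  have hs : √(1+q^2)^2 = 1 + q^2 := Real.sq_sqrt (by positivity)
  have h := Measure.integral_comp_div (fun x : ℝ => 1 / (1 + x^2)^3) (√(1+q^2))
  rw [int3, abs_of_pos ha, smul_eq_mul] at h
  have e : ∀ p : ℝ, √(1 + q^2) / (1 + p^2 + q^2)^3 = 
     √(1+q^2) / (1+q^2)^3 * (1 / (1 + (p/√(1+q^2))^2)^3) := by
    intro p
    rw [div_pow, hs]
    field_simp
    rw [show 1 + q^2+p^2 = 1+p^2+q^2 by ring]
  simp_rw [e]
  rw [integral_const_mul, h]
  field_simp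
  exact hs

lemma f_int : Integrable (fun z : ℝ × ℝ => √(1 + z.2^2) / (1 + z.1^2 + z.2^2)^3) := by
  have h := (int_bdd 1 le_rfl).mul_prod (int_bdd 1 le_rfl)
  refine Integrable.mono' (μ := volume) (g := fun z : ℝ × ℝ => 1 / (1+z.1^2)^1 * (1/(1+z.2^2)^1)) h (Measurable.aestronglyMeasurable (by fun_prop)) (ae_of_all _ fun z => ?_)
  obtain ⟨p, q⟩ := z
  simp only
  rw [Real.norm_eq_abs, abs_of_pos (by positivity), pow_one, pow_one]
  rw [div_mul_div_comm, div_le_div_iff₀ (by positivity) (by positivity)]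
  have h1 : √(1+q^2) ≤ 1 + p^2 + q^2 := by
    rw [Real.sqrt_le_left (by positivity)]; nlinarith [sq_nonneg p, sq_nonneg q, sq_nonneg (p^2+q^2)]
  calc √(1+q^2) * ((1+p^2)*(1+q^2)) ≤ (1+p^2+q^2) * ((1+p^2+q^2) * (1+p^2+q^2)) := by
        have h2 : 1 + p^2 ≤ 1 + p^2 + q^2 := by nlinarith [sq_nonneg q]
        have h3 : 1 + q^2 ≤ 1 + p^2 + q^2 := by nlinarith [sq_nonneg p]
        exact mul_le_mul h1 (mul_le_mul h2 h3 (by positivity) (by positivity)) (by positivity)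
          (by positivity)
    _ = _ := by ring

lemma f_total : ∫ z : ℝ × ℝ, √(1 + z.2^2) / (1 + z.1^2 + z.2^2)^3 = 3 * π^2/16 := by
  have := integral_prod_symm (μ := (volume : Measure ℝ)) (ν := (volume : Measure ℝ)) _ f_int
  rw [Measure.volume_eq_prod, this]
  simp only [inner_int]
  rw [integral_const_mul, int2]; ring

lemma ang (t : ℝ) : ∫ θ in Set.Ioo (-π) π, √(1 + t^2 * sin θ^2) = 4 * ∫ θ in (0:ℝ)..(π/2), √(1 + t^2 * sin θ^2) := by
  set g : ℝ → ℝ := fun θ => √(1 + t^2 * sin θ^2) with hg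
  have hc : Continuous g := by fun_prop
  have hi : ∀ a b, IntervalIntegrable g volume a b := fun a b => hc.intervalIntegrable a b
  rw [← integral_Ioc_eq_integral_Ioo, ← intervalIntegral.integral_of_le (by linarith [pi_pos])]
  have h1 : ∫ θ in (-π)..0, g θ = ∫ θ in (0:ℝ)..π, g θ := by
    have := intervalIntegral.integral_comp_neg (a := 0) (b := π) g
    rw [neg_zero] at this
    rw [← this]; simp [hg]
  have h2 : ∫ θ in (π/2)..π, g θ = ∫ θ in (0:ℝ)..(π/2), g θ := by
    have := intervalIntegral.integral_comp_sub_left (a := 0) (b := π/2) g π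
    rw [sub_zero, show π - π/2 = π/2 by ring] at this
    rw [← this]; simp [hg]
  rw [← intervalIntegral.integral_add_adjacent_intervals (hi (-π) 0) (hi 0 π), h1,
   ← intervalIntegral.integral_add_adjacent_intervals (hi 0 (π/2)) (hi (π/2) π), h2]
  ring

lemma pol_int : Integrable (fun z : ℝ × ℝ => z.1 / (1+z.1^2)^3 * √(1 + z.1^2 * sin z.2^2))
   ((volume.restrict (Set.Ioi (0:ℝ))).prod (volume.restrict (Set.Ioo (-π) π))) := by
  have h1 : Integrable (fun x : ℝ => 1 / (1+x^2)^1) (volume.restrict (Set.Ioi (0:ℝ))) := (int_bdd 1 le_rfl).restrict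
  have h2 : Integrable (fun x : ℝ => (1:ℝ)) (volume.restrict (Set.Ioo (-π) π)) := integrable_const _
  refine Integrable.mono' (h1.mul_prod h2) (Measurable.aestronglyMeasurable (by fun_prop)) (ae_of_all _ fun z => ?_)
  obtain ⟨t, θ⟩ := z
  simp only
  rw [norm_mul, norm_div, Real.norm_eq_abs, Real.norm_eq_abs, Real.norm_eq_abs, abs_of_pos (by positivity : 0 < (1+t^2)^3), abs_of_nonneg (by positivity : 0 ≤ √(1 + t^2 * sin θ^2)), pow_one, mul_one, div_mul_eq_mul_div,
    div_le_div_iff₀ (by positivity) (by positivity)]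
  have h3 : √(1 + t^2 * sin θ^2) ≤ 1 + t^2 := by
    rw [Real.sqrt_le_left (by positivity)]
    nlinarith [sq_nonneg t, sin_sq_le_one θ, mul_nonneg (sq_nonneg t) (sub_nonneg.2 (sin_sq_le_one θ)), sq_nonneg (t^2)]
  have h4 : |t| ≤ 1 + t^2 := by rw [← sq_abs]; nlinarith [sq_nonneg (|t| - 1)]
  calc |t| * √(1 + t^2 * sin θ^2) * (1+t^2) ≤ (1+t^2) * (1+t^2) * (1+t^2) := by gcongr
    _ = _ := by ring

theorem integral_E_over_cube :
    ∫ t in Set.Ioi (0:ℝ),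
        t / (1 + t ^ 2) ^ 3 *
          ∫ θ in (0:ℝ)..(π/2), Real.sqrt (1 + t ^ 2 * Real.sin θ ^ 2)
      = 3 * π ^ 2 / 64 := by
  have h := integral_comp_polarCoord_symm (fun z : ℝ × ℝ => √(1 + z.2^2) / (1 + z.1^2 + z.2^2)^3)
  rw [f_total] at h
  have e : ∀ z : ℝ × ℝ, z.1 • (√(1 + (polarCoord.symm z).2^2) / (1 + (polarCoord.symm z).1^2 + (polarCoord.symm z).2^2)^3) = z.1 / (1+z.1^2)^3 * √(1 + z.1^2 * sin z.2^2) := by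
    intro z
    simp only [polarCoord_symm_apply, smul_eq_mul]
    rw [show 1 + (z.1 * cos z.2)^2 + (z.1 * sin z.2)^2 = 1 + z.1^2 by
      linear_combination z.1^2 * sin_sq_add_cos_sq z.2, mul_pow]
    ring
  simp only [e] at h
  rw [polarCoord_target, Measure.volume_eq_prod, ← Measure.prod_restrict, integral_prod _ pol_int] at h
  simp only [integral_const_mul, ang] at h
  have e2 : ∀ a b : ℝ, a * (4 * b) = 4 * (a * b) := fun a b => by ring
  simp only [e2] at h
  rw [integral_const_mul] at h
  linarith
end

section
/- ∫₀^{∞} (t/(1+t²)²) · (∫₀^{π/2} (1 + t² sin²θ)^{-1/2} dθ) dt = π²/16. -/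
open Real
open MeasureTheory Set Filter Topology

lemma aux_theta_s8 (w : ℝ) (hw : 0 < w) :
    ∫ θ in (0:ℝ)..(π/2), Real.sin θ ^ 2 / (Real.sin θ ^ 2 + w ^ 2) ^ 2
      = π / (4 * w * (1 + w ^ 2) * √(1 + w ^ 2)) := by
  set r := √(1 + w ^ 2) with hr
  have hr0 : 0 < r := Real.sqrt_pos.mpr (by positivity)
  have hr2 : r ^ 2 = 1 + w ^ 2 := Real.sq_sqrt (by positivity)
  have hpi : (0:ℝ) < π / 2 := by positivity
  have hcont : Continuous fun θ : ℝ => Real.sin θ ^ 2 / (Real.sin θ ^ 2 + w ^ 2) ^ 2 := by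
    apply Continuous.div (by fun_prop) (by fun_prop)
    intro x; positivity
  have hB : Continuous fun θ : ℝ => 1 / (2 * (1 + w ^ 2)) *
      (Real.sin θ * Real.cos θ / (Real.sin θ ^ 2 + w ^ 2)) := by
    apply Continuous.mul continuous_const
    apply Continuous.div (by fun_prop) (by fun_prop)
    intro x; positivity
  have key := intervalIntegral.integral_eq_sub_of_hasDerivAt_of_tendsto
    (f := fun θ => 1 / (2 * (1 + w ^ 2) * r * w) * Real.arctan (r / w * Real.tan θ)
      - 1 / (2 * (1 + w ^ 2)) * (Real.sin θ * Real.cos θ / (Real.sin θ ^ 2 + w ^ 2)))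
    (f' := fun θ => Real.sin θ ^ 2 / (Real.sin θ ^ 2 + w ^ 2) ^ 2)
    (fa := 0) (fb := 1 / (2 * (1 + w ^ 2) * r * w) * (π / 2)) hpi ?_
    (hcont.intervalIntegrable _ _) ?_ ?_
  · rw [key]; field_simp; ring
  · intro x hx
    have hc : 0 < Real.cos x := Real.cos_pos_of_mem_Ioo ⟨by linarith [hx.1], hx.2⟩
    have h1 := (((Real.hasDerivAt_tan hc.ne').const_mul (r / w)).arctan).const_mul
      (1 / (2 * (1 + w ^ 2) * r * w))
    have hne : Real.sin x ^ 2 + w ^ 2 ≠ 0 := by positivity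
    have h2 := ((((Real.hasDerivAt_sin x).mul (Real.hasDerivAt_cos x)).div
      (((Real.hasDerivAt_sin x).pow 2).add_const (w ^ 2)) hne)).const_mul (1 / (2 * (1 + w ^ 2)))
    refine (h1.sub h2).congr_deriv ?_
    have hs := Real.sin_sq_add_cos_sq x
    have e1 : 1 + (r / w * Real.tan x) ^ 2
        = (Real.sin x ^ 2 + w ^ 2) / (w ^ 2 * Real.cos x ^ 2) := by
      rw [Real.tan_eq_sin_div_cos, mul_pow, div_pow, div_pow, hr2]
      field_simp
      linear_combination w ^ 2 * hs
    rw [e1]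
    have hc2 : Real.cos x ^ 2 = 1 - Real.sin x ^ 2 := by linarith
    simp only [Pi.mul_apply, Pi.pow_apply]
    field_simp
    push_cast
    ring_nf
    simp only [hc2]
    ring
  · have h : ContinuousAt (fun θ => 1 / (2 * (1 + w ^ 2) * r * w) * Real.arctan (r / w * Real.tan θ)
      - 1 / (2 * (1 + w ^ 2)) * (Real.sin θ * Real.cos θ / (Real.sin θ ^ 2 + w ^ 2))) 0 := by
      apply ContinuousAt.sub _ hB.continuousAt
      have : ContinuousAt Real.tan 0 := Real.continuousAt_tan.mpr (by simp)
      exact continuousAt_const.mul (Real.continuous_arctan.continuousAt.comp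
        (continuousAt_const.mul this))
    have := h.tendsto.mono_left (nhdsWithin_le_nhds (s := Ioi 0))
    simpa using this
  · have h1 : Tendsto (fun θ => Real.arctan (r / w * Real.tan θ)) (𝓝[<] (π/2)) (𝓝 (π/2)) := by
      have := Real.tendsto_arctan_atTop.mono_right nhdsWithin_le_nhds
      exact this.comp (Real.tendsto_tan_pi_div_two.const_mul_atTop (by positivity))
    have h2 := hB.continuousAt.tendsto (x := π/2) |>.mono_left (nhdsWithin_le_nhds (s := Iio (π/2)))
    have := (h1.const_mul (1 / (2 * (1 + w ^ 2) * r * w))).sub h2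
    simpa using this

lemma aux_w : IntegrableOn (fun w : ℝ => 1 / (1 + w ^ 2) ^ 2) (Ioi 0) ∧
    ∫ w in Ioi (0:ℝ), 1 / (1 + w ^ 2) ^ 2 = π / 4 := by
  have hd : ∀ x ∈ Ici (0:ℝ), HasDerivAt (fun w : ℝ => 1/2 * (Real.arctan w + w / (1 + w ^ 2)))
      (1 / (1 + x ^ 2) ^ 2) x := by
    intro x _
    have hne : 1 + x ^ 2 ≠ 0 := by positivity
    refine (((Real.hasDerivAt_arctan x).add ((hasDerivAt_id x).div
      (((hasDerivAt_id x).pow 2).const_add 1) hne)).const_mul (1/2)).congr_deriv ?_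
    simp
    field_simp
    ring
  have hlim : Tendsto (fun w : ℝ => 1/2 * (Real.arctan w + w / (1 + w ^ 2))) atTop
      (𝓝 (1/2 * (π/2 + 0))) := by
    apply Tendsto.const_mul
    apply (Real.tendsto_arctan_atTop.mono_right nhdsWithin_le_nhds).add
    refine squeeze_zero' (g := fun x : ℝ => x⁻¹) ?_ ?_ tendsto_inv_atTop_zero
    · filter_upwards [eventually_gt_atTop 0] with x hx
      positivity
    · filter_upwards [eventually_gt_atTop 0] with x hx
      rw [inv_eq_one_div, div_le_div_iff₀ (by positivity) hx]
      nlinarith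
  have hpos : ∀ x ∈ Ioi (0:ℝ), 0 ≤ 1 / (1 + x ^ 2) ^ 2 := fun x _ => by positivity
  refine ⟨integrableOn_Ioi_deriv_of_nonneg' hd hpos hlim, ?_⟩
  rw [integral_Ioi_of_hasDerivAt_of_nonneg' hd hpos hlim]
  simp
  ring

lemma aux_t : IntegrableOn (fun w : ℝ => w / (1 + w ^ 2) ^ 2) (Ioi 0) := by
  have hd : ∀ x ∈ Ici (0:ℝ), HasDerivAt (fun w : ℝ => -(1/2) * (1 + w ^ 2)⁻¹)
      (x / (1 + x ^ 2) ^ 2) x := by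
    intro x _
    have hne : 1 + x ^ 2 ≠ 0 := by positivity
    refine (((((hasDerivAt_id x).pow 2).const_add 1).inv hne).const_mul (-(1/2))).congr_deriv ?_
    simp
    field_simp
  have hlim : Tendsto (fun w : ℝ => -(1/2) * (1 + w ^ 2)⁻¹) atTop (𝓝 (-(1/2) * 0)) := by
    apply Tendsto.const_mul
    apply tendsto_inv_atTop_zero.comp
    exact tendsto_atTop_add_const_left _ _ (tendsto_pow_atTop (by norm_num))
  refine integrableOn_Ioi_deriv_of_nonneg' hd (fun x hx => ?_) hlim
  have : (0:ℝ) < x := hx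
  positivity

lemma aux_scale (s : ℝ) (hs : 0 < s) :
    ∫ t in Ioi (0:ℝ), t / (1 + t ^ 2) ^ 2 * (1 + t ^ 2 * s ^ 2) ^ (-(1/2) : ℝ)
      = ∫ w in Ioi (0:ℝ), w * (1 + w ^ 2) ^ (-(1/2) : ℝ) * (s ^ 2 / (s ^ 2 + w ^ 2) ^ 2) := by
  have h := integral_comp_mul_left_Ioi
    (fun w : ℝ => w * (1 + w ^ 2) ^ (-(1/2) : ℝ) * (s ^ 2 / (s ^ 2 + w ^ 2) ^ 2)) 0 hs
  rw [mul_zero, smul_eq_mul] at h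
  have h' : ∫ w in Ioi (0:ℝ), w * (1 + w ^ 2) ^ (-(1/2) : ℝ) * (s ^ 2 / (s ^ 2 + w ^ 2) ^ 2)
    = s * (s⁻¹ * ∫ w in Ioi (0:ℝ), w * (1 + w ^ 2) ^ (-(1/2) : ℝ) * (s ^ 2 / (s ^ 2 + w ^ 2) ^ 2)) := by
    rw [mul_inv_cancel_left₀ hs.ne']
  rw [h', ← h, ← integral_const_mul]
  congr 1
  ext t
  rw [mul_pow, mul_comm (t ^ 2) (s ^ 2)]
  have : s ^ 2 + s ^ 2 * t ^ 2 = s ^ 2 * (1 + t ^ 2) := by ring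
  rw [this]
  field_simp

lemma aux_g (w : ℝ) (hw : 0 < w) :
    ∫ θ in Ioc (0:ℝ) (π/2), w * (1 + w ^ 2) ^ (-(1/2) : ℝ) *
      (Real.sin θ ^ 2 / (Real.sin θ ^ 2 + w ^ 2) ^ 2) = π / 4 * (1 / (1 + w ^ 2) ^ 2) := by
  rw [integral_const_mul, ← intervalIntegral.integral_of_le (by positivity), aux_theta_s8 w hw,
    Real.rpow_neg (by positivity), ← Real.sqrt_eq_rpow]
  have hr0 : 0 < √(1 + w ^ 2) := Real.sqrt_pos.mpr (by positivity)
  have hr2 : √(1 + w ^ 2) ^ 2 = 1 + w ^ 2 := Real.sq_sqrt (by positivity)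
  field_simp
  rw [hr2]

theorem integral_K_over_sq :
    ∫ t in Set.Ioi (0:ℝ),
        t / (1 + t ^ 2) ^ 2 *
          ∫ θ in (0:ℝ)..(π/2), (1 + t ^ 2 * Real.sin θ ^ 2) ^ (-(1/2) : ℝ)
      = π ^ 2 / 16 := by
  have hpi : (0:ℝ) ≤ π / 2 := by positivity
  simp_rw [intervalIntegral.integral_of_le hpi, ← integral_const_mul]
  have hf : Integrable (Function.uncurry fun t θ : ℝ =>
      t / (1 + t ^ 2) ^ 2 * (1 + t ^ 2 * Real.sin θ ^ 2) ^ (-(1/2) : ℝ))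
      ((volume.restrict (Ioi 0)).prod (volume.restrict (Ioc 0 (π/2)))) := by
    have hb : Integrable (fun z : ℝ × ℝ => z.1 / (1 + z.1 ^ 2) ^ 2 * (1:ℝ))
      ((volume.restrict (Ioi 0)).prod (volume.restrict (Ioc 0 (π/2)))) :=
      Integrable.mul_prod (f := fun t : ℝ => t / (1 + t ^ 2) ^ 2) (g := fun _ : ℝ => (1:ℝ))
        aux_t (integrable_const _)
    refine hb.mono (Measurable.aestronglyMeasurable ?_) (Eventually.of_forall ?_)
    · unfold Function.uncurry
      fun_prop
    · rintro ⟨t, θ⟩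
      simp only [Function.uncurry, norm_mul]
      gcongr
      rw [Real.norm_of_nonneg (by positivity), norm_one]
      apply Real.rpow_le_one_of_one_le_of_nonpos _ (by norm_num)
      nlinarith [sq_nonneg (t * Real.sin θ)]
  rw [integral_integral_swap hf]
  have hg : Integrable (Function.uncurry fun w θ : ℝ => w * (1 + w ^ 2) ^ (-(1/2) : ℝ) *
      (Real.sin θ ^ 2 / (Real.sin θ ^ 2 + w ^ 2) ^ 2))
      ((volume.restrict (Ioi 0)).prod (volume.restrict (Ioc 0 (π/2)))) := by
    rw [integrable_prod_iff]
    · constructor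
      · filter_upwards [ae_restrict_mem measurableSet_Ioi] with w hw
        have hw : 0 < w := hw
        simp only [Function.uncurry]
        apply Continuous.integrableOn_Ioc
        apply Continuous.mul continuous_const
        apply Continuous.div (by fun_prop) (by fun_prop)
        intro x; positivity
      · refine (aux_w.1.const_mul (π/4)).congr ?_
        filter_upwards [ae_restrict_mem measurableSet_Ioi] with w hw
        have hw : 0 < w := hw
        rw [← aux_g w hw]
        congr 1
        ext θ
        simp only [Function.uncurry]
        rw [Real.norm_of_nonneg (by positivity)]
    · apply Measurable.aestronglyMeasurable
      unfold Function.uncurry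
      fun_prop
  have h1 : ∫ θ in Ioc (0:ℝ) (π/2), ∫ t in Ioi (0:ℝ),
        t / (1 + t ^ 2) ^ 2 * (1 + t ^ 2 * Real.sin θ ^ 2) ^ (-(1/2) : ℝ)
      = ∫ θ in Ioc (0:ℝ) (π/2), ∫ w in Ioi (0:ℝ), w * (1 + w ^ 2) ^ (-(1/2) : ℝ) *
      (Real.sin θ ^ 2 / (Real.sin θ ^ 2 + w ^ 2) ^ 2) := by
    apply setIntegral_congr_fun measurableSet_Ioc
    intro θ hθ
    exact aux_scale _ (Real.sin_pos_of_pos_of_lt_pi hθ.1 (by linarith [hθ.2, Real.pi_pos]))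
  rw [h1, ← integral_integral_swap hg]
  rw [setIntegral_congr_fun measurableSet_Ioi (fun w hw => aux_g w hw), integral_const_mul, aux_w.2]
  ring
end

section
/- Let E(t) := ∫₀^{π/2} √(1 + t² sin²θ) dθ and K(t) := ∫₀^{π/2} (1 + t² sin²θ)^{-1/2} dθ. Then ∫₀^{π/2} ∫₀^{π/2} ∫₀^{π/2} sin²φ · sin³ψ · √(sin²θ · sin²φ · sin²ψ + cos²ψ) dψ dφ dθ = (8/3) · ∫₀^{∞} [ (8t⁴+8t²−1)·E(t)² − 2(4t⁴+3t²−1)·E(t)·K(t) + (2t⁴+t²−1)·K(t)² ] · t/(2t²+1)⁵ dt. -/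
open Real

/-- The complete elliptic integral of the second kind with imaginary modulus:
`E(it) = ∫₀^{π/2} √(1 + t² sin²θ) dθ`. -/
noncomputable def Eimag (t : ℝ) : ℝ :=
  ∫ θ in (0:ℝ)..(π/2), Real.sqrt (1 + t ^ 2 * Real.sin θ ^ 2)

/-- The complete elliptic integral of the first kind with imaginary modulus:
`K(it) = ∫₀^{π/2} (1 + t² sin²θ)^{-1/2} dθ`. -/
noncomputable def Kimag (t : ℝ) : ℝ :=
  ∫ θ in (0:ℝ)..(π/2), (1 + t ^ 2 * Real.sin θ ^ 2) ^ (-(1/2) : ℝ)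

open MeasureTheory Set Filter Topology

lemma param_deriv {F F' : ℝ → ℝ → ℝ} (hF : Continuous (Function.uncurry F))
    (hF' : Continuous (Function.uncurry F'))
    (h : ∀ x θ, HasDerivAt (fun y => F y θ) (F' x θ) x) (a b x : ℝ) :
    HasDerivAt (fun y => ∫ θ in a..b, F y θ) (∫ θ in a..b, F' x θ) x := by
  obtain ⟨C, hC⟩ := ((isCompact_closedBall x 1).prod (isCompact_uIcc (a := a) (b := b))).exists_bound_of_continuousOn
    hF'.continuousOn
  have c1 : ∀ y, Continuous (F y) := fun y => hF.comp (by fun_prop : Continuous fun θ : ℝ => (y, θ))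
  have c2 : ∀ y, Continuous (F' y) := fun y => hF'.comp (by fun_prop : Continuous fun θ : ℝ => (y, θ))
  refine (intervalIntegral.hasDerivAt_integral_of_dominated_loc_of_deriv_le
    (Metric.closedBall_mem_nhds x one_pos) (bound := fun _ => C)
    (Eventually.of_forall fun y => (c1 y).aestronglyMeasurable)
    ((c1 x).intervalIntegrable _ _) (c2 x).aestronglyMeasurable ?_ (by simp) ?_).2
  · refine Eventually.of_forall fun t ht y hy => ?_
    exact hC (y, t) ⟨hy, uIoc_subset_uIcc ht⟩
  · exact Eventually.of_forall fun t ht y hy => h y t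

lemma param_cont {F : ℝ → ℝ → ℝ} (hF : Continuous (Function.uncurry F)) (a b : ℝ) :
    Continuous (fun y => ∫ θ in a..b, F y θ) :=
  intervalIntegral.continuous_parametric_intervalIntegral_of_continuous' hF a b

lemma swap_cont {F : ℝ → ℝ → ℝ} (hF : Continuous (Function.uncurry F)) (a b c d : ℝ) :
    ∫ x in a..b, ∫ y in c..d, F x y = ∫ y in c..d, ∫ x in a..b, F x y := by
  have key : ∀ c d : ℝ, c ≤ d →
      ∫ x in a..b, ∫ y in c..d, F x y = ∫ y in c..d, ∫ x in a..b, F x y := by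
    intro c d hcd
    simp only [intervalIntegral.integral_of_le hcd]
    apply intervalIntegral_integral_swap
    rw [Measure.prod_restrict]
    refine IntegrableOn.mono_set (t := uIcc a b ×ˢ Icc c d) ?_
      (prod_mono uIoc_subset_uIcc Ioc_subset_Icc_self)
    exact hF.continuousOn.integrableOn_compact (isCompact_uIcc.prod isCompact_Icc)
  rcases le_total c d with h | h
  · exact key c d h
  · rw [intervalIntegral.integral_symm d c, ← key d c h, ← intervalIntegral.integral_neg]
    congr 1; ext x; rw [intervalIntegral.integral_symm d c]

lemma DD_pos (T θ : ℝ) : 0 < 1 + T ^ 2 * sin θ ^ 2 := by positivity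

lemma DD_sqrt_pos (T θ : ℝ) : 0 < √(1 + T ^ 2 * sin θ ^ 2) := Real.sqrt_pos.2 (DD_pos T θ)

lemma DD_sqrt_ne (T θ : ℝ) : √(1 + T ^ 2 * sin θ ^ 2) ≠ 0 := (DD_sqrt_pos T θ).ne'

lemma DD_sq (T θ : ℝ) : √(1 + T ^ 2 * sin θ ^ 2) ^ 2 = 1 + T ^ 2 * sin θ ^ 2 :=
  Real.sq_sqrt (DD_pos T θ).le

lemma Kimag_eq (T : ℝ) : Kimag T = ∫ θ in (0:ℝ)..(π/2), (√(1 + T ^ 2 * sin θ ^ 2))⁻¹ := by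
  unfold Kimag
  congr 1; ext θ
  rw [Real.rpow_neg (DD_pos T θ).le, Real.sqrt_eq_rpow]

noncomputable def EP (T : ℝ) : ℝ :=
  ∫ θ in (0:ℝ)..(π/2), T * sin θ ^ 2 / √(1 + T ^ 2 * sin θ ^ 2)

noncomputable def KP (T : ℝ) : ℝ :=
  ∫ θ in (0:ℝ)..(π/2), - (T * sin θ ^ 2 / √(1 + T ^ 2 * sin θ ^ 2) ^ 3)

lemma D_deriv_T (T θ : ℝ) : HasDerivAt (fun y => √(1 + y ^ 2 * sin θ ^ 2))
    (T * sin θ ^ 2 / √(1 + T ^ 2 * sin θ ^ 2)) T := by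
  have h : HasDerivAt (fun y : ℝ => 1 + y ^ 2 * sin θ ^ 2) (2 * T * sin θ ^ 2) T := by
    have := (((hasDerivAt_id T).pow 2).mul_const (sin θ ^ 2)).const_add 1
    refine this.congr_deriv ?_
    simp
  convert h.sqrt (DD_pos T θ).ne' using 1
  have := DD_sqrt_ne T θ
  field_simp

lemma D_deriv_th (T θ : ℝ) : HasDerivAt (fun y => √(1 + T ^ 2 * sin y ^ 2))
    (T ^ 2 * sin θ * cos θ / √(1 + T ^ 2 * sin θ ^ 2)) θ := by
  have h : HasDerivAt (fun y : ℝ => 1 + T ^ 2 * sin y ^ 2) (T ^ 2 * (2 * sin θ * cos θ)) θ := by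
    have := (((Real.hasDerivAt_sin θ).pow 2).const_mul (T ^ 2)).const_add 1
    refine this.congr_deriv ?_
    simp
  convert h.sqrt (DD_pos T θ).ne' using 1
  have := DD_sqrt_ne T θ
  field_simp

lemma cont_D : Continuous (Function.uncurry fun T θ : ℝ => √(1 + T ^ 2 * sin θ ^ 2)) := by
  simp only [Function.uncurry_def]; fun_prop

lemma cont_Dinv : Continuous (Function.uncurry fun T θ : ℝ => (√(1 + T ^ 2 * sin θ ^ 2))⁻¹) :=
  cont_D.inv₀ (fun p => DD_sqrt_ne p.1 p.2)

lemma cont_EPi : Continuous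
    (Function.uncurry fun T θ : ℝ => T * sin θ ^ 2 / √(1 + T ^ 2 * sin θ ^ 2)) := by
  refine Continuous.div (by fun_prop) cont_D (fun p => DD_sqrt_ne p.1 p.2)

lemma cont_KPi : Continuous
    (Function.uncurry fun T θ : ℝ => -(T * sin θ ^ 2 / √(1 + T ^ 2 * sin θ ^ 2) ^ 3)) := by
  refine (Continuous.div (by fun_prop) (cont_D.pow 3)
    (fun p => pow_ne_zero _ (DD_sqrt_ne p.1 p.2))).neg

lemma E_deriv (T : ℝ) : HasDerivAt Eimag (EP T) T :=
  param_deriv cont_D cont_EPi (fun x θ => D_deriv_T x θ) _ _ _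

lemma K_deriv (T : ℝ) : HasDerivAt Kimag (KP T) T := by
  have : Kimag = fun T => ∫ θ in (0:ℝ)..(π/2), (√(1 + T ^ 2 * sin θ ^ 2))⁻¹ := by
    ext T; exact Kimag_eq T
  rw [this]
  refine param_deriv cont_Dinv cont_KPi (fun x θ => ?_) _ _ _
  refine ((D_deriv_T x θ).inv (DD_sqrt_ne x θ)).congr_deriv ?_
  have := DD_sqrt_ne x θ
  field_simp

lemma E_cont : Continuous Eimag :=
  continuous_iff_continuousAt.2 fun T => (E_deriv T).continuousAt

lemma K_cont : Continuous Kimag :=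
  continuous_iff_continuousAt.2 fun T => (K_deriv T).continuousAt

lemma EP_cont : Continuous EP := param_cont cont_EPi _ _

lemma KP_cont : Continuous KP := param_cont cont_KPi _ _

lemma c1 {F : ℝ → ℝ → ℝ} (hF : Continuous (Function.uncurry F)) (T : ℝ) (a b : ℝ) :
    IntervalIntegrable (F T) volume a b :=
  (hF.comp (by fun_prop : Continuous fun θ : ℝ => (T, θ))).intervalIntegrable _ _

lemma T_EP (T : ℝ) : T * EP T = Eimag T - Kimag T := by
  rw [Kimag_eq, EP, Eimag, ← intervalIntegral.integral_sub (c1 cont_D T _ _) (c1 cont_Dinv T _ _),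
    ← intervalIntegral.integral_const_mul]
  congr 1; ext θ
  have h := DD_sqrt_ne T θ
  have h2 := DD_sq T θ
  field_simp
  rw [h2]; ring

lemma rho (T : ℝ) : (1 + T ^ 2) * ∫ θ in (0:ℝ)..(π/2), (√(1 + T ^ 2 * sin θ ^ 2))⁻¹ ^ 3
    = Eimag T := by
  have hc : Continuous fun θ : ℝ => √(1 + T ^ 2 * sin θ ^ 2) := by fun_prop
  have hci : Continuous fun θ : ℝ => (√(1 + T ^ 2 * sin θ ^ 2))⁻¹ := hc.inv₀ (DD_sqrt_ne T)
  have hci3 : Continuous fun θ : ℝ => (√(1 + T ^ 2 * sin θ ^ 2))⁻¹ ^ 3 := hci.pow 3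
  have hci4 : Continuous fun θ : ℝ => (1 + T ^ 2) * (√(1 + T ^ 2 * sin θ ^ 2))⁻¹ ^ 3 :=
    continuous_const.mul hci3
  have hd : ∀ θ : ℝ, HasDerivAt (fun y => T ^ 2 * (sin y * cos y / √(1 + T ^ 2 * sin y ^ 2)))
      ((1 + T ^ 2) * (√(1 + T ^ 2 * sin θ ^ 2))⁻¹ ^ 3 - √(1 + T ^ 2 * sin θ ^ 2)) θ := by
    intro θ
    refine ((((Real.hasDerivAt_sin θ).mul (Real.hasDerivAt_cos θ)).div (D_deriv_th T θ)
      (DD_sqrt_ne T θ)).const_mul (T ^ 2)).congr_deriv ?_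
    simp only [Pi.mul_apply]
    have h := DD_sqrt_ne T θ
    have h2 := DD_sq T θ
    have h3 := Real.sin_sq_add_cos_sq θ
    set D := √(1 + T ^ 2 * sin θ ^ 2)
    set s := sin θ
    set c := cos θ
    have hc2 : c ^ 2 = 1 - s ^ 2 := by linarith
    field_simp
    have h4 : D ^ 4 = (1 + T ^ 2 * s ^ 2) ^ 2 := by rw [← h2]; ring
    ring_nf
    simp only [h2, h4, hc2]
    ring
  have := intervalIntegral.integral_eq_sub_of_hasDerivAt (a := 0) (b := π/2) (fun θ _ => hd θ)
    ((hci4.sub hc).intervalIntegrable _ _)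
  rw [intervalIntegral.integral_sub (hci4.intervalIntegrable _ _)
    (hc.intervalIntegrable _ _), intervalIntegral.integral_const_mul] at this
  simp at this
  simp only [inv_pow]
  rw [Eimag]; linarith

lemma T_KP (T : ℝ) : T * KP T = Eimag T / (1 + T ^ 2) - Kimag T := by
  have hci : Continuous fun θ : ℝ => (√(1 + T ^ 2 * sin θ ^ 2))⁻¹ :=
    Continuous.inv₀ (by fun_prop) (DD_sqrt_ne T)
  have hci3 : Continuous fun θ : ℝ => (√(1 + T ^ 2 * sin θ ^ 2))⁻¹ ^ 3 := hci.pow 3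
  rw [← rho, mul_div_cancel_left₀ _ (by positivity), Kimag_eq, KP,
    ← intervalIntegral.integral_sub (hci3.intervalIntegrable _ _)
      (hci.intervalIntegrable _ _), ← intervalIntegral.integral_const_mul]
  congr 1; ext θ
  have h := DD_sqrt_ne T θ
  have h2 := DD_sq T θ
  field_simp
  rw [h2]; ring

noncomputable def GG (τ : ℝ) : ℝ := ∫ φ in (0:ℝ)..(π/2), Kimag (τ * sin φ)
noncomputable def JJ (τ : ℝ) : ℝ := ∫ φ in (0:ℝ)..(π/2), Eimag (τ * sin φ)
noncomputable def HH (τ : ℝ) : ℝ := ∫ φ in (0:ℝ)..(π/2), sin φ ^ 2 * Eimag (τ * sin φ)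
noncomputable def MM (τ : ℝ) : ℝ := ∫ φ in (0:ℝ)..(π/2), sin φ ^ 2 * Kimag (τ * sin φ)
noncomputable def RR (τ : ℝ) : ℝ := ∫ φ in (0:ℝ)..(π/2), Eimag (τ * sin φ) / (1 + (τ * sin φ) ^ 2)
noncomputable def GP (τ : ℝ) : ℝ := ∫ φ in (0:ℝ)..(π/2), KP (τ * sin φ) * sin φ
noncomputable def JP (τ : ℝ) : ℝ := ∫ φ in (0:ℝ)..(π/2), EP (τ * sin φ) * sin φ
noncomputable def HP (τ : ℝ) : ℝ := ∫ φ in (0:ℝ)..(π/2), sin φ ^ 2 * (EP (τ * sin φ) * sin φ)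

lemma hasDerivAt_mul_sin (τ φ : ℝ) : HasDerivAt (fun y : ℝ => y * sin φ) (sin φ) τ := by
  simpa using (hasDerivAt_id τ).mul_const (sin φ)

lemma hasDerivAt_mul_sin' (τ φ : ℝ) : HasDerivAt (fun y : ℝ => τ * sin y) (τ * cos φ) φ :=
  (Real.hasDerivAt_sin φ).const_mul τ

lemma cont_uK : Continuous (Function.uncurry fun τ φ : ℝ => Kimag (τ * sin φ)) := by
  have := K_cont
  simp only [Function.uncurry_def]; fun_prop
lemma cont_uE : Continuous (Function.uncurry fun τ φ : ℝ => Eimag (τ * sin φ)) := by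
  have := E_cont
  simp only [Function.uncurry_def]; fun_prop
lemma cont_uKP : Continuous (Function.uncurry fun τ φ : ℝ => KP (τ * sin φ) * sin φ) := by
  have := KP_cont
  simp only [Function.uncurry_def]; fun_prop
lemma cont_uEP : Continuous (Function.uncurry fun τ φ : ℝ => EP (τ * sin φ) * sin φ) := by
  have := EP_cont
  simp only [Function.uncurry_def]; fun_prop
lemma cont_usE : Continuous (Function.uncurry fun τ φ : ℝ => sin φ ^ 2 * Eimag (τ * sin φ)) := by
  have := E_cont
  simp only [Function.uncurry_def]; fun_prop
lemma cont_usEP : Continuous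
    (Function.uncurry fun τ φ : ℝ => sin φ ^ 2 * (EP (τ * sin φ) * sin φ)) := by
  have := EP_cont
  simp only [Function.uncurry_def]; fun_prop

lemma G_deriv (τ : ℝ) : HasDerivAt GG (GP τ) τ :=
  param_deriv cont_uK cont_uKP
    (fun x φ => HasDerivAt.comp (h₂ := Kimag) x (K_deriv (x * sin φ)) (hasDerivAt_mul_sin x φ)) _ _ _
lemma J_deriv (τ : ℝ) : HasDerivAt JJ (JP τ) τ :=
  param_deriv cont_uE cont_uEP
    (fun x φ => HasDerivAt.comp (h₂ := Eimag) x (E_deriv (x * sin φ)) (hasDerivAt_mul_sin x φ)) _ _ _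
lemma H_deriv (τ : ℝ) : HasDerivAt HH (HP τ) τ :=
  param_deriv cont_usE cont_usEP
    (fun x φ => ((E_deriv (x * sin φ)).comp x (hasDerivAt_mul_sin x φ)).const_mul _) _ _ _
lemma JP_cont : Continuous JP := param_cont cont_uEP _ _

section
variable (τ : ℝ)

lemma cE : Continuous fun φ : ℝ => Eimag (τ * sin φ) := by
  have := E_cont
  fun_prop
lemma cK : Continuous fun φ : ℝ => Kimag (τ * sin φ) := by
  have := K_cont
  fun_prop
lemma csE : Continuous fun φ : ℝ => sin φ ^ 2 * Eimag (τ * sin φ) := by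
  have := E_cont
  fun_prop
lemma csK : Continuous fun φ : ℝ => sin φ ^ 2 * Kimag (τ * sin φ) := by
  have := K_cont
  fun_prop
lemma cR : Continuous fun φ : ℝ => Eimag (τ * sin φ) / (1 + (τ * sin φ) ^ 2) :=
  (cE τ).div (by fun_prop) (fun φ => by positivity)

lemma t_JP : τ * JP τ = JJ τ - GG τ := by
  rw [JP, JJ, GG, ← intervalIntegral.integral_sub ((cE τ).intervalIntegrable _ _)
    ((cK τ).intervalIntegrable _ _), ← intervalIntegral.integral_const_mul]
  congr 1; ext φ
  rw [← T_EP]; ring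

lemma t_HP : τ * HP τ = HH τ - MM τ := by
  rw [HP, HH, MM, ← intervalIntegral.integral_sub ((csE τ).intervalIntegrable _ _)
    ((csK τ).intervalIntegrable _ _), ← intervalIntegral.integral_const_mul]
  congr 1; ext φ
  rw [← mul_sub, ← T_EP]; ring

lemma t_GP : τ * GP τ = RR τ - GG τ := by
  rw [GP, RR, GG, ← intervalIntegral.integral_sub ((cR τ).intervalIntegrable _ _)
    ((cK τ).intervalIntegrable _ _), ← intervalIntegral.integral_const_mul]
  congr 1; ext φ
  rw [← T_KP]; ring

lemma ftc1 : MM τ = GG τ - 2 * JJ τ + 3 * HH τ := by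
  have hd : ∀ φ : ℝ, HasDerivAt (fun y => Eimag (τ * sin y) * (sin y * cos y))
      ((2 * Eimag (τ * sin φ) - Kimag (τ * sin φ)) +
        (sin φ ^ 2 * Kimag (τ * sin φ) - 3 * (sin φ ^ 2 * Eimag (τ * sin φ)))) φ := by
    intro φ
    refine (((E_deriv (τ * sin φ)).comp φ (hasDerivAt_mul_sin' τ φ)).mul
      ((Real.hasDerivAt_sin φ).mul (Real.hasDerivAt_cos φ))).congr_deriv ?_
    simp only [Function.comp, Pi.mul_apply]
    have h1 := T_EP (τ * sin φ)
    have h2 : cos φ ^ 2 = 1 - sin φ ^ 2 := by rw [Real.cos_sq']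
    linear_combination (cos φ ^ 2) * h1 +
      (2 * Eimag (τ * sin φ) - Kimag (τ * sin φ) ) * h2
  have i1 := (cE τ).intervalIntegrable (μ := volume) 0 (π/2)
  have i2 := (cK τ).intervalIntegrable (μ := volume) 0 (π/2)
  have i3 := (csE τ).intervalIntegrable (μ := volume) 0 (π/2)
  have i4 := (csK τ).intervalIntegrable (μ := volume) 0 (π/2)
  have := intervalIntegral.integral_eq_sub_of_hasDerivAt (a := 0) (b := π/2) (fun φ _ => hd φ)
    (((i1.const_mul 2).sub i2).add (i4.sub (i3.const_mul 3)))
  rw [intervalIntegral.integral_add ((i1.const_mul 2).sub i2) (i4.sub (i3.const_mul 3)),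
    intervalIntegral.integral_sub (i1.const_mul 2) i2,
    intervalIntegral.integral_sub i4 (i3.const_mul 3),
    intervalIntegral.integral_const_mul, intervalIntegral.integral_const_mul] at this
  simp only [Real.sin_zero, Real.cos_pi_div_two, mul_zero, zero_mul, sub_zero] at this
  unfold MM GG JJ HH
  linarith

lemma ftc2 : (1 + τ ^ 2) * RR τ = JJ τ + τ ^ 2 * MM τ := by
  have hd : ∀ φ : ℝ, HasDerivAt (fun y => τ ^ 2 * (Kimag (τ * sin y) * (sin y * cos y)))
      ((1 + τ ^ 2) * (Eimag (τ * sin φ) / (1 + (τ * sin φ) ^ 2)) -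
        (Eimag (τ * sin φ) + τ ^ 2 * (sin φ ^ 2 * Kimag (τ * sin φ)))) φ := by
    intro φ
    refine ((((K_deriv (τ * sin φ)).comp φ (hasDerivAt_mul_sin' τ φ)).mul
      ((Real.hasDerivAt_sin φ).mul (Real.hasDerivAt_cos φ))).const_mul (τ ^ 2)).congr_deriv ?_
    simp only [Function.comp, Pi.mul_apply]
    have h1 := T_KP (τ * sin φ)
    have h2 : cos φ ^ 2 = 1 - sin φ ^ 2 := by rw [Real.cos_sq']
    have h0 : (1 + (τ * sin φ) ^ 2) ≠ 0 := by positivity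
    have h3 : Eimag (τ * sin φ) / (1 + (τ * sin φ) ^ 2) * (1 + (τ * sin φ) ^ 2)
      = Eimag (τ * sin φ) := div_mul_cancel₀ _ h0
    generalize Eimag (τ * sin φ) / (1 + (τ * sin φ) ^ 2) = e at h1 h3 ⊢
    linear_combination (τ ^ 2 * cos φ ^ 2) * h1 + (-1) * h3 + τ ^ 2 * e * h2
  have i1 := (cE τ).intervalIntegrable (μ := volume) 0 (π/2)
  have i3 := (cR τ).intervalIntegrable (μ := volume) 0 (π/2)
  have i4 := (csK τ).intervalIntegrable (μ := volume) 0 (π/2)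
  have := intervalIntegral.integral_eq_sub_of_hasDerivAt (a := 0) (b := π/2) (fun φ _ => hd φ)
    ((i3.const_mul _).sub (i1.add (i4.const_mul _)))
  rw [intervalIntegral.integral_sub (i3.const_mul _) (i1.add (i4.const_mul _)),
    intervalIntegral.integral_add i1 (i4.const_mul _),
    intervalIntegral.integral_const_mul, intervalIntegral.integral_const_mul] at this
  simp only [Real.sin_zero, Real.cos_pi_div_two, mul_zero, zero_mul, sub_zero] at this
  unfold MM JJ RR
  linarith

end

lemma uniq_bound {t : ℝ} (ht : 0 < t) (x d m : ℝ) :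
    2 * x * ((1 + 2 * t ^ 2) / (1 + t ^ 2) * d / t)
    + 2 * (d / t) * (((4 * t / (1 + 2 * t ^ 2) * (d + x / 2 - 3 * m)) * t - d * 1) / t ^ 2)
    + 2 * m * ((1 + 2 * t ^ 2) / (1 + t ^ 2) * (d / 2 - 2 * m) / t)
    ≤ 40 * (x ^ 2 + (d / t) ^ 2 + m ^ 2) := by
  obtain ⟨δ, e⟩ : ∃ δ, d = t * δ := ⟨d / t, by field_simp⟩
  have e' : d / t = δ := by rw [e]; field_simp
  obtain ⟨a, ha⟩ : ∃ a, a = (1 + 2 * t ^ 2) / (1 + t ^ 2) := ⟨_, rfl⟩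
  obtain ⟨b, hbb⟩ : ∃ b, b = 4 / (1 + 2 * t ^ 2) := ⟨_, rfl⟩
  have ha0 : 0 < a := by rw [ha]; positivity
  have ha2 : a ≤ 2 := by rw [ha, div_le_iff₀ (by positivity)]; nlinarith
  have hb0 : 0 < b := by rw [hbb]; positivity
  have hb4 : b ≤ 4 := by rw [hbb, div_le_iff₀ (by positivity)]; nlinarith
  have hbt : b * t ≤ 4 := by
    rw [hbb, div_mul_eq_mul_div, div_le_iff₀ (by positivity)]; nlinarith [sq_nonneg (t - 1)]
  have hb' : 4 * t / (1 + 2 * t ^ 2) = b * t := by rw [hbb]; ring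
  rw [e', ← ha, hb', e]
  have e1 : 2 * x * (a * (t * δ) / t) + 2 * δ * ((b * t * (t * δ + x / 2 - 3 * m) * t - t * δ * 1) / t ^ 2)
      + 2 * m * (a * (t * δ / 2 - 2 * m) / t) =
      2 * (a * (x * δ)) + 2 * (b * t * δ ^ 2) + b * (δ * x) - 6 * (b * (δ * m))
       + a * (m * δ) - 2 * (δ ^ 2 / t) - 4 * (a * m ^ 2 / t) := by
    field_simp
    ring
  rw [e1]
  have e2 : 0 ≤ δ ^ 2 / t := by positivity
  have e3 : 0 ≤ a * m ^ 2 / t := by positivity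
  have q1 : 2 * |x * δ| ≤ x ^ 2 + δ ^ 2 := by
    rw [abs_mul]; nlinarith [sq_nonneg (|x| - |δ|), sq_abs x, sq_abs δ]
  have q2 : 2 * |m * δ| ≤ m ^ 2 + δ ^ 2 := by
    rw [abs_mul]; nlinarith [sq_nonneg (|m| - |δ|), sq_abs m, sq_abs δ]
  have p1 : a * (x * δ) ≤ 2 * |x * δ| :=
    (mul_le_mul_of_nonneg_left (le_abs_self _) ha0.le).trans
      (mul_le_mul_of_nonneg_right ha2 (abs_nonneg _))
  have p2 : b * (δ * x) ≤ 4 * |x * δ| := by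
    rw [mul_comm δ]
    exact (mul_le_mul_of_nonneg_left (le_abs_self _) hb0.le).trans
      (mul_le_mul_of_nonneg_right hb4 (abs_nonneg _))
  have p3 : -(b * (δ * m)) ≤ 4 * |m * δ| := by
    rw [mul_comm δ, ← mul_neg]
    exact (mul_le_mul_of_nonneg_left (neg_le_abs _) hb0.le).trans
      (mul_le_mul_of_nonneg_right hb4 (abs_nonneg _))
  have p4 : a * (m * δ) ≤ 2 * |m * δ| :=
    (mul_le_mul_of_nonneg_left (le_abs_self _) ha0.le).trans
      (mul_le_mul_of_nonneg_right ha2 (abs_nonneg _))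
  have p5 : (b * t) * δ ^ 2 ≤ 4 * δ ^ 2 := mul_le_mul_of_nonneg_right hbt (sq_nonneg _)
  linarith [sq_nonneg x, sq_nonneg m, sq_nonneg δ]

/-- uniqueness for the singular linear system -/
lemma uniq {x d m : ℝ → ℝ}
    (hx : ∀ t, 0 < t → HasDerivAt x ((1 + 2 * t ^ 2) / (1 + t ^ 2) * d t / t) t)
    (hd : ∀ t, 0 < t → HasDerivAt d (4 * t / (1 + 2 * t ^ 2) * (d t + x t / 2 - 3 * m t)) t)
    (hm : ∀ t, 0 < t → HasDerivAt m
      ((1 + 2 * t ^ 2) / (1 + t ^ 2) * (d t / 2 - 2 * m t) / t) t)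
    (lx : Tendsto x (𝓝[>] 0) (𝓝 0)) (ld : Tendsto (fun t => d t / t) (𝓝[>] 0) (𝓝 0))
    (lm : Tendsto m (𝓝[>] 0) (𝓝 0)) (t : ℝ) (ht : 0 < t) : x t = 0 ∧ m t = 0 := by
  set N : ℝ → ℝ := fun t => x t ^ 2 + (d t / t) ^ 2 + m t ^ 2 with hN
  set N' : ℝ → ℝ := fun t => 2 * x t * ((1 + 2 * t ^ 2) / (1 + t ^ 2) * d t / t)
    + 2 * (d t / t) * (((4 * t / (1 + 2 * t ^ 2) * (d t + x t / 2 - 3 * m t)) * t - d t * 1) / t ^ 2)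
    + 2 * m t * ((1 + 2 * t ^ 2) / (1 + t ^ 2) * (d t / 2 - 2 * m t) / t) with hN'
  have hNd : ∀ t, 0 < t → HasDerivAt N (N' t) t := by
    intro t ht
    refine ((((hx t ht).pow 2).add (((hd t ht).div (hasDerivAt_id t) ht.ne').pow 2)).add
      ((hm t ht).pow 2)).congr_deriv ?_
    simp [hN']
  have hb : ∀ t, 0 < t → N' t ≤ 40 * N t := by
    intro t ht
    exact uniq_bound ht (x t) (d t) (m t)
  have hP : ∀ t, 0 < t → HasDerivAt (fun t => N t * exp (-(40 * t)))
      (N' t * exp (-(40 * t)) + N t * (exp (-(40 * t)) * (-40))) t := by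
    intro t ht
    refine (hNd t ht).mul (HasDerivAt.exp ?_)
    exact (((hasDerivAt_id t).const_mul 40).neg).congr_deriv (by simp)
  have hanti : AntitoneOn (fun t => N t * exp (-(40 * t))) (Ioi 0) := by
    apply antitoneOn_of_deriv_nonpos (convex_Ioi 0)
    · exact fun t ht => (hP t ht).continuousAt.continuousWithinAt
    · intro t ht
      rw [interior_Ioi] at ht
      exact (hP t ht).differentiableAt.differentiableWithinAt
    · intro t ht
      rw [interior_Ioi] at ht
      rw [(hP t ht).deriv]
      nlinarith [hb t ht, exp_pos (-(40 * t))]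
  have hlim : Tendsto (fun t => N t * exp (-(40 * t))) (𝓝[>] 0) (𝓝 0) := by
    have h1 : Tendsto N (𝓝[>] 0) (𝓝 0) := by
      simpa using ((lx.pow 2).add (ld.pow 2)).add (lm.pow 2)
    have h2 : Tendsto (fun t : ℝ => exp (-(40 * t))) (𝓝[>] 0) (𝓝 (exp (-(40 * 0)))) :=
      (Continuous.tendsto (by fun_prop) 0).mono_left nhdsWithin_le_nhds
    simpa using h1.mul h2
  have hle : N t * exp (-(40 * t)) ≤ 0 := by
    refine ge_of_tendsto hlim ?_
    filter_upwards [Ioo_mem_nhdsGT ht] with y hy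
    exact hanti hy.1 ht hy.2.le
  have hN0 : N t ≤ 0 := by
    by_contra h
    push Not at h
    nlinarith [mul_pos h (exp_pos (-(40 * t)))]
  have e4 : N t = x t ^ 2 + (d t / t) ^ 2 + m t ^ 2 := rfl
  constructor <;> nlinarith [sq_nonneg (x t), sq_nonneg (m t), sq_nonneg (d t / t)]

noncomputable def tau (t : ℝ) : ℝ := 2 * t * √(1 + t ^ 2)

lemma tau_deriv (t : ℝ) : HasDerivAt tau (2 * (1 + 2 * t ^ 2) / √(1 + t ^ 2)) t := by
  have hp : 0 < 1 + t ^ 2 := by positivity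
  have h : HasDerivAt (fun y : ℝ => 1 + y ^ 2) (2 * t) t := by
    have := ((hasDerivAt_id t).pow 2).const_add 1
    refine this.congr_deriv ?_
    simp
  refine (((hasDerivAt_id t).const_mul 2).mul (h.sqrt hp.ne')).congr_deriv ?_
  have h1 : √(1 + t ^ 2) ≠ 0 := (Real.sqrt_pos.2 hp).ne'
  have h2 : √(1 + t ^ 2) ^ 2 = 1 + t ^ 2 := Real.sq_sqrt hp.le
  simp only [id]
  field_simp
  rw [h2]; ring

lemma tau_sq (t : ℝ) : tau t ^ 2 = 4 * t ^ 2 * (1 + t ^ 2) := by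
  rw [tau, mul_pow, Real.sq_sqrt (by positivity)]; ring

lemma tau_pos {t : ℝ} (ht : 0 < t) : 0 < tau t := by
  unfold tau; positivity

lemma tau_fac {t : ℝ} (ht : 0 < t) : 2 * (1 + 2 * t ^ 2) / √(1 + t ^ 2) =
    (1 + 2 * t ^ 2) / (1 + t ^ 2) / t * tau t := by
  have hp : 0 < 1 + t ^ 2 := by positivity
  have h1 : √(1 + t ^ 2) ≠ 0 := (Real.sqrt_pos.2 hp).ne'
  have h2 : √(1 + t ^ 2) ^ 2 = 1 + t ^ 2 := Real.sq_sqrt hp.le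
  unfold tau
  field_simp
  rw [h2]

structure Sol (x d m : ℝ → ℝ) : Prop where
  hx : ∀ t, 0 < t → HasDerivAt x ((1 + 2 * t ^ 2) / (1 + t ^ 2) * d t / t) t
  hd : ∀ t, 0 < t → HasDerivAt d (4 * t / (1 + 2 * t ^ 2) * (d t + x t / 2 - 3 * m t)) t
  hm : ∀ t, 0 < t → HasDerivAt m
      ((1 + 2 * t ^ 2) / (1 + t ^ 2) * (d t / 2 - 2 * m t) / t) t

lemma Sol.sub {x d m x' d' m' : ℝ → ℝ} (h : Sol x d m) (h' : Sol x' d' m') :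
    Sol (fun t => x t - x' t) (fun t => d t - d' t) (fun t => m t - m' t) where
  hx t ht := ((h.hx t ht).sub (h'.hx t ht)).congr_deriv (by ring)
  hd t ht := ((h.hd t ht).sub (h'.hd t ht)).congr_deriv (by ring)
  hm t ht := ((h.hm t ht).sub (h'.hm t ht)).congr_deriv (by ring)

lemma sol_int : Sol (fun t => JJ (tau t)) (fun t => JJ (tau t) - GG (tau t))
    (fun t => HH (tau t) - JJ (tau t) / 2) := by
  have key : ∀ t, 0 < t → HasDerivAt (fun t => JJ (tau t))
      ((1 + 2 * t ^ 2) / (1 + t ^ 2) * (JJ (tau t) - GG (tau t)) / t) t := by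
    intro t ht
    refine ((J_deriv (tau t)).comp t (tau_deriv t)).congr_deriv ?_
    rw [tau_fac ht, ← t_JP]; ring
  refine ⟨key, ?_, ?_⟩
  · intro t ht
    refine (((J_deriv (tau t)).comp t (tau_deriv t)).sub
      ((G_deriv (tau t)).comp t (tau_deriv t))).congr_deriv ?_
    have h1 := t_JP (tau t)
    have h2 := t_GP (tau t)
    have h3 := ftc1 (tau t)
    have h4 := ftc2 (tau t)
    have h5 := tau_sq t
    have h6 : 1 + tau t ^ 2 = (1 + 2 * t ^ 2) ^ 2 := by rw [h5]; ring
    rw [tau_fac ht]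
    have e : RR (tau t) = (JJ (tau t) + tau t ^ 2 * MM (tau t)) / (1 + 2 * t ^ 2) ^ 2 := by
      rw [← h4, h6]; field_simp
    have : JP (tau t) * ((1 + 2 * t ^ 2) / (1 + t ^ 2) / t * tau t) -
      GP (tau t) * ((1 + 2 * t ^ 2) / (1 + t ^ 2) / t * tau t) =
      (1 + 2 * t ^ 2) / (1 + t ^ 2) / t * (tau t * JP (tau t) - tau t * GP (tau t)) := by ring
    rw [this, h1, h2, e, h5, h3]
    field_simp
    ring
  · intro t ht
    refine (((H_deriv (tau t)).comp t (tau_deriv t)).sub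
      ((key t ht).div_const 2)).congr_deriv ?_
    have h2 := t_HP (tau t)
    have h3 := ftc1 (tau t)
    rw [tau_fac ht]
    have : HP (tau t) * ((1 + 2 * t ^ 2) / (1 + t ^ 2) / t * tau t) =
      (1 + 2 * t ^ 2) / (1 + t ^ 2) / t * (tau t * HP (tau t)) := by ring
    rw [this, h2, h3]
    ring

noncomputable def QQ (t : ℝ) : ℝ := (8*t^4 + 8*t^2 - 1) * Eimag t ^ 2
            - 2 * (4*t^4 + 3*t^2 - 1) * Eimag t * Kimag t
            + (2*t^4 + t^2 - 1) * Kimag t ^ 2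

lemma E_deriv' {t : ℝ} (ht : 0 < t) : HasDerivAt Eimag ((Eimag t - Kimag t) / t) t :=
  (E_deriv t).congr_deriv (by rw [← T_EP]; field_simp)

lemma K_deriv' {t : ℝ} (ht : 0 < t) :
    HasDerivAt Kimag ((Eimag t / (1 + t ^ 2) - Kimag t) / t) t :=
  (K_deriv t).congr_deriv (by rw [← T_KP]; field_simp)

noncomputable def xE (t : ℝ) : ℝ := 2 * Eimag t ^ 2 - 2 * (Eimag t * Kimag t) + Kimag t ^ 2

/-- `Q/(6u(1+u)) - x/2` in nicer form -/
noncomputable def mE (t : ℝ) : ℝ :=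
  Eimag t ^ 2 - Eimag t * Kimag t
    - (t ^ 2 * (2 * Eimag t - Kimag t) + (Eimag t - Kimag t)) ^ 2 / (6 * (t ^ 2 * (1 + t ^ 2)))

lemma mE_eq {t : ℝ} (ht : 0 < t) : 6 * (t ^ 2 * (1 + t ^ 2)) * (mE t + xE t / 2) = QQ t := by
  unfold mE xE QQ
  field_simp
  ring

lemma sol_ell : Sol xE (fun t => 2 * (Eimag t ^ 2 - Eimag t * Kimag t)) mE := by
  refine ⟨?_, ?_, ?_⟩
  · intro t ht
    have e := E_deriv' ht
    have k := K_deriv' ht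
    refine ((((e.pow 2).const_mul 2).sub ((e.mul k).const_mul 2)).add (k.pow 2)).congr_deriv ?_
    simp only [Nat.cast_ofNat, Nat.add_one_sub_one, pow_one]
    field_simp
    ring
  · intro t ht
    have e := E_deriv' ht
    have k := K_deriv' ht
    refine (((e.pow 2).sub (e.mul k)).const_mul 2).congr_deriv ?_
    simp only [Nat.cast_ofNat, Nat.add_one_sub_one, pow_one, mE, xE]
    field_simp
    ring
  · intro t ht
    have e := E_deriv' ht
    have k := K_deriv' ht
    have p : HasDerivAt (fun y : ℝ => y ^ 2) (2 * t) t := by simpa using hasDerivAt_pow 2 t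
    refine (((e.pow 2).sub (e.mul k)).sub ((((p.mul ((e.const_mul 2).sub k)).add
      (e.sub k)).pow 2).div ((p.mul (p.const_add 1)).const_mul 6) (by
        simp only [Pi.mul_apply]; positivity))).congr_deriv ?_
    simp only [Nat.cast_ofNat, Nat.add_one_sub_one, pow_one, mE, Pi.mul_apply, Pi.sub_apply,
      Pi.add_apply, Pi.pow_apply]
    field_simp
    ring

lemma E_zero : Eimag 0 = π / 2 := by simp [Eimag]
lemma K_zero : Kimag 0 = π / 2 := by simp [Kimag]
lemma EP_zero : EP 0 = 0 := by simp [EP]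
lemma JP_zero : JP 0 = 0 := by simp [JP, EP_zero]
lemma tau_zero : tau 0 = 0 := by simp [tau]
lemma J_zero : JJ 0 = π ^ 2 / 4 := by simp [JJ, E_zero]; ring
lemma H_zero : HH 0 = π ^ 2 / 8 := by
  simp [HH, E_zero, integral_sin_sq]; ring

lemma tau_cont : Continuous tau := continuous_iff_continuousAt.2 fun t => (tau_deriv t).continuousAt
lemma J_cont : Continuous JJ := continuous_iff_continuousAt.2 fun t => (J_deriv t).continuousAt
lemma H_cont : Continuous HH := continuous_iff_continuousAt.2 fun t => (H_deriv t).continuousAt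

lemma tends {f g : ℝ → ℝ} (hg : Continuous g) (h0 : g 0 = 0) (h : ∀ t, 0 < t → f t = g t) :
    Tendsto f (𝓝[>] 0) (𝓝 0) := by
  have : Tendsto g (𝓝[>] 0) (𝓝 (g 0)) := (hg.tendsto 0).mono_left nhdsWithin_le_nhds
  rw [h0] at this
  refine this.congr' ?_
  filter_upwards [self_mem_nhdsWithin] with t ht
  exact (h t ht).symm

lemma key_H {t : ℝ} (ht : 0 < t) : 6 * (t ^ 2 * (1 + t ^ 2)) * HH (tau t) = QQ t := by
  have S := sol_int.sub sol_ell
  have cE := E_cont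
  have cK := K_cont
  have cEP := EP_cont
  have cJ := J_cont
  have cH := H_cont
  have cJP := JP_cont
  have ct := tau_cont
  have := uniq S.hx S.hd S.hm
    (tends (g := fun t => JJ (tau t) - xE t) (by unfold xE; fun_prop)
      (by simp only [tau_zero, J_zero, xE, E_zero, K_zero]; ring) (fun t ht => rfl))
    (tends (g := fun t => 2 * √(1 + t ^ 2) * JP (tau t) - 2 * (Eimag t * EP t)) (by fun_prop)
      (by simp [tau_zero, JP_zero, EP_zero]) (fun t ht => by
        have h1 := t_JP (tau t)
        have h2 := T_EP t
        rw [← h1]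
        have : Eimag t ^ 2 - Eimag t * Kimag t = Eimag t * (Eimag t - Kimag t) := by ring
        rw [this, ← h2, tau]
        field_simp))
    (tends (g := fun t => HH (tau t) - JJ (tau t) / 2 - (Eimag t ^ 2 - Eimag t * Kimag t
      - (t * (2 * Eimag t - Kimag t) + EP t) ^ 2 / (6 * (1 + t ^ 2))))
      (by
        have : Continuous fun t => (t * (2 * Eimag t - Kimag t) + EP t) ^ 2 / (6 * (1 + t ^ 2)) :=
          Continuous.div (by fun_prop) (by fun_prop) (fun t => by positivity)
        fun_prop)
      (by simp only [tau_zero, J_zero, H_zero, E_zero, K_zero, EP_zero]; ring)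
      (fun t ht => by
        rw [mE, ← T_EP]
        field_simp)) t ht
  rw [← mE_eq ht]
  obtain ⟨h1, h2⟩ := this
  congr 1
  linarith

noncomputable def Phi (w : ℝ) : ℝ := ∫ φ in (0:ℝ)..(π/2), ∫ θ in (0:ℝ)..(π/2),
  sin φ ^ 2 * √(sin θ ^ 2 * sin φ ^ 2 * (1 - w ^ 2) + w ^ 2)

lemma Phi_cont : Continuous Phi := by
  refine param_cont ?_ _ _
  simp only [Function.uncurry_def]
  apply intervalIntegral.continuous_parametric_intervalIntegral_of_continuous'
  simp only [Function.uncurry_def]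
  fun_prop

lemma Phi_eq (t : ℝ) : Phi (1 / (1 + 2 * t ^ 2)) = 1 / (1 + 2 * t ^ 2) * HH (tau t) := by
  unfold Phi HH
  rw [← intervalIntegral.integral_const_mul]
  congr 1; ext φ
  rw [Eimag, ← intervalIntegral.integral_const_mul, ← intervalIntegral.integral_const_mul]
  congr 1; ext θ
  have hs : 0 < 1 + 2 * t ^ 2 := by positivity
  have : sin θ ^ 2 * sin φ ^ 2 * (1 - (1 / (1 + 2 * t ^ 2)) ^ 2) + (1 / (1 + 2 * t ^ 2)) ^ 2
      = (1 / (1 + 2 * t ^ 2)) ^ 2 * (1 + (tau t * sin φ) ^ 2 * sin θ ^ 2) := by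
    rw [mul_pow (tau t), tau_sq]
    field_simp
    ring
  rw [this, Real.sqrt_mul (by positivity), Real.sqrt_sq (by positivity)]
  ring

lemma lhs_swap : (∫ θ in (0:ℝ)..(π/2), ∫ φ in (0:ℝ)..(π/2), ∫ ψ in (0:ℝ)..(π/2),
        Real.sin φ ^ 2 * Real.sin ψ ^ 3 *
          Real.sqrt (Real.sin θ ^ 2 * Real.sin φ ^ 2 * Real.sin ψ ^ 2 + Real.cos ψ ^ 2))
    = ∫ w in (0:ℝ)..1, (1 - w ^ 2) * Phi w := by
  have s1 : ∀ θ : ℝ, (∫ φ in (0:ℝ)..(π/2), ∫ ψ in (0:ℝ)..(π/2),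
        Real.sin φ ^ 2 * Real.sin ψ ^ 3 *
          Real.sqrt (Real.sin θ ^ 2 * Real.sin φ ^ 2 * Real.sin ψ ^ 2 + Real.cos ψ ^ 2)) =
      ∫ ψ in (0:ℝ)..(π/2), ∫ φ in (0:ℝ)..(π/2),
        Real.sin φ ^ 2 * Real.sin ψ ^ 3 *
          Real.sqrt (Real.sin θ ^ 2 * Real.sin φ ^ 2 * Real.sin ψ ^ 2 + Real.cos ψ ^ 2) := by
    intro θ
    apply swap_cont
    simp only [Function.uncurry_def]
    fun_prop
  simp only [s1]
  rw [swap_cont]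
  swap
  · simp only [Function.uncurry_def]
    apply intervalIntegral.continuous_parametric_intervalIntegral_of_continuous'
    simp only [Function.uncurry_def]
    fun_prop
  have s2 : ∀ ψ : ℝ, (∫ θ in (0:ℝ)..(π/2), ∫ φ in (0:ℝ)..(π/2),
        Real.sin φ ^ 2 * Real.sin ψ ^ 3 *
          Real.sqrt (Real.sin θ ^ 2 * Real.sin φ ^ 2 * Real.sin ψ ^ 2 + Real.cos ψ ^ 2)) =
      -((fun w => (1 - w ^ 2) * Phi w) (cos ψ) * (- sin ψ)) := by
    intro ψ
    rw [swap_cont (by simp only [Function.uncurry_def]; fun_prop)]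
    have : -((fun w => (1 - w ^ 2) * Phi w) (cos ψ) * (- sin ψ)) =
      sin ψ ^ 3 * Phi (cos ψ) := by
      simp only
      rw [Real.cos_sq']; ring
    rw [this, Phi, ← intervalIntegral.integral_const_mul]
    congr 1; ext φ
    rw [← intervalIntegral.integral_const_mul]
    congr 1; ext θ
    rw [← Real.sin_sq ψ]
    ring
  simp only [s2]
  rw [intervalIntegral.integral_neg]
  have := intervalIntegral.integral_comp_mul_deriv (a := 0) (b := π/2)
    (f := cos) (f' := fun ψ => - sin ψ) (g := fun w => (1 - w ^ 2) * Phi w)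
    (fun ψ _ => Real.hasDerivAt_cos ψ) (by fun_prop)
    (by have := Phi_cont; fun_prop)
  simp only [Function.comp] at this
  rw [this, intervalIntegral.integral_symm]
  simp

lemma image_sub : (fun t : ℝ => 1 / (1 + 2 * t ^ 2)) '' Ioi 0 = Ioo 0 1 := by
  ext w
  constructor
  · rintro ⟨t, ht, rfl⟩
    have ht : 0 < t := ht
    refine ⟨by positivity, ?_⟩
    rw [div_lt_one (by positivity)]
    nlinarith [pow_pos ht 2]
  · rintro ⟨h0, h1⟩
    have h2 : 0 < (1 / w - 1) / 2 := by
      have : 1 < 1 / w := by rw [lt_div_iff₀ h0]; linarith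
      linarith
    refine ⟨√((1 / w - 1) / 2), Real.sqrt_pos.2 h2, ?_⟩
    simp only
    rw [Real.sq_sqrt h2.le]
    field_simp
    ring

/-- The 'hard' triple integral arising in the second moment of the surface area of
the projection of a unit 4-cube onto a random 3-subspace, expressed in terms of
complete elliptic integrals with imaginary modulus. -/
theorem hard_triple_integral_elliptic :
    ∫ θ in (0:ℝ)..(π/2), ∫ φ in (0:ℝ)..(π/2), ∫ ψ in (0:ℝ)..(π/2),
        Real.sin φ ^ 2 * Real.sin ψ ^ 3 *
          Real.sqrt (Real.sin θ ^ 2 * Real.sin φ ^ 2 * Real.sin ψ ^ 2 + Real.cos ψ ^ 2)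
      = (8/3) *
        ∫ t in Set.Ioi (0:ℝ),
          ((8*t^4 + 8*t^2 - 1) * Eimag t ^ 2
            - 2 * (4*t^4 + 3*t^2 - 1) * Eimag t * Kimag t
            + (2*t^4 + t^2 - 1) * Kimag t ^ 2) * t / (2*t^2 + 1)^5 := by
  rw [lhs_swap, intervalIntegral.integral_of_le zero_le_one, integral_Ioc_eq_integral_Ioo,
    ← image_sub,
    integral_image_eq_integral_abs_deriv_smul (f' := fun t => -(4 * t) / (1 + 2 * t ^ 2) ^ 2)
      measurableSet_Ioi, ← integral_const_mul]
  · refine setIntegral_congr_fun measurableSet_Ioi fun t ht => ?_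
    have ht : 0 < t := ht
    have hk := key_H ht
    unfold QQ at hk
    simp only [smul_eq_mul]
    rw [Phi_eq, ← hk, neg_div, abs_neg, abs_of_pos (by positivity), add_comm (2 * t ^ 2) 1]
    field_simp
    ring
  · intro t ht
    have p : HasDerivAt (fun y : ℝ => 1 + 2 * y ^ 2) (2 * (2 * t)) t := by
      have := (((hasDerivAt_pow 2 t).const_mul 2).const_add (1:ℝ))
      exact this.congr_deriv (by simp)
    have hs : (1 + 2 * t ^ 2) ≠ 0 := by positivity
    refine (((hasDerivAt_const t (1:ℝ)).div p hs).congr_deriv ?_).hasDerivWithinAt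
    ring
  · intro a ha b hb hab
    have ha : 0 < a := ha
    have hb : 0 < b := hb
    simp only at hab
    rw [div_eq_div_iff (by positivity) (by positivity)] at hab
    have : a ^ 2 = b ^ 2 := by linarith
    exact (pow_left_inj₀ ha.le hb.le two_ne_zero).1 this
end

section
/- The quadruple integral A₅ := ∫₀^{π/2} ∫₀^{π/2} ∫₀^{π/2} ∫₀^{π/2} sin²φ₁ · sin³φ₂ · sin⁴φ₃ · √(sin²θ · sin²φ₁ · sin²φ₂ · sin²φ₃ + cos²φ₃) dφ₃ dφ₂ dφ₁ dθ and the triple integral A₄ := ∫₀^{π/2} ∫₀^{π/2} ∫₀^{π/2} sin²φ · sin³ψ · √(sin²θ · sin²φ · sin²ψ + cos²ψ) dψ dφ dθ satisfy A₅ = (8/15) · A₄. (Equivalently, the constants ζ₅ and ζ₄ appearing in the second-moment formulas for projected surface area of the 5-cube and 4-cube are equal: ζ₅ = ζ₄.) -/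
open Real

lemma aux_swap (f : ℝ → ℝ → ℝ) (hf : Continuous (Function.uncurry f)) (a b c d : ℝ) :
    ∫ x in a..b, ∫ y in c..d, f x y = ∫ y in c..d, ∫ x in a..b, f x y := by
  apply MeasureTheory.intervalIntegral_intervalIntegral_swap
  have h : MeasureTheory.IntegrableOn (Function.uncurry f) (Set.uIcc a b ×ˢ Set.uIcc c d)
      MeasureTheory.volume :=
    hf.continuousOn.integrableOn_compact (isCompact_uIcc.prod isCompact_uIcc)
  exact h.mono_set (Set.prod_mono Set.uIoc_subset_uIcc Set.uIoc_subset_uIcc)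

lemma aux_subst_s11 (h : ℝ → ℝ) (hh : Continuous h) (c : ℝ) :
    ∫ t in (0:ℝ)..(π/2), h (c * cos t) * (c * sin t) = ∫ u in (0:ℝ)..c, h u := by
  have := intervalIntegral.integral_comp_mul_deriv (a := 0) (b := π/2)
    (f := fun t => c * cos t) (f' := fun t => c * (-sin t)) (g := h)
    (fun x _ => (hasDerivAt_cos x).const_mul c) (by fun_prop) hh
  simp only [Function.comp, cos_zero, cos_pi_div_two, mul_one, mul_zero] at this
  rw [intervalIntegral.integral_symm c 0, ← this, ← intervalIntegral.integral_neg]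
  congr 1; ext t; ring

lemma aux_trunc (h : ℝ → ℝ) (hh : Continuous h) (c : ℝ) (hc : c ≤ 1)
    (hz : ∀ x, c ≤ x → h x = 0) :
    ∫ u in (0:ℝ)..1, h u = ∫ u in (0:ℝ)..c, h u := by
  rw [← intervalIntegral.integral_add_adjacent_intervals (b := c)
    (hh.intervalIntegrable _ _) (hh.intervalIntegrable _ _)]
  have : ∫ u in c..1, h u = ∫ u in c..1, (0:ℝ) := by
    apply intervalIntegral.integral_congr
    intro x hx
    rw [Set.uIcc_of_le hc] at hx
    exact hz x hx.1
  rw [this]; simp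

noncomputable def gg (b u v : ℝ) : ℝ :=
  max (1 - u^2 - v^2) 0 * Real.sqrt (b^2 * max (1 - u^2 - v^2) 0 + u^2)

lemma aux_one (b : ℝ) :
    (∫ x in (0:ℝ)..(π/2), ∫ y in (0:ℝ)..(π/2), sin x ^ 3 * sin y ^ 4 *
      Real.sqrt (b^2 * sin x ^ 2 * sin y ^ 2 + cos y ^ 2))
    = ∫ u in (0:ℝ)..1, ∫ v in (0:ℝ)..1, gg b u v := by
  rw [aux_swap _ (by unfold Function.uncurry; fun_prop)]
  have hG : Continuous (fun u => ∫ v in (0:ℝ)..1, gg b u v) := by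
    apply intervalIntegral.continuous_parametric_intervalIntegral_of_continuous'
    unfold Function.uncurry gg; fun_prop
  rw [← aux_subst_s11 _ hG 1]
  apply intervalIntegral.integral_congr
  intro y hy
  rw [Set.uIcc_of_le (by positivity)] at hy
  have hs : 0 ≤ sin y := sin_nonneg_of_nonneg_of_le_pi hy.1 (by linarith [hy.2, pi_pos])
  have hsc := sin_sq_add_cos_sq y
  have hg : Continuous (fun v => gg b (1 * cos y) v) := by unfold gg; fun_prop
  simp only
  rw [aux_trunc _ hg (sin y) (sin_le_one y), ← aux_subst_s11 _ hg (sin y),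
    ← intervalIntegral.integral_mul_const]
  · apply intervalIntegral.integral_congr
    intro x hx
    have hx2 := sin_sq_add_cos_sq x
    have e : 1 - (1 * cos y)^2 - (sin y * cos x)^2 = (sin x * sin y)^2 := by
      linear_combination -hsc - sin y ^ 2 * hx2
    simp only [gg]
    rw [e, max_eq_left (sq_nonneg _)]
    have : b ^ 2 * (sin x * sin y) ^ 2 + (1 * cos y)^2
      = b^2 * sin x ^ 2 * sin y ^ 2 + cos y ^ 2 := by ring
    rw [this]; ring
  · intro x hx
    simp only [gg]
    rw [max_eq_right (by nlinarith)]; simp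

lemma aux_two (b : ℝ) :
    (∫ u in (0:ℝ)..1, ∫ v in (0:ℝ)..1, gg b u v)
    = 8/15 * ∫ x in (0:ℝ)..(π/2), sin x ^ 3 * Real.sqrt (b^2 * sin x ^ 2 + cos x ^ 2) := by
  rw [aux_swap _ (by unfold Function.uncurry gg; fun_prop)]
  have key : ∀ v ∈ Set.uIcc (0:ℝ) 1, ∫ u in (0:ℝ)..1, gg b u v =
      (1 - v^2)^2 * ∫ x in (0:ℝ)..(π/2), sin x ^ 3 * Real.sqrt (b^2 * sin x ^ 2 + cos x ^ 2) := by
    intro v hv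
    rw [Set.uIcc_of_le zero_le_one] at hv
    have h0 : 0 ≤ 1 - v^2 := by nlinarith [hv.1, hv.2]
    obtain ⟨c, hc0, hc⟩ : ∃ c : ℝ, 0 ≤ c ∧ c^2 = 1 - v^2 :=
      ⟨Real.sqrt (1 - v^2), Real.sqrt_nonneg _, Real.sq_sqrt h0⟩
    have hg : Continuous (fun u => gg b u v) := by unfold gg; fun_prop
    rw [aux_trunc _ hg c (by nlinarith [sq_nonneg v]), ← aux_subst_s11 _ hg c,
      ← intervalIntegral.integral_const_mul]
    · apply intervalIntegral.integral_congr
      intro x hx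
      have hx2 := sin_sq_add_cos_sq x
      have e : 1 - (c * cos x)^2 - v^2 = (c * sin x)^2 := by
        linear_combination -hc - c^2 * hx2
      simp only [gg]
      rw [e, max_eq_left (sq_nonneg _)]
      have : b ^ 2 * (c * sin x) ^ 2 + (c * cos x)^2
        = c^2 * (b^2 * sin x ^ 2 + cos x ^ 2) := by ring
      rw [this, Real.sqrt_mul (sq_nonneg c), Real.sqrt_sq hc0, ← hc]; ring
    · intro x hx
      simp only [gg]
      rw [max_eq_right (by nlinarith)]; simp
  rw [intervalIntegral.integral_congr key, intervalIntegral.integral_mul_const]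
  congr 1
  have : ∀ v : ℝ, (1 - v^2)^2 = 1 - 2 * v^2 + v^4 := fun v => by ring
  simp only [this]
  rw [intervalIntegral.integral_add, intervalIntegral.integral_sub]
  · simp only [intervalIntegral.integral_const_mul, integral_pow,
      intervalIntegral.integral_const]
    norm_num
  all_goals exact Continuous.intervalIntegrable (by fun_prop) _ _

/-- The quadruple integral `A₅` (the 'hard' integral for the 5-cube) equals
`(8/15)` times the triple integral `A₄` (the 'hard' integral for the 4-cube);
equivalently, the constants `ζ₅` and `ζ₄` of the paper are equal. -/
theorem zeta5_eq_zeta4 :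
    (∫ θ in (0:ℝ)..(π/2), ∫ φ₁ in (0:ℝ)..(π/2), ∫ φ₂ in (0:ℝ)..(π/2),
        ∫ φ₃ in (0:ℝ)..(π/2),
        Real.sin φ₁ ^ 2 * Real.sin φ₂ ^ 3 * Real.sin φ₃ ^ 4 *
          Real.sqrt (Real.sin θ ^ 2 * Real.sin φ₁ ^ 2 * Real.sin φ₂ ^ 2 *
            Real.sin φ₃ ^ 2 + Real.cos φ₃ ^ 2))
    = (8/15) *
      ∫ θ in (0:ℝ)..(π/2), ∫ φ in (0:ℝ)..(π/2), ∫ ψ in (0:ℝ)..(π/2),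
        Real.sin φ ^ 2 * Real.sin ψ ^ 3 *
          Real.sqrt (Real.sin θ ^ 2 * Real.sin φ ^ 2 * Real.sin ψ ^ 2 +
            Real.cos ψ ^ 2) := by
  rw [← intervalIntegral.integral_const_mul]
  congr 1; ext θ
  rw [← intervalIntegral.integral_const_mul]
  congr 1; ext φ
  have h := (aux_one (sin θ * sin φ)).trans (aux_two _)
  simp only [mul_pow] at h
  simp only [mul_assoc, intervalIntegral.integral_const_mul] at h ⊢
  rw [h]; ring
end

section
/- ∫₀^{π/2} ∫₀^{π/2} sin²φ · √(1 − cos²θ · sin²φ) dφ dθ = (π²/8) · Σ_{k=0}^{∞} [ (−1/2)_k · (1/2)_k · (3/2)_k ] / [ (1)_k · (2)_k · k! ], where (a)_k = a(a+1)⋯(a+k−1) is the Pochhammer symbol. (The right side is (π²/8) · ₃F₂(−1/2, 1/2, 3/2; 1, 2; 1); this identity underlies the second moment of the mean width of a random planar shadow of the 3-cube.) -/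
open Real

noncomputable def cf (k : ℕ) : ℝ := (ascPochhammer ℝ k).eval (-1/2) / (k.factorial : ℝ)

lemma cf_sum (n : ℕ) : ∑ k ∈ Finset.range (n+1), cf k
    = (ascPochhammer ℝ n).eval (1/2) / (n.factorial : ℝ) := by
  induction n with
  | zero => simp [cf]
  | succ n ih =>
    have key : (ascPochhammer ℝ (n+1)).eval (-1/2 : ℝ) = (-1/2) * (ascPochhammer ℝ n).eval (1/2) := by
      rw [ascPochhammer_succ_left]
      simp only [Polynomial.eval_mul, Polynomial.eval_X, Polynomial.eval_comp,
        Polynomial.eval_add, Polynomial.eval_one]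
      norm_num
    rw [Finset.sum_range_succ, ih, cf, key, ascPochhammer_succ_eval, Nat.factorial_succ]
    have : (n.factorial : ℝ) ≠ 0 := by positivity
    push_cast
    field_simp
    ring

lemma poch_half_nonneg (n : ℕ) : 0 ≤ (ascPochhammer ℝ n).eval (1/2 : ℝ) :=
  (ascPochhammer_pos n _ (by norm_num)).le

lemma cf_succ_nonpos (n : ℕ) : cf (n+1) ≤ 0 := by
  have key : (ascPochhammer ℝ (n+1)).eval (-1/2 : ℝ) = (-1/2) * (ascPochhammer ℝ n).eval (1/2) := by
    rw [ascPochhammer_succ_left]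
    simp only [Polynomial.eval_mul, Polynomial.eval_X, Polynomial.eval_comp,
      Polynomial.eval_add, Polynomial.eval_one]
    norm_num
  rw [cf, key]
  have := poch_half_nonneg n
  apply div_nonpos_of_nonpos_of_nonneg
  · linarith
  · positivity

lemma cf_summable : Summable (fun k => |cf k|) := by
  rw [← summable_nat_add_iff 1]
  refine summable_of_sum_range_le (c := 1) (fun _ => abs_nonneg _) fun n => ?_
  have h := cf_sum n
  rw [Finset.sum_range_succ'] at h
  have h0 : cf 0 = 1 := by simp [cf]
  have h1 : ∑ i ∈ Finset.range n, |cf (i+1)| = - ∑ i ∈ Finset.range n, cf (i+1) := by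
    rw [← Finset.sum_neg_distrib]
    exact Finset.sum_congr rfl fun i _ => abs_of_nonpos (cf_succ_nonpos i)
  have h2 : 0 ≤ (ascPochhammer ℝ n).eval (1/2 : ℝ) / (n.factorial : ℝ) :=
    div_nonneg (poch_half_nonneg n) (by positivity)
  rw [h1]; linarith

lemma sqrt_hasSum (x : ℝ) (h0 : 0 ≤ x) (h1 : x < 1) :
    HasSum (fun k => cf k * x ^ k) (√(1 - x)) := by
  have H := (one_div_one_sub_rpow_hasFPowerSeriesOnBall_zero (-1/2)).hasSum (y := x) (by
    simp [enorm_eq_nnnorm, ← NNReal.coe_lt_coe, abs_of_nonneg h0, h1])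
  convert! H using 1
  · funext k
    have : Ring.choose ((-1/2 : ℝ) + k - 1) k = cf k := by
      have h := Ring.factorial_nsmul_multichoose_eq_ascPochhammer (-1/2 : ℝ) k
      rw [Polynomial.ascPochhammer_smeval_eq_eval] at h
      rw [cf, ← h, Ring.choose]
      have : (k.factorial : ℝ) ≠ 0 := by positivity
      rw [nsmul_eq_mul, mul_div_cancel_left₀ _ this]
      congr 1; ring
    simp [FormalMultilinearSeries.ofScalars, this]
  · rw [zero_add, show (-1/2 : ℝ) = -(1/2) by norm_num, rpow_neg (by linarith), ← sqrt_eq_rpow]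
    simp

lemma wallis_cos (k : ℕ) : ∫ x in (0:ℝ)..(π/2), cos x ^ (2*k)
    = π / 2 * ((ascPochhammer ℝ k).eval (1/2) / (k.factorial : ℝ)) := by
  rw [EulerSine.integral_cos_pow_eq, integral_sin_pow_even]
  have : ∏ i ∈ Finset.range k, (2 * (i : ℝ) + 1) / (2 * i + 2)
      = (ascPochhammer ℝ k).eval (1/2) / (k.factorial : ℝ) := by
    induction k with
    | zero => simp
    | succ k ih =>
      rw [Finset.prod_range_succ, ih, ascPochhammer_succ_eval, Nat.factorial_succ]
      have : (k.factorial : ℝ) ≠ 0 := by positivity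
      push_cast
      field_simp
      ring
  rw [this]; ring

lemma wallis_sin (k : ℕ) : ∫ x in (0:ℝ)..(π/2), sin x ^ (2*k)
    = π / 2 * ((ascPochhammer ℝ k).eval (1/2) / (k.factorial : ℝ)) := by
  rw [← wallis_cos]
  have := intervalIntegral.integral_comp_sub_left (a := 0) (b := π/2)
    (fun x => cos x ^ (2*k)) (π/2)
  simpa [cos_pi_div_two_sub] using this

lemma inner_hasSum (θ : ℝ) (h0 : 0 < θ) (h1 : θ ≤ π/2) :
    HasSum (fun k => cf k * (∫ x in (0:ℝ)..(π/2), sin x ^ (2*(k+1))) * cos θ ^ (2*k))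
      (∫ φ in (0:ℝ)..(π/2), sin φ ^ 2 * √(1 - cos θ ^ 2 * sin φ ^ 2)) := by
  have hs : 0 < sin θ := sin_pos_of_pos_of_lt_pi h0 (by linarith [pi_pos])
  have hc : cos θ ^ 2 < 1 := by nlinarith [sin_sq_add_cos_sq θ]
  have H := intervalIntegral.hasSum_integral_of_dominated_convergence
    (μ := MeasureTheory.volume) (a := 0) (b := π/2)
    (F := fun k φ => sin φ ^ 2 * (cf k * (cos θ ^ 2 * sin φ ^ 2) ^ k))
    (f := fun φ => sin φ ^ 2 * √(1 - cos θ ^ 2 * sin φ ^ 2))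
    (fun k _ => |cf k|) ?_ ?_ ?_ ?_ ?_
  · convert! H using 2 with k
    rw [mul_right_comm, ← intervalIntegral.integral_const_mul]
    congr 1; funext φ; ring
  · intro k
    exact Continuous.aestronglyMeasurable (by fun_prop)
  · intro k
    refine Filter.Eventually.of_forall fun φ _ => ?_
    have a1 : |sin φ ^ 2| ≤ 1 := by rw [abs_of_nonneg (sq_nonneg _)]; exact sin_sq_le_one φ
    have a2 : |(cos θ ^ 2 * sin φ ^ 2) ^ k| ≤ 1 := by
      rw [abs_of_nonneg (by positivity)]
      exact pow_le_one₀ (by positivity) (mul_le_one₀ (cos_sq_le_one θ) (sq_nonneg _) (sin_sq_le_one φ))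
    rw [norm_eq_abs, abs_mul, abs_mul]
    calc _ ≤ 1 * (|cf k| * 1) := by gcongr
      _ = _ := by ring
  · exact Filter.Eventually.of_forall fun φ _ => cf_summable
  · exact intervalIntegrable_const
  · refine Filter.Eventually.of_forall fun φ _ => ?_
    refine (sqrt_hasSum _ (by positivity) ?_).mul_left _
    nlinarith [sin_sq_le_one φ, sq_nonneg (sin φ), sq_nonneg (cos θ)]

lemma outer_hasSum :
    HasSum (fun k => cf k * (∫ x in (0:ℝ)..(π/2), sin x ^ (2*(k+1))) *
        ∫ θ in (0:ℝ)..(π/2), cos θ ^ (2*k))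
      (∫ θ in (0:ℝ)..(π/2), ∫ φ in (0:ℝ)..(π/2), sin φ ^ 2 * √(1 - cos θ ^ 2 * sin φ ^ 2)) := by
  have hb : ∀ k : ℕ, |∫ x in (0:ℝ)..(π/2), sin x ^ (2*(k+1))| ≤ π/2 := by
    intro k
    have := intervalIntegral.norm_integral_le_of_norm_le_const (a := 0) (b := π/2) (C := 1)
      (f := fun x => sin x ^ (2*(k+1))) (fun x _ => by
        rw [norm_eq_abs, abs_pow]
        exact pow_le_one₀ (abs_nonneg _) (abs_sin_le_one x))
    simpa [abs_of_pos pi_div_two_pos] using this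
  have H := intervalIntegral.hasSum_integral_of_dominated_convergence
    (μ := MeasureTheory.volume) (a := 0) (b := π/2)
    (F := fun k θ => cf k * (∫ x in (0:ℝ)..(π/2), sin x ^ (2*(k+1))) * cos θ ^ (2*k))
    (f := fun θ => ∫ φ in (0:ℝ)..(π/2), sin φ ^ 2 * √(1 - cos θ ^ 2 * sin φ ^ 2))
    (fun k _ => |cf k| * (π/2)) ?_ ?_ ?_ ?_ ?_
  · simpa only [intervalIntegral.integral_const_mul] using H
  · intro k
    exact Continuous.aestronglyMeasurable (by fun_prop)
  · intro k
    refine Filter.Eventually.of_forall fun θ _ => ?_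
    have a2 : |cos θ ^ (2*k)| ≤ 1 := by
      rw [abs_pow]; exact pow_le_one₀ (abs_nonneg _) (abs_cos_le_one θ)
    rw [norm_eq_abs, abs_mul, abs_mul]
    calc _ ≤ |cf k| * (π/2) * 1 := by
          gcongr
          exact hb k
      _ = _ := by ring
  · exact Filter.Eventually.of_forall fun φ _ => cf_summable.mul_right _
  · exact intervalIntegrable_const
  · refine Filter.Eventually.of_forall fun θ hθ => ?_
    rw [Set.uIoc_of_le (by positivity)] at hθ
    exact inner_hasSum θ hθ.1 hθ.2



/-- `∫₀^{π/2}∫₀^{π/2} sin²φ √(1 − cos²θ sin²φ) dφ dθ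
  = (π²/8) · ₃F₂(−1/2, 1/2, 3/2; 1, 2; 1)`, the hypergeometric value being written
as an absolutely convergent series in Pochhammer symbols. -/
theorem double_integral_eq_3F2 :
    (∫ θ in (0:ℝ)..(π/2), ∫ φ in (0:ℝ)..(π/2),
        Real.sin φ ^ 2 * Real.sqrt (1 - Real.cos θ ^ 2 * Real.sin φ ^ 2))
    = (π ^ 2 / 8) *
      ∑' k : ℕ,
        ((ascPochhammer ℝ k).eval (-1/2) * (ascPochhammer ℝ k).eval (1/2) *
          (ascPochhammer ℝ k).eval (3/2)) /
        ((ascPochhammer ℝ k).eval 1 * (ascPochhammer ℝ k).eval 2 * (k.factorial : ℝ)) := by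

  rw [← outer_hasSum.tsum_eq, ← tsum_mul_left]
  congr 1; funext k
  have k1 : (ascPochhammer ℝ (k+1)).eval (1/2 : ℝ) = (1/2) * (ascPochhammer ℝ k).eval (3/2) := by
    rw [ascPochhammer_succ_left]
    simp only [Polynomial.eval_mul, Polynomial.eval_X, Polynomial.eval_comp,
      Polynomial.eval_add, Polynomial.eval_one]
    norm_num
  have k2 : (ascPochhammer ℝ k).eval (1 : ℝ) = k.factorial := ascPochhammer_eval_one ℝ k
  have k3 : (ascPochhammer ℝ k).eval (2 : ℝ) = (k+1).factorial := by
    have := ascPochhammer_eval_one ℝ (k+1)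
    rw [ascPochhammer_succ_left] at this
    simp only [Polynomial.eval_mul, Polynomial.eval_X, Polynomial.eval_comp,
      Polynomial.eval_add, Polynomial.eval_one] at this
    norm_num at this ⊢
    exact this
  rw [wallis_sin, wallis_cos, k1, k2, k3, cf]
  have h1 : (k.factorial : ℝ) ≠ 0 := by positivity
  have h2 : ((k+1).factorial : ℝ) ≠ 0 := by positivity
  field_simp
  ring
end

section
/- ∫₀^{π/2} ∫₀^{π/2} sin²φ · √(sin²θ · sin²φ + cos²φ) dθ dφ = ∫₀^{∞} ( t²/(1+t²)^{5/2} ) · ( ∫₀^{π/2} √(1 + t² sin²θ) dθ ) dt. -/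
open Real

/-- The substitution `t = tan φ` transforms the 'hard' integral of the 3-dimensional
case into an integral of the complete elliptic integral of the second kind with
imaginary modulus:
`∫₀^{π/2}∫₀^{π/2} sin²φ √(sin²θ sin²φ + cos²φ) dθ dφ
  = ∫₀^∞ t²/(1+t²)^{5/2} E(it) dt`. -/
theorem hard_integral_3d_elliptic_form :
    (∫ φ in (0:ℝ)..(π/2), ∫ θ in (0:ℝ)..(π/2),
        Real.sin φ ^ 2 * Real.sqrt (Real.sin θ ^ 2 * Real.sin φ ^ 2 + Real.cos φ ^ 2))
    = ∫ t in Set.Ioi (0:ℝ),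
        (t ^ 2 / (1 + t ^ 2) ^ ((5:ℝ)/2)) *
          ∫ θ in (0:ℝ)..(π/2), Real.sqrt (1 + t ^ 2 * Real.sin θ ^ 2) := by
  have himg : Real.arctan '' Set.Ioi (0:ℝ) = Set.Ioo 0 (π/2) := by
    ext x
    constructor
    · rintro ⟨t, ht, rfl⟩
      refine ⟨?_, Real.arctan_lt_pi_div_two t⟩
      have := Real.arctan_strictMono (Set.mem_Ioi.mp ht)
      rwa [Real.arctan_zero] at this
    · rintro ⟨h0, h1⟩
      exact ⟨Real.tan x, Real.tan_pos_of_pos_of_lt_pi_div_two h0 h1,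
        Real.arctan_tan (by linarith) h1⟩
  rw [intervalIntegral.integral_of_le (by positivity),
    MeasureTheory.integral_Ioc_eq_integral_Ioo, ← himg,
    MeasureTheory.integral_image_eq_integral_abs_deriv_smul measurableSet_Ioi
      (fun x _ => (Real.hasDerivAt_arctan x).hasDerivWithinAt)
      (Real.arctan_injective.injOn)]
  refine MeasureTheory.setIntegral_congr_fun measurableSet_Ioi ?_
  intro t _
  have hp : (0:ℝ) < 1 + t ^ 2 := by positivity
  have hpow : (1 + t ^ 2) ^ ((5:ℝ)/2) = (1 + t ^ 2) ^ 2 * Real.sqrt (1 + t ^ 2) := by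
    rw [Real.sqrt_eq_rpow, ← Real.rpow_natCast (1 + t ^ 2) 2, ← Real.rpow_add hp]
    norm_num
  simp only [smul_eq_mul]
  rw [abs_of_pos (by positivity), ← intervalIntegral.integral_const_mul,
    ← intervalIntegral.integral_const_mul]
  congr 1
  funext θ
  rw [Real.sin_sq_arctan, Real.cos_sq_arctan, hpow]
  have h : Real.sin θ ^ 2 * (t ^ 2 / (1 + t ^ 2)) + 1 / (1 + t ^ 2)
      = (1 + t ^ 2 * Real.sin θ ^ 2) / (1 + t ^ 2) := by
    field_simp
    ring
  rw [h, Real.sqrt_div (by positivity)]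
  have hs : Real.sqrt (1 + t ^ 2) ≠ 0 := (Real.sqrt_pos.mpr hp).ne'
  field_simp
end

section
/- The identity (192/π²) · ∫₀^{π/2} ∫₀^{π/2} ∫₀^{π/2} [ cos ψ · √(cos²φ · sin²ψ + cos²ψ) + cos ψ · sin ψ · √(sin²θ · sin²φ + cos²φ) ] · sin φ · sin²ψ dψ dφ dθ = 6·(1 + 4/π) holds. (This is the joint moment E(vl·ar) of the volume and surface area of the projection of a unit 4-cube onto a uniformly random 3-subspace of ℝ⁴.) -/
open Real

noncomputable def inn (ψ : ℝ) : ℝ :=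
  ∫ φ in (0:ℝ)..(π/2), Real.sqrt (Real.cos φ ^ 2 * Real.sin ψ ^ 2 + Real.cos ψ ^ 2) * Real.sin φ

lemma inn_cont : Continuous inn := by
  unfold inn
  apply intervalIntegral.continuous_parametric_intervalIntegral_of_continuous'
  simp only [Function.uncurry_def]
  fun_prop

lemma inn_eq {ψ : ℝ} (h : ψ ∈ Set.Ioo 0 (π/2)) :
    Real.sin ψ * inn ψ =
      (Real.sin ψ + Real.cos ψ ^ 2 * (Real.log (1 + Real.sin ψ) - Real.log (Real.cos ψ))) / 2 := by
  have hs : 0 < sin ψ := sin_pos_of_pos_of_lt_pi h.1 (by linarith [h.2, pi_pos])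
  have hc : 0 < cos ψ := cos_pos_of_mem_Ioo ⟨by linarith [h.1, pi_pos], h.2⟩
  have hsc := sin_sq_add_cos_sq ψ
  set s := sin ψ with hsdef
  set c := cos ψ with hcdef
  have key : ∫ φ in (0:ℝ)..(π/2), s * (√(cos φ ^ 2 * s ^ 2 + c ^ 2) * sin φ) = 
      (fun φ => -((s * cos φ) * √(cos φ ^ 2 * s ^ 2 + c ^ 2) + c ^ 2 * log (s * cos φ + √(cos φ ^ 2 * s ^ 2 + c ^ 2))) / 2) (π/2)
      - (fun φ => -((s * cos φ) * √(cos φ ^ 2 * s ^ 2 + c ^ 2) + c ^ 2 * log (s * cos φ + √(cos φ ^ 2 * s ^ 2 + c ^ 2))) / 2) 0 := by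
    refine intervalIntegral.integral_eq_sub_of_hasDerivAt (f := fun φ => -((s * cos φ) * √(cos φ ^ 2 * s ^ 2 + c ^ 2) + c ^ 2 * log (s * cos φ + √(cos φ ^ 2 * s ^ 2 + c ^ 2))) / 2) ?_ ?_
    · intro φ hφ
      rw [Set.uIcc_of_le (by positivity)] at hφ
      have hcφ : 0 ≤ cos φ := cos_nonneg_of_mem_Icc ⟨by linarith [hφ.1, pi_pos], hφ.2⟩
      have hR0 : 0 < cos φ ^ 2 * s ^ 2 + c ^ 2 := by positivity
      have hR : 0 < √(cos φ ^ 2 * s ^ 2 + c ^ 2) := Real.sqrt_pos.2 hR0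
      have hlog : 0 < s * cos φ + √(cos φ ^ 2 * s ^ 2 + c ^ 2) := by positivity
      have h1 : HasDerivAt (fun φ => cos φ ^ 2 * s ^ 2 + c ^ 2) (2 * cos φ * (-sin φ) * s ^ 2) φ := by
        have := (((hasDerivAt_cos φ).pow 2).mul_const (s ^ 2)).add_const (c ^ 2)
        refine HasDerivAt.congr_deriv (this) (Eq.symm ?_)
        simp
      have h2 := h1.sqrt hR0.ne'
      have h3 : HasDerivAt (fun φ => s * cos φ) (s * (-sin φ)) φ := (hasDerivAt_cos φ).const_mul s
      have h4 := (h3.add h2).log hlog.ne'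
      have h5 := (((h3.mul h2).add (h4.const_mul (c ^ 2))).neg).div_const 2
      refine HasDerivAt.congr_deriv (h5) (Eq.symm ?_)
      have hsq := Real.sq_sqrt hR0.le
      simp only [Pi.add_apply]
      set R := √(cos φ ^ 2 * s ^ 2 + c ^ 2)
      have hlog' := hlog.ne'
      have e : (s * -sin φ + 2 * cos φ * -sin φ * s ^ 2 / (2 * R)) / (s * cos φ + R) = - s * sin φ / R := by
        field_simp
        ring
      rw [e]
      field_simp
      linear_combination (sin φ) * hsq
    · apply Continuous.intervalIntegrable
      fun_prop
  rw [inn, ← intervalIntegral.integral_const_mul, key]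
  have e1 : √(s ^ 2 + c ^ 2) = 1 := by rw [hsc]; simp
  simp only [cos_pi_div_two, cos_zero]
  simp [e1, Real.sqrt_sq hc.le]
  rw [add_comm s 1]
  ring

lemma K_eq : ∫ ψ in (0:ℝ)..(π/2), cos ψ * sin ψ ^ 2 * inn ψ = 1/4 := by
  have key : ∫ ψ in (0:ℝ)..(π/2), cos ψ * sin ψ ^ 2 * inn ψ = 
      (fun ψ => sin ψ ^ 3 / 6 - cos ψ ^ 4 / 8 * log (1 + sin ψ) + cos ψ ^ 3 / 8 * (cos ψ * log (cos ψ))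
        + (sin ψ - sin ψ ^ 3 / 3) / 8) (π/2)
      - (fun ψ => sin ψ ^ 3 / 6 - cos ψ ^ 4 / 8 * log (1 + sin ψ) + cos ψ ^ 3 / 8 * (cos ψ * log (cos ψ))
        + (sin ψ - sin ψ ^ 3 / 3) / 8) 0 := by
    refine intervalIntegral.integral_eq_sub_of_hasDerivAt_of_le (f := fun ψ => sin ψ ^ 3 / 6 - cos ψ ^ 4 / 8 * log (1 + sin ψ) + cos ψ ^ 3 / 8 * (cos ψ * log (cos ψ))  + (sin ψ - sin ψ ^ 3 / 3) / 8) (by positivity) ?_ ?_ ?_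
    · have h1 : ContinuousOn (fun ψ => log (1 + sin ψ)) (Set.Icc 0 (π/2)) := by
        apply ContinuousOn.log
        · fun_prop
        · intro x hx
          have := sin_nonneg_of_nonneg_of_le_pi hx.1 (by linarith [hx.2, pi_pos])
          positivity
      have h2 : Continuous (fun ψ => cos ψ * log (cos ψ)) := Real.continuous_mul_log.comp continuous_cos
      have h3 := h2.continuousOn (s := Set.Icc 0 (π/2))
      refine ContinuousOn.add (ContinuousOn.add (ContinuousOn.sub ?_ (ContinuousOn.mul ?_ h1)) (ContinuousOn.mul ?_ h3)) ?_ <;> fun_prop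
    · intro ψ h
      have hs : 0 < sin ψ := sin_pos_of_pos_of_lt_pi h.1 (by linarith [h.2, pi_pos])
      have hc : 0 < cos ψ := cos_pos_of_mem_Ioo ⟨by linarith [h.1, pi_pos], h.2⟩
      have hsc := sin_sq_add_cos_sq ψ
      have h1 := (hasDerivAt_sin ψ)
      have h2 := (hasDerivAt_cos ψ)
      have h3 := (h1.const_add 1).log (by positivity)
      have h4 := h2.log hc.ne'
      have h5 := ((((h1.pow 3).div_const 6).sub (((h2.pow 4).div_const 8).mul h3)).add
        (((h2.pow 3).div_const 8).mul (h2.mul h4))).add ((h1.sub ((h1.pow 3).div_const 3)).div_const 8)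
      refine HasDerivAt.congr_deriv (h5) (Eq.symm ?_)
      have e : cos ψ * sin ψ ^ 2 * inn ψ = cos ψ * sin ψ * (sin ψ * inn ψ) := by ring
      rw [e, inn_eq h]
      simp only [Pi.pow_apply, Pi.mul_apply]
      have hs1 : 1 + sin ψ ≠ 0 := by positivity
      have e2 : cos ψ / (1 + sin ψ) = (1 - sin ψ) / cos ψ := by
        field_simp
        linear_combination hsc
      rw [e2]
      field_simp
      push_cast
      have e3 : cos ψ ^ 2 = 1 - sin ψ ^ 2 := by linarith
      generalize log (1 + sin ψ) = L at *
      generalize log (cos ψ) = M at *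
      have e4 : cos ψ ^ 4 = (1 - sin ψ ^ 2) ^ 2 := by rw [← e3]; ring
      have e5 : cos ψ ^ 3 = (1 - sin ψ ^ 2) * cos ψ := by rw [← e3]; ring
      ring_nf
      simp only [e4, e5, e3]
      ring_nf
      try simp only [e4, e5, e3]
      try ring_nf
    · apply Continuous.intervalIntegrable
      have := inn_cont
      fun_prop
  rw [key]
  simp
  norm_num

lemma den_pos {α ψ : ℝ} (hα : 0 < cos α) : 0 < 1 - sin α ^ 2 * sin ψ ^ 2 := by
  have h1 := sin_sq_add_cos_sq α
  have h2 := sin_sq_add_cos_sq ψ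
  nlinarith [sq_nonneg (sin α), sq_nonneg (cos ψ), mul_nonneg (sq_nonneg (sin α)) (sq_nonneg (cos ψ)), pow_pos hα 2]

lemma den_pos' {α ψ : ℝ} (hα : 0 < cos ψ) : 0 < 1 - sin α ^ 2 * sin ψ ^ 2 := by
  have := den_pos (α := ψ) (ψ := α) hα
  linarith

lemma inn_eq2 {ψ : ℝ} (h : ψ ∈ Set.Ioo 0 (π/2)) :
    inn ψ = 1/2 + 1/2 * ∫ α in (0:ℝ)..(π/2), cos α * cos ψ ^ 2 / (1 - sin α ^ 2 * sin ψ ^ 2) := by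
  have hs : 0 < sin ψ := sin_pos_of_pos_of_lt_pi h.1 (by linarith [h.2, pi_pos])
  have hc : 0 < cos ψ := cos_pos_of_mem_Ioo ⟨by linarith [h.1, pi_pos], h.2⟩
  have hsc := sin_sq_add_cos_sq ψ
  have hi := inn_eq h
  have key : ∫ α in (0:ℝ)..(π/2), cos α * cos ψ ^ 2 / (1 - sin α ^ 2 * sin ψ ^ 2) = 
      (fun α => cos ψ ^ 2 / (2 * sin ψ) * (log (1 + sin α * sin ψ) - log (1 - sin α * sin ψ))) (π/2)
      - (fun α => cos ψ ^ 2 / (2 * sin ψ) * (log (1 + sin α * sin ψ) - log (1 - sin α * sin ψ))) 0 := by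
    refine intervalIntegral.integral_eq_sub_of_hasDerivAt (f := fun α => cos ψ ^ 2 / (2 * sin ψ) * (log (1 + sin α * sin ψ) - log (1 - sin α * sin ψ))) ?_ ?_
    · intro α _
      have hd := den_pos' (α := α) hc
      have hfac : 0 < (1 - sin α * sin ψ) * (1 + sin α * sin ψ) := by nlinarith
      have hp : 1 + sin α * sin ψ ≠ 0 := right_ne_zero_of_mul hfac.ne'
      have hm : 1 - sin α * sin ψ ≠ 0 := left_ne_zero_of_mul hfac.ne'
      have h1 := (hasDerivAt_sin α).mul_const (sin ψ)
      have h2 := (((h1.const_add 1).log hp).sub ((h1.const_sub 1).log hm)).const_mul (cos ψ ^ 2 / (2 * sin ψ))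
      refine HasDerivAt.congr_deriv (h2) (Eq.symm ?_)
      have e : 1 - sin α ^ 2 * sin ψ ^ 2 = (1 - sin α * sin ψ) * (1 + sin α * sin ψ) := by ring
      rw [e]
      field_simp
      ring
    · apply Continuous.intervalIntegrable
      apply Continuous.div (by fun_prop) (by fun_prop)
      intro α
      exact (den_pos' hc).ne'
  rw [key]
  have hs1 : sin ψ < 1 := by nlinarith [pow_pos hc 2]
  have hl : 2 * log (cos ψ) = log (1 - sin ψ) + log (1 + sin ψ) := by
    rw [← Real.log_mul (by linarith) (by positivity), ← Real.log_rpow hc]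
    congr 1
    norm_num
    linarith
  simp
  apply mul_left_cancel₀ hs.ne'
  rw [hi]
  field_simp
  linear_combination (-cos ψ ^ 2) * hl

lemma psi_int {α : ℝ} (h : α ∈ Set.Ioo 0 (π/2)) :
    ∫ ψ in (0:ℝ)..(π/2), cos α * cos ψ ^ 2 / (1 - sin α ^ 2 * sin ψ ^ 2)
      = π/2 * (cos α / (1 + cos α)) := by
  have hs : 0 < sin α := sin_pos_of_pos_of_lt_pi h.1 (by linarith [h.2, pi_pos])
  have hb : 0 < cos α := cos_pos_of_mem_Ioo ⟨by linarith [h.1, pi_pos], h.2⟩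
  have hsb := sin_sq_add_cos_sq α
  have hsb' : sin α ^ 2 = 1 - cos α ^ 2 := by linarith
  have hb1 : 1 - cos α ≠ 0 := by nlinarith [pow_pos hs 2]
  have hden : ∀ ψ, 0 < 1 - sin α ^ 2 * sin ψ ^ 2 := fun ψ => den_pos hb
  rw [hsb'] at *
  set b := cos α with hbdef
  have key : ∫ ψ in (0:ℝ)..(π/2), b * cos ψ ^ 2 / (1 - (1 - b ^ 2) * sin ψ ^ 2) =
      (fun ψ => b / (1 + b) * (ψ + b / (1 - b) * arctan ((1 - b) * (sin ψ * cos ψ) / (cos ψ ^ 2 + b * sin ψ ^ 2)))) (π/2)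
      - (fun ψ => b / (1 + b) * (ψ + b / (1 - b) * arctan ((1 - b) * (sin ψ * cos ψ) / (cos ψ ^ 2 + b * sin ψ ^ 2)))) 0 := by
    refine intervalIntegral.integral_eq_sub_of_hasDerivAt (f := fun ψ => b / (1 + b) * (ψ + b / (1 - b) * arctan ((1 - b) * (sin ψ * cos ψ) / (cos ψ ^ 2 + b * sin ψ ^ 2)))) ?_ ?_
    · intro ψ _
      have hd := hden ψ
      have hsc := sin_sq_add_cos_sq ψ
      have hq : 0 < cos ψ ^ 2 + b * sin ψ ^ 2 := by
        rcases eq_or_ne (sin ψ) 0 with h0 | h0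
        · rw [h0] at hsc ⊢; nlinarith
        · positivity
      have h1 := hasDerivAt_sin ψ
      have h2 := hasDerivAt_cos ψ
      have h3 := (((h1.mul h2).const_mul (1 - b)).div ((h2.pow 2).add ((h1.pow 2).const_mul b)) hq.ne').arctan
      have h4 := (((hasDerivAt_id ψ).add (h3.const_mul (b / (1 - b)))).const_mul (b / (1 + b)))
      refine HasDerivAt.congr_deriv (h4) (Eq.symm ?_)
      simp only [Pi.add_apply, Pi.mul_apply, Pi.pow_apply, Pi.div_apply]
      set s := sin ψ
      set c := cos ψ
      have hd2 : 0 < c ^ 2 + b ^ 2 * s ^ 2 := by nlinarith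
      have e0 : 1 - (1 - b ^ 2) * s ^ 2 = c ^ 2 + b ^ 2 * s ^ 2 := by linear_combination -hsc
      have e1 : 1 + ((1 - b) * (s * c) / (c ^ 2 + b * s ^ 2)) ^ 2 = (c ^ 2 + b ^ 2 * s ^ 2) / (c ^ 2 + b * s ^ 2) ^ 2 := by
        field_simp
        linear_combination (c ^ 2 + b ^ 2 * s ^ 2) * hsc
      rw [e0, e1]
      have hb2 : 1 + b ≠ 0 := by positivity
      push_cast
      have e2 : c ^ 2 = 1 - s ^ 2 := by linarith
      have e3 : c ^ 4 = (1 - s ^ 2) ^ 2 := by rw [← e2]; ring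
      field_simp
      ring_nf
      simp only [e2, e3]
      ring_nf
    · apply Continuous.intervalIntegrable
      apply Continuous.div (by fun_prop) (by fun_prop)
      intro ψ
      exact (hden ψ).ne'
  rw [key]
  simp
  ring

lemma alpha_int : ∫ α in (0:ℝ)..(π/2), π/2 * (cos α / (1 + cos α)) = π/2 * (π/2 - 1) := by
  have hp : ∀ α ∈ Set.uIcc (0:ℝ) (π/2), 1 + cos α ≠ 0 := by
    intro α hα
    rw [Set.uIcc_of_le (by positivity)] at hα
    have hcφ : 0 ≤ cos α := cos_nonneg_of_mem_Icc ⟨by linarith [hα.1, pi_pos], hα.2⟩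
    positivity
  have key : ∫ α in (0:ℝ)..(π/2), (cos α / (1 + cos α)) =
      (fun α => α - sin α / (1 + cos α)) (π/2) - (fun α => α - sin α / (1 + cos α)) 0 := by
    refine intervalIntegral.integral_eq_sub_of_hasDerivAt (f := fun α => α - sin α / (1 + cos α)) ?_ ?_
    · intro α hα
      have h0 := hp α hα
      have h1 := (hasDerivAt_id α).sub ((hasDerivAt_sin α).div ((hasDerivAt_cos α).const_add 1) h0)
      refine HasDerivAt.congr_deriv (h1) (Eq.symm ?_)
      field_simp
      linear_combination (sin_sq_add_cos_sq α)
    · apply ContinuousOn.intervalIntegrable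
      exact ContinuousOn.div (by fun_prop) (by fun_prop) hp
  rw [intervalIntegral.integral_const_mul, key]
  simp

lemma J_eq : ∫ ψ in (0:ℝ)..(π/2), inn ψ = π ^ 2 / 8 := by
  have hpi : (0:ℝ) ≤ π/2 := by positivity
  set F : ℝ → ℝ → ℝ := fun ψ α => cos α * cos ψ ^ 2 / (1 - sin α ^ 2 * sin ψ ^ 2) with hF
  have hint : MeasureTheory.IntegrableOn F.uncurry (Set.uIoc 0 (π/2) ×ˢ Set.uIoc 0 (π/2)) := by
    apply MeasureTheory.Measure.integrableOn_of_bounded (M := 1)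
    · rw [MeasureTheory.Measure.volume_eq_prod, MeasureTheory.Measure.prod_prod]
      simp [Set.uIoc_of_le hpi, ENNReal.mul_eq_top]
    · apply Measurable.aestronglyMeasurable
      simp only [hF, Function.uncurry_def]
      fun_prop
    · refine Filter.Eventually.of_forall ?_
      rintro ⟨ψ, α⟩
      simp only [hF, Function.uncurry_def, Real.norm_eq_abs, abs_div, abs_mul]
      have h1 := sin_sq_add_cos_sq α
      have h2 := sin_sq_add_cos_sq ψ
      have h3 := abs_cos_le_one α
      have h4 : cos ψ ^ 2 ≤ 1 - sin α ^ 2 * sin ψ ^ 2 := by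
        nlinarith [mul_nonneg (sq_nonneg (cos α)) (sq_nonneg (sin ψ))]
      have h5 : 0 ≤ 1 - sin α ^ 2 * sin ψ ^ 2 := le_trans (sq_nonneg _) h4
      rw [abs_of_nonneg h5, abs_of_nonneg (sq_nonneg (cos ψ))]
      apply div_le_one_of_le₀ _ h5
      nlinarith [sq_nonneg (cos ψ)]
  have hswap := MeasureTheory.intervalIntegral_intervalIntegral_swap hint
  have e1 : ∫ α in (0:ℝ)..(π/2), ∫ ψ in (0:ℝ)..(π/2), F ψ α = π/2 * (π/2 - 1) := by
    rw [← alpha_int]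
    exact intervalIntegral.integral_congr_Ioo_of_le hpi fun α hα => psi_int hα
  have e2 : ∫ ψ in (0:ℝ)..(π/2), (2 * inn ψ - 1) = ∫ ψ in (0:ℝ)..(π/2), ∫ α in (0:ℝ)..(π/2), F ψ α := by
    refine intervalIntegral.integral_congr_Ioo_of_le hpi fun ψ hψ => ?_
    have := inn_eq2 hψ
    simp only [hF]
    linarith
  rw [hswap, e1, intervalIntegral.integral_sub, intervalIntegral.integral_const_mul] at e2
  · simp at e2
    linarith
  · apply Continuous.intervalIntegrable
    have := inn_cont
    fun_prop
  · simp

lemma K2_eq : ∫ φ in (0:ℝ)..(π/2), ∫ ψ in (0:ℝ)..(π/2),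
    cos ψ * √(cos φ ^ 2 * sin ψ ^ 2 + cos ψ ^ 2) * sin φ * sin ψ ^ 2 = 1/4 := by
  rw [MeasureTheory.intervalIntegral_intervalIntegral_swap, ← K_eq]
  · congr 1
    ext ψ
    rw [inn, ← intervalIntegral.integral_const_mul]
    congr 1
    ext φ
    ring
  · have : Continuous (Function.uncurry fun φ ψ : ℝ => cos ψ * √(cos φ ^ 2 * sin ψ ^ 2 + cos ψ ^ 2) * sin φ * sin ψ ^ 2) := by
      simp only [Function.uncurry_def]
      fun_prop
    refine (this.continuousOn.integrableOn_compact (isCompact_uIcc.prod isCompact_uIcc)).mono_set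
      (Set.prod_mono Set.uIoc_subset_uIcc Set.uIoc_subset_uIcc)

lemma quarter : ∫ ψ in (0:ℝ)..(π/2), cos ψ * sin ψ ^ 3 = 1/4 := by
  have : ∫ ψ in (0:ℝ)..(π/2), cos ψ * sin ψ ^ 3 = (fun ψ => sin ψ ^ 4 / 4) (π/2) - (fun ψ => sin ψ ^ 4 / 4) 0 := by
    refine intervalIntegral.integral_eq_sub_of_hasDerivAt (f := fun ψ => sin ψ ^ 4 / 4) ?_ ?_
    · intro ψ _
      refine HasDerivAt.congr_deriv (((hasDerivAt_sin ψ).pow 4).div_const 4) (Eq.symm ?_)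
      push_cast
      ring
    · apply Continuous.intervalIntegrable
      fun_prop
  rw [this]
  simp

/-- The joint moment `E(vl·ar)` of the volume and surface area of the projection of
a unit 4-cube onto a uniformly random 3-subspace of `ℝ⁴` equals `6(1 + 4/π)`. -/
theorem joint_moment_volume_surface_area_projection_4cube :
    (192 / π ^ 2) *
      (∫ θ in (0:ℝ)..(π/2), ∫ φ in (0:ℝ)..(π/2), ∫ ψ in (0:ℝ)..(π/2),
        (Real.cos ψ * Real.sqrt (Real.cos φ ^ 2 * Real.sin ψ ^ 2 + Real.cos ψ ^ 2)
          + Real.cos ψ * Real.sin ψ *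
            Real.sqrt (Real.sin θ ^ 2 * Real.sin φ ^ 2 + Real.cos φ ^ 2)) *
          Real.sin φ * Real.sin ψ ^ 2)
    = 6 * (1 + 4 / π) := by
  have h1 : ∀ θ φ : ℝ, (∫ ψ in (0:ℝ)..(π/2),
        (Real.cos ψ * Real.sqrt (Real.cos φ ^ 2 * Real.sin ψ ^ 2 + Real.cos ψ ^ 2)
          + Real.cos ψ * Real.sin ψ *
            Real.sqrt (Real.sin θ ^ 2 * Real.sin φ ^ 2 + Real.cos φ ^ 2)) *
          Real.sin φ * Real.sin ψ ^ 2) =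
      (∫ ψ in (0:ℝ)..(π/2), cos ψ * √(cos φ ^ 2 * sin ψ ^ 2 + cos ψ ^ 2) * sin φ * sin ψ ^ 2)
      + 1/4 * (√(cos φ ^ 2 * sin (π/2 - θ) ^ 2 + cos (π/2 - θ) ^ 2) * sin φ) := by
    intro θ φ
    rw [← quarter, ← intervalIntegral.integral_mul_const, ← intervalIntegral.integral_add]
    · congr 1
      ext ψ
      have : cos φ ^ 2 * sin (π/2 - θ) ^ 2 + cos (π/2 - θ) ^ 2 = sin θ ^ 2 * sin φ ^ 2 + cos φ ^ 2 := by
        rw [sin_pi_div_two_sub, cos_pi_div_two_sub, sin_sq φ, cos_sq' θ]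
        ring
      rw [this]
      ring
    · apply Continuous.intervalIntegrable
      fun_prop
    · apply Continuous.intervalIntegrable
      fun_prop
  have h2 : ∀ θ : ℝ, (∫ φ in (0:ℝ)..(π/2), ((∫ ψ in (0:ℝ)..(π/2), cos ψ * √(cos φ ^ 2 * sin ψ ^ 2 + cos ψ ^ 2) * sin φ * sin ψ ^ 2)
      + 1/4 * (√(cos φ ^ 2 * sin (π/2 - θ) ^ 2 + cos (π/2 - θ) ^ 2) * sin φ))) = 1/4 + 1/4 * inn (π/2 - θ) := by
    intro θ
    rw [intervalIntegral.integral_add, K2_eq, intervalIntegral.integral_const_mul, inn]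
    · apply Continuous.intervalIntegrable
      apply intervalIntegral.continuous_parametric_intervalIntegral_of_continuous'
      simp only [Function.uncurry_def]
      fun_prop
    · apply Continuous.intervalIntegrable
      fun_prop
  have h3 : ∫ θ in (0:ℝ)..(π/2), (1/4 + 1/4 * inn (π/2 - θ)) = π/8 + π^2/32 := by
    rw [intervalIntegral.integral_add, intervalIntegral.integral_const_mul,
      intervalIntegral.integral_comp_sub_left]
    · simp only [sub_self, sub_zero, J_eq]
      simp
      ring
    · simp
    · apply Continuous.intervalIntegrable
      have := inn_cont
      fun_prop
  simp_rw [h1, h2]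
  rw [h3]
  field_simp
  ring
end

section
/- Let G := Σ_{k=0}^{∞} (−1)^k/(2k+1)² (Catalan's constant). Then (96/π²) · ∫₀^{π/2} ∫₀^{π/2} ∫₀^{π/2} [ √(cos²φ · sin²ψ + cos²ψ) + sin ψ · √(sin²θ · sin²φ + cos²φ) ] · sin ψ · sin φ · sin²ψ dψ dφ dθ = 3(5 + 2G)/π + 9π/4. (This is the joint moment E(ar·mw) of the surface area and mean width of the projection of a unit 4-cube onto a uniformly random 3-subspace of ℝ⁴.) -/
open Real

lemma arctan_int : ∫ t in (0:ℝ)..1, arctan t / t = ∑' k : ℕ, (-1 : ℝ) ^ k / (2 * (k : ℝ) + 1) ^ 2 := by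
  have h1 : ∀ n : ℕ, ∫ t in (0:ℝ)..1, t ^ (2*n) / (2 * (n:ℝ) + 1) = 1 / (2 * (n : ℝ) + 1) ^ 2 := by
    intro n
    rw [intervalIntegral.integral_div, integral_pow]
    push_cast
    field_simp
    simp
  have hs : Summable (fun n : ℕ => 1 / (2 * (n : ℝ) + 1) ^ 2) := by
    have := (Real.summable_one_div_nat_pow (p := 2)).2 (by norm_num)
    have := this.comp_injective (i := fun n : ℕ => 2 * n + 1) (fun a b h => by simpa using h)
    refine this.congr fun n => ?_
    simp
  have := MeasureTheory.hasSum_integral_of_summable_integral_norm (μ := MeasureTheory.volume.restrict (Set.Ioc (0:ℝ) 1))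
    (F := fun (n : ℕ) t => (-1 : ℝ) ^ n * (t ^ (2*n) / (2 * (n:ℝ) + 1))) ?_ ?_
  · have h2 := this.tsum_eq
    rw [intervalIntegral.integral_of_le zero_le_one]
    trans ∫ a in Set.Ioc (0:ℝ) 1, ∑' (i : ℕ), (-1 : ℝ) ^ i * (a ^ (2*i) / (2 * (i:ℝ) + 1))
    · rw [MeasureTheory.integral_Ioc_eq_integral_Ioo, MeasureTheory.integral_Ioc_eq_integral_Ioo]
      refine MeasureTheory.setIntegral_congr_fun measurableSet_Ioo fun t ht => ?_
      have := (Real.hasSum_arctan (x := t) (by rw [norm_eq_abs, abs_of_pos ht.1]; exact ht.2)).div_const t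
      rw [← this.tsum_eq]
      refine tsum_congr fun i => ?_
      have := ht.1.ne'
      push_cast
      field_simp
      ring
    · rw [← h2]
      refine tsum_congr fun i => ?_
      rw [← intervalIntegral.integral_of_le zero_le_one, intervalIntegral.integral_const_mul, h1]
      ring
  · intro n
    refine (Continuous.integrableOn_Ioc ?_)
    fun_prop
  · refine hs.congr fun n => ?_
    rw [← h1, intervalIntegral.integral_of_le zero_le_one]
    refine MeasureTheory.setIntegral_congr_fun measurableSet_Ioc fun t ht => ?_
    simp only [norm_mul, norm_pow, norm_neg, norm_one, one_pow, one_mul, norm_eq_abs]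
    rw [abs_of_nonneg]
    have := ht.1
    positivity

lemma sinc_pos' {x : ℝ} (h0 : 0 ≤ x) (h1 : x ≤ π/2) : 0 < sinc x := by
  rcases h0.eq_or_lt with rfl | h
  · simp
  · rw [sinc_of_ne_zero h.ne']
    exact div_pos (sin_pos_of_pos_of_lt_pi h (by linarith [pi_pos])) h

lemma sinc_int : ∫ x in (0:ℝ)..(π/2), (sinc x)⁻¹ = 2 * ∫ t in (0:ℝ)..1, arctan t / t := by
  have := intervalIntegral.integral_comp_mul_deriv' (a := 0) (b := 1) (f := fun t => 2 * arctan t)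
    (f' := fun t => 2 * (1 / (1+t^2))) (g := fun x => (sinc x)⁻¹) (fun x _ => (hasDerivAt_arctan x).const_mul 2)
    (by 
      refine Continuous.continuousOn ?_
      have : ∀ t : ℝ, 1 + t^2 ≠ 0 := fun t => by positivity
      fun_prop (disch := assumption)) ?_
  · have e : 2 * (π/4) = π/2 := by ring
    simp only [arctan_zero, arctan_one, mul_zero, e] at this
    rw [← this, ← intervalIntegral.integral_const_mul]
    refine intervalIntegral.integral_congr_Ioo_of_le zero_le_one fun t ht => ?_
    have h0 : 0 < arctan t := by simpa using arctan_strictMono ht.1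
    have h1 := ht.1
    simp only [Function.comp]
    rw [sinc_of_ne_zero (by positivity), sin_two_mul]
    have h3 : sin (arctan t) = t * cos (arctan t) := by
      rw [sin_arctan, cos_arctan]; ring
    have h4 : 0 < cos (arctan t) := cos_arctan_pos t
    have h5 : cos (arctan t) ^ 2 = 1 / (1 + t^2) := cos_sq_arctan t
    rw [h3, ← h5]
    field_simp
  · refine ContinuousOn.inv₀ continuous_sinc.continuousOn ?_
    rintro x ⟨t, ht, rfl⟩
    rw [Set.uIcc_of_le zero_le_one] at ht
    have a1 : 0 ≤ arctan t := by simpa using arctan_strictMono.monotone ht.1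
    have a2 : arctan t ≤ π/4 := by simpa using arctan_strictMono.monotone ht.2
    exact (sinc_pos' (by positivity) (by linarith)).ne'

lemma arsinh_le' {x : ℝ} (h : 0 ≤ x) : arsinh x ≤ x := by
  have h1 : arsinh x ≤ sinh (arsinh x) := self_le_sinh_iff.2 (arsinh_nonneg_iff.2 h)
  simpa using h1

noncomputable def Q (x : ℝ) : ℝ := (sinc x)⁻¹ / 8 - cos x * cos (2*x) / 8

lemma Q_cont : ContinuousOn Q (Set.Icc 0 (π/2)) := by
  unfold Q
  refine ContinuousOn.sub (ContinuousOn.div_const (ContinuousOn.inv₀ continuous_sinc.continuousOn ?_) _) (by fun_prop)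
  intro x hx
  exact (sinc_pos' hx.1 hx.2).ne'

lemma Q_eq {x : ℝ} (h0 : 0 < x) (h1 : x ≤ π/2) : x/8 - sin (4*x)/32 = Q x * sin x := by
  have hs : 0 < sin x := sin_pos_of_pos_of_lt_pi h0 (by linarith [pi_pos])
  unfold Q
  rw [sinc_of_ne_zero h0.ne', show 4 * x = 2 * (2*x) by ring, sin_two_mul, sin_two_mul]
  field_simp
  ring

lemma K_int : ∫ x in (0:ℝ)..(π/2), sin x ^ 2 * cos x ^ 2 * arsinh (cos x / sin x) 
    = ∫ x in (0:ℝ)..(π/2), Q x ∧ 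
    IntervalIntegrable (fun x => sin x ^ 2 * cos x ^ 2 * arsinh (cos x / sin x)) MeasureTheory.volume 0 (π/2) := by
  have hpi : (0:ℝ) ≤ π/2 := by positivity
  have hsp : ∀ x ∈ Set.Ioc 0 (π/2), 0 < sin x := fun x hx => 
    sin_pos_of_pos_of_lt_pi hx.1 (by linarith [pi_pos, hx.2])
  have hcp : ∀ x ∈ Set.Icc 0 (π/2), 0 ≤ cos x := fun x hx => 
    cos_nonneg_of_neg_pi_div_two_le_of_le (by linarith [hx.1]) hx.2
  have hB : ∀ x ∈ Set.Ioc 0 (π/2), 0 ≤ arsinh (cos x / sin x) ∧ arsinh (cos x / sin x) * sin x ≤ 1 := by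
    intro x hx
    have h1 := hsp x hx
    have h2 := hcp x ⟨hx.1.le, hx.2⟩
    refine ⟨arsinh_nonneg_iff.2 (by positivity), ?_⟩
    calc _ ≤ cos x / sin x * sin x := by gcongr; exact arsinh_le' (by positivity)
      _ = cos x := by field_simp
      _ ≤ 1 := cos_le_one x
  have key : ∀ f g : ℝ → ℝ, ContinuousOn f (Set.Icc 0 (π/2)) → ContinuousOn g (Set.Icc 0 (π/2)) → g 0 = 0 → f 0 = 0 → 
      (∀ x ∈ Set.Ioc 0 (π/2), f x = g x * sin x) → 
      ContinuousOn (fun x => f x * arsinh (cos x / sin x)) (Set.Icc 0 (π/2)) := by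
    intro f g hf hg hg0 hf0 hfg x hx
    rcases hx.1.eq_or_lt with rfl | h
    · unfold ContinuousWithinAt
      simp only [hf0, zero_mul]
      have t1 : Filter.Tendsto (fun x => |g x|) (nhdsWithin 0 (Set.Icc 0 (π/2))) (nhds 0) := by
        have := (hg 0 hx).abs
        unfold ContinuousWithinAt at this
        simpa [hg0] using this
      refine squeeze_zero_norm' ?_ t1
      filter_upwards [self_mem_nhdsWithin] with y hy
      rcases hy.1.eq_or_lt with rfl | h
      · simp [hf0]
      · obtain ⟨b1, b2⟩ := hB y ⟨h, hy.2⟩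
        rw [hfg y ⟨h, hy.2⟩, norm_eq_abs, mul_assoc, abs_mul, abs_of_nonneg (mul_nonneg (hsp y ⟨h, hy.2⟩).le b1)]
        nlinarith [abs_nonneg (g y)]
    · have := (hsp x ⟨h, hx.2⟩).ne'
      refine (hf x hx).mul (ContinuousAt.continuousWithinAt ?_)
      fun_prop (disch := assumption)
  have c1 := key (fun x => x/8 - sin (4*x)/32) Q (by fun_prop) Q_cont (by simp [Q]) (by simp) 
    (fun x hx => Q_eq hx.1 hx.2)
  have c2 := key (fun x => sin x ^ 2 * cos x ^ 2) (fun x => sin x * cos x ^ 2) (by fun_prop) (by fun_prop) (by simp) (by simp) 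
    (fun x hx => by ring)
  have i2 : IntervalIntegrable (fun x => sin x ^ 2 * cos x ^ 2 * arsinh (cos x / sin x)) MeasureTheory.volume 0 (π/2) :=
    ContinuousOn.intervalIntegrable_of_Icc hpi c2
  have i1 : IntervalIntegrable Q MeasureTheory.volume 0 (π/2) :=
    ContinuousOn.intervalIntegrable_of_Icc hpi Q_cont
  refine ⟨?_, i2⟩
  have ftc := intervalIntegral.integral_eq_sub_of_hasDerivAt_of_le hpi c1 
    (f' := fun x => sin x ^ 2 * cos x ^ 2 * arsinh (cos x / sin x) - Q x) ?_ (i2.sub i1)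
  · rw [intervalIntegral.integral_sub i2 i1] at ftc
    simp at ftc
    linarith
  · intro x hx
    have hs := hsp x ⟨hx.1, hx.2.le⟩
    have d1 : HasDerivAt (fun x => x/8 - sin (4*x)/32) (1/8 - cos (4*x) * (4*1) / 32) x :=
      ((hasDerivAt_id x).div_const 8).sub ((((hasDerivAt_id x).const_mul 4).sin).div_const 32)
    have d2 := ((hasDerivAt_cos x).div (hasDerivAt_sin x) hs.ne').arsinh
    refine (d1.mul d2).congr_deriv ?_
    have e1 : √(1 + (cos x / sin x)^2) = 1 / sin x := by
      rw [show 1 + (cos x / sin x)^2 = (1 / sin x)^2 by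
        field_simp; exact sin_sq_add_cos_sq x]
      exact sqrt_sq (by positivity)
    simp only [Pi.div_apply]
    rw [Q_eq hx.1 hx.2.le, e1, show 4 * x = 2 * (2*x) by ring, cos_two_mul (2*x), cos_two_mul x]
    have := sin_sq x
    simp only [smul_eq_mul]
    have e3 : (-sin x * sin x - cos x * cos x) = -1 := by linarith [sin_sq_add_cos_sq x]
    have e4 : Q x * sin x * ((1 / sin x)⁻¹ * (-1 / sin x ^ 2)) = - Q x := by
      field_simp
    rw [e3, e4, this]
    ring

lemma Q_int : ∫ x in (0:ℝ)..(π/2), Q x = (∑' k : ℕ, (-1 : ℝ) ^ k / (2 * (k : ℝ) + 1) ^ 2) / 4 - 1/24 := by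
  have hpi : (0:ℝ) ≤ π/2 := by positivity
  unfold Q
  rw [intervalIntegral.integral_sub, intervalIntegral.integral_div, sinc_int, arctan_int]
  · have : ∫ x in (0:ℝ)..(π/2), cos x * cos (2*x) / 8 = 1/24 := by
      rw [intervalIntegral.integral_eq_sub_of_hasDerivAt (f := fun x => (sin x - 2/3 * sin x ^ 3)/8)]
      · simp; norm_num
      · intro x _
        refine (((hasDerivAt_sin x).sub (((hasDerivAt_sin x).pow 3).const_mul (2/3))).div_const 8).congr_deriv ?_
        rw [cos_two_mul, cos_sq']; push_cast; ring
      · apply Continuous.intervalIntegrable; fun_prop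
    rw [this]; ring
  · refine ContinuousOn.intervalIntegrable_of_Icc hpi ?_
    refine (ContinuousOn.div_const (ContinuousOn.inv₀ continuous_sinc.continuousOn ?_) _)
    intro x hx
    exact (sinc_pos' hx.1 hx.2).ne'
  · apply Continuous.intervalIntegrable; fun_prop

lemma inner_int_s17 {s c : ℝ} (hs : 0 < s) (hc : 0 < c) (h : s^2 + c^2 = 1) :
    ∫ φ in (0:ℝ)..(π/2), √(cos φ ^ 2 * s ^ 2 + c ^ 2) * sin φ = 1/2 * (1 + c^2 / s * arsinh (s / c)) := by
  have hd : ∀ u : ℝ, HasDerivAt (fun u => 1/2 * (u * √(u^2 * s^2 + c^2) + c^2/s * arsinh (u * s / c)))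
      (√(u^2 * s^2 + c^2)) u := by
    intro u
    have hp : 0 < u^2 * s^2 + c^2 := by positivity
    have d1 : HasDerivAt (fun u : ℝ => u^2 * s^2 + c^2) (2 * u * s^2) u := by
      simpa using (((hasDerivAt_id u).pow 2).mul_const (s^2)).add_const (c^2)
    have d2 : HasDerivAt (fun u : ℝ => u * s / c) (1 * s / c) u := 
      ((hasDerivAt_id u).mul_const s).div_const c
    have d := (((hasDerivAt_id u).mul (d1.sqrt hp.ne')).add ((d2.arsinh).const_mul (c^2/s))).const_mul (1/2)
    refine d.congr_deriv ?_
    have e1 : √(1 + (u * s / c)^2) = √(u^2 * s^2 + c^2) / c := by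
      rw [show 1 + (u * s / c)^2 = (u^2 * s^2 + c^2) / c^2 by field_simp; ring]
      rw [sqrt_div hp.le, sqrt_sq hc.le]
    rw [e1]
    have hr : 0 < √(u^2 * s^2 + c^2) := sqrt_pos.2 hp
    have hr2 : √(u^2 * s^2 + c^2) ^ 2 = u^2 * s^2 + c^2 := sq_sqrt hp.le
    simp only [id, smul_eq_mul]
    generalize √(u^2 * s^2 + c^2) = r at *
    field_simp
    linarith
  rw [intervalIntegral.integral_eq_sub_of_hasDerivAt 
    (f := fun φ => -(1/2 * (cos φ * √(cos φ^2 * s^2 + c^2) + c^2/s * arsinh (cos φ * s / c))))]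
  · simp [h]
  · intro φ _
    refine (((hd (cos φ)).comp φ (hasDerivAt_cos φ)).neg).congr_deriv ?_
    ring
  · apply Continuous.intervalIntegrable; fun_prop

lemma J_int : ∫ φ in (0:ℝ)..(π/2), ∫ ψ in (0:ℝ)..(π/2), √(cos φ ^ 2 * sin ψ ^ 2 + cos ψ ^ 2) * sin ψ * sin φ * sin ψ ^ 2
    = (5 + 2 * ∑' k : ℕ, (-1 : ℝ) ^ k / (2 * (k : ℝ) + 1) ^ 2) / 16 := by
  have hpi : (0:ℝ) ≤ π/2 := by positivity
  have sw : ∫ φ in (0:ℝ)..(π/2), ∫ ψ in (0:ℝ)..(π/2), √(cos φ ^ 2 * sin ψ ^ 2 + cos ψ ^ 2) * sin ψ * sin φ * sin ψ ^ 2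
     = ∫ ψ in (0:ℝ)..(π/2), ∫ φ in (0:ℝ)..(π/2), √(cos φ ^ 2 * sin ψ ^ 2 + cos ψ ^ 2) * sin ψ * sin φ * sin ψ ^ 2 := by
    simp only [intervalIntegral.integral_of_le hpi]
    refine MeasureTheory.integral_integral_swap ?_
    rw [MeasureTheory.Measure.prod_restrict]
    refine MeasureTheory.IntegrableOn.mono_set (t := Set.Icc 0 (π/2) ×ˢ Set.Icc 0 (π/2)) ?_ 
      (Set.prod_mono Set.Ioc_subset_Icc_self Set.Ioc_subset_Icc_self)
    refine ContinuousOn.integrableOn_compact (isCompact_Icc.prod isCompact_Icc) ?_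
    unfold Function.uncurry
    fun_prop
  rw [sw]
  have e : ∫ ψ in (0:ℝ)..(π/2), ∫ φ in (0:ℝ)..(π/2), √(cos φ ^ 2 * sin ψ ^ 2 + cos ψ ^ 2) * sin ψ * sin φ * sin ψ ^ 2
    = ∫ ψ in (0:ℝ)..(π/2), (1/2 * sin ψ ^ 3 + 1/2 * (sin ψ ^ 2 * cos ψ ^ 2 * arsinh (sin ψ / cos ψ))) := by
    refine intervalIntegral.integral_congr_Ioo_of_le hpi fun ψ hψ => ?_
    have hs : 0 < sin ψ := sin_pos_of_pos_of_lt_pi hψ.1 (by linarith [pi_pos, hψ.2])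
    have hc : 0 < cos ψ := cos_pos_of_mem_Ioo ⟨by linarith [hψ.1], hψ.2⟩
    have := inner_int_s17 hs hc (sin_sq_add_cos_sq ψ)
    trans ∫ φ in (0:ℝ)..(π/2), sin ψ ^ 3 * (√(cos φ ^ 2 * sin ψ ^ 2 + cos ψ ^ 2) * sin φ)
    · congr 1; ext φ; ring
    · rw [intervalIntegral.integral_const_mul, this]
      field_simp
  have r := intervalIntegral.integral_comp_sub_left (a := 0) (b := π/2) 
    (fun ψ => (1/2 * sin ψ ^ 3 + 1/2 * (sin ψ ^ 2 * cos ψ ^ 2 * arsinh (sin ψ / cos ψ)))) (π/2)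
  simp only [sub_self, sub_zero, sin_pi_div_two_sub, cos_pi_div_two_sub] at r
  rw [e, ← r]
  have i2 : IntervalIntegrable (fun x => 1/2 * (cos x ^ 2 * sin x ^ 2 * arsinh (cos x / sin x))) MeasureTheory.volume 0 (π/2) := by
    refine (K_int.2.const_mul (1/2)).congr fun x _ => ?_
    ring
  rw [intervalIntegral.integral_add ?_ i2]
  · rw [intervalIntegral.integral_const_mul, integral_cos_pow_three]
    have : ∫ x in (0:ℝ)..(π/2), 1/2 * (cos x ^ 2 * sin x ^ 2 * arsinh (cos x / sin x)) = 
        1/2 * ∫ x in (0:ℝ)..(π/2), sin x ^ 2 * cos x ^ 2 * arsinh (cos x / sin x) := by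
      rw [← intervalIntegral.integral_const_mul]
      congr 1; ext x; ring
    rw [this, K_int.1, Q_int]
    simp
    ring
  · apply Continuous.intervalIntegrable; fun_prop

lemma W_prod (n : ℕ) : (∫ x in (0:ℝ)..(π/2), sin x ^ (n+1)) * (∫ x in (0:ℝ)..(π/2), cos x ^ n) = π / 2 / (n+1) := by
  induction n with
  | zero => simp
  | succ n ih =>
    rw [integral_sin_pow]
    have : ∫ x in (0:ℝ)..(π/2), cos x ^ (n+1) = ∫ x in (0:ℝ)..(π/2), sin x ^ (n+1) := by
      have r := intervalIntegral.integral_comp_sub_left (a := 0) (b := π/2) (fun x => cos x ^ (n+1)) (π/2)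
      simpa [cos_pi_div_two_sub] using r.symm
    have h2 : ∫ x in (0:ℝ)..(π/2), cos x ^ n = ∫ x in (0:ℝ)..(π/2), sin x ^ n := by
      have r := intervalIntegral.integral_comp_sub_left (a := 0) (b := π/2) (fun x => cos x ^ n) (π/2)
      simpa [cos_pi_div_two_sub] using r.symm
    rw [this]
    rw [h2] at ih
    have e : (∫ x in (0:ℝ)..(π/2), sin x ^ n) * (∫ x in (0:ℝ)..(π/2), sin x ^ (n+1)) = π / 2 / (n+1) := by
      rw [← ih]; ring
    simp
    rw [mul_assoc, e]
    field_simp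
    ring


lemma par_cont (f : ℝ → ℝ → ℝ) (hf : Continuous (fun p : ℝ × ℝ => f p.1 p.2)) (a b : ℝ) :
    Continuous fun x => ∫ t in a..b, f x t :=
  intervalIntegral.continuous_parametric_intervalIntegral_of_continuous' hf a b

lemma poly_int (p : Polynomial ℝ) : ∫ θ in (0:ℝ)..(π/2), ∫ φ in (0:ℝ)..(π/2), p.eval (sin φ * cos θ) * sin φ
    = π/2 * ∫ x in (0:ℝ)..1, p.eval x := by
  induction p using Polynomial.induction_on' with
  | add p q hp hq =>
    simp only [Polynomial.eval_add, add_mul]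
    rw [intervalIntegral.integral_add, mul_add, ← hp, ← hq, ← intervalIntegral.integral_add]
    · congr 1; ext θ
      rw [intervalIntegral.integral_add] <;> apply Continuous.intervalIntegrable <;> fun_prop
    · refine (par_cont _ ?_ _ _).intervalIntegrable _ _
      fun_prop
    · refine (par_cont _ ?_ _ _).intervalIntegrable _ _
      fun_prop
    · apply Continuous.intervalIntegrable; fun_prop
    · apply Continuous.intervalIntegrable; fun_prop
  | monomial n a =>
    simp only [Polynomial.eval_monomial]
    have h : ∀ θ φ : ℝ, a * (sin φ * cos θ)^n * sin φ = a * cos θ ^ n * sin φ ^ (n+1) := by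
      intros; ring
    simp only [h, intervalIntegral.integral_const_mul, intervalIntegral.integral_mul_const, integral_pow]
    have := W_prod n
    rw [mul_assoc, mul_comm (∫ x in (0:ℝ)..(π/2), cos x ^ n), this]
    simp
    ring

lemma fun_int (f : ℝ → ℝ) (hf : Continuous f) :
    ∫ θ in (0:ℝ)..(π/2), ∫ φ in (0:ℝ)..(π/2), f (sin φ * cos θ) * sin φ
    = π/2 * ∫ x in (0:ℝ)..1, f x := by
  have hpi : (0:ℝ) ≤ π/2 := by positivity
  have key : ∀ ε > 0, |(∫ θ in (0:ℝ)..(π/2), ∫ φ in (0:ℝ)..(π/2), f (sin φ * cos θ) * sin φ)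
      - π/2 * ∫ x in (0:ℝ)..1, f x| ≤ ε * ((π/2) * (π/2) + π/2) := by
    intro ε hε
    obtain ⟨p, hp⟩ := exists_polynomial_near_of_continuousOn 0 1 f hf.continuousOn ε hε
    have h1 := poly_int p
    have b1 : ‖∫ θ in (0:ℝ)..(π/2), ∫ φ in (0:ℝ)..(π/2), (p.eval (sin φ * cos θ) * sin φ - f (sin φ * cos θ) * sin φ)‖ 
        ≤ (ε * |π/2 - 0|) * |π/2 - 0| := by
      refine intervalIntegral.norm_integral_le_of_norm_le_const fun θ hθ => ?_
      refine intervalIntegral.norm_integral_le_of_norm_le_const fun φ hφ => ?_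
      rw [Set.uIoc_of_le hpi] at hθ hφ
      have s0 : 0 ≤ sin φ := sin_nonneg_of_nonneg_of_le_pi hφ.1.le (by linarith [hφ.2])
      have c0 : 0 ≤ cos θ := cos_nonneg_of_neg_pi_div_two_le_of_le (by linarith [hθ.1]) hθ.2
      rw [← sub_mul, norm_mul, norm_eq_abs, norm_eq_abs, abs_of_nonneg s0]
      have := hp (sin φ * cos θ) ⟨by positivity, mul_le_one₀ (sin_le_one φ) c0 (cos_le_one θ)⟩
      have s1 := sin_le_one φ
      nlinarith [abs_nonneg (Polynomial.eval (sin φ * cos θ) p - f (sin φ * cos θ))]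
    have b2 : ‖∫ x in (0:ℝ)..1, (p.eval x - f x)‖ ≤ ε * |(1:ℝ) - 0| := by
      refine intervalIntegral.norm_integral_le_of_norm_le_const fun x hx => ?_
      rw [Set.uIoc_of_le zero_le_one] at hx
      exact (hp x ⟨hx.1.le, hx.2⟩).le
    have e1 : ∫ θ in (0:ℝ)..(π/2), ∫ φ in (0:ℝ)..(π/2), (p.eval (sin φ * cos θ) * sin φ - f (sin φ * cos θ) * sin φ)
       = (∫ θ in (0:ℝ)..(π/2), ∫ φ in (0:ℝ)..(π/2), p.eval (sin φ * cos θ) * sin φ) - 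
         (∫ θ in (0:ℝ)..(π/2), ∫ φ in (0:ℝ)..(π/2), f (sin φ * cos θ) * sin φ) := by
      rw [← intervalIntegral.integral_sub]
      · congr 1; ext θ
        rw [intervalIntegral.integral_sub] <;> apply Continuous.intervalIntegrable <;> fun_prop
      · refine (par_cont _ ?_ _ _).intervalIntegrable _ _
        fun_prop
      · refine (par_cont _ ?_ _ _).intervalIntegrable _ _
        fun_prop
    have e2 : ∫ x in (0:ℝ)..1, (p.eval x - f x) = (∫ x in (0:ℝ)..1, p.eval x) - ∫ x in (0:ℝ)..1, f x := by
      rw [intervalIntegral.integral_sub] <;> apply Continuous.intervalIntegrable <;> fun_prop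
    rw [e1, h1] at b1
    rw [e2] at b2
    rw [sub_zero, abs_of_nonneg hpi] at b1
    simp only [norm_eq_abs, sub_zero, abs_one, mul_one] at b1 b2
    have b3 := mul_le_mul_of_nonneg_left b2 hpi
    rw [abs_le] at b1 b2 ⊢
    constructor <;> nlinarith [b1.1, b1.2, b2.1, b2.2]
  by_contra hne
  have hpos := abs_pos.2 (sub_ne_zero.2 hne)
  set D := |(∫ θ in (0:ℝ)..(π/2), ∫ φ in (0:ℝ)..(π/2), f (sin φ * cos θ) * sin φ)
      - π/2 * ∫ x in (0:ℝ)..1, f x|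
  have hC : 0 < (π/2) * (π/2) + π/2 := by positivity
  have := key (D / 2 / ((π/2) * (π/2) + π/2)) (by positivity)
  rw [div_mul_cancel₀ _ hC.ne'] at this
  linarith

lemma L_int : ∫ θ in (0:ℝ)..(π/2), ∫ φ in (0:ℝ)..(π/2), √(sin θ ^ 2 * sin φ ^ 2 + cos φ ^ 2) * sin φ = π^2/8 := by
  have h := fun_int (fun x => √(1 - x^2)) (by fun_prop)
  have e : ∀ θ φ : ℝ, 1 - (sin φ * cos θ)^2 = sin θ ^ 2 * sin φ ^ 2 + cos φ ^ 2 := by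
    intro θ φ
    rw [sin_sq θ, cos_sq' φ]; ring
  simp only [e] at h
  rw [h]
  have h2 := integral_sqrt_one_sub_sq
  rw [← intervalIntegral.integral_add_adjacent_intervals (b := 0)] at h2
  · have r := intervalIntegral.integral_comp_neg (a := 0) (b := 1) (fun x : ℝ => √(1 - x^2))
    simp only [even_two, Even.neg_pow, neg_zero] at r
    rw [← r] at h2
    have : ∫ x in (0:ℝ)..1, √(1 - x^2) = π/4 := by linarith
    rw [this]; ring
  · apply Continuous.intervalIntegrable; fun_prop
  · apply Continuous.intervalIntegrable; fun_prop

lemma sin4_int : ∫ x in (0:ℝ)..(π/2), sin x ^ 4 = 3 * π / 16 := by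
  rw [integral_sin_pow, integral_sin_pow]
  simp
  ring

/-- The joint moment `E(ar·mw)` of the surface area and mean width of the projection
of a unit 4-cube onto a uniformly random 3-subspace of `ℝ⁴` equals
`3(5 + 2G)/π + 9π/4`, where `G` is Catalan's constant. -/
theorem joint_moment_surface_area_mean_width_projection_4cube
    (G : ℝ) (hG : G = ∑' k : ℕ, (-1 : ℝ) ^ k / (2 * (k : ℝ) + 1) ^ 2) :
    (96 / π ^ 2) *
      (∫ θ in (0:ℝ)..(π/2), ∫ φ in (0:ℝ)..(π/2), ∫ ψ in (0:ℝ)..(π/2),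
        (Real.sqrt (Real.cos φ ^ 2 * Real.sin ψ ^ 2 + Real.cos ψ ^ 2)
          + Real.sin ψ *
            Real.sqrt (Real.sin θ ^ 2 * Real.sin φ ^ 2 + Real.cos φ ^ 2)) *
          Real.sin ψ * Real.sin φ * Real.sin ψ ^ 2)
    = 3 * (5 + 2 * G) / π + 9 * π / 4 := by
  have i : ∀ θ φ : ℝ, ∫ ψ in (0:ℝ)..(π/2),
        (Real.sqrt (Real.cos φ ^ 2 * Real.sin ψ ^ 2 + Real.cos ψ ^ 2)
          + Real.sin ψ *
            Real.sqrt (Real.sin θ ^ 2 * Real.sin φ ^ 2 + Real.cos φ ^ 2)) *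
          Real.sin ψ * Real.sin φ * Real.sin ψ ^ 2 
      = (∫ ψ in (0:ℝ)..(π/2), √(cos φ ^ 2 * sin ψ ^ 2 + cos ψ ^ 2) * sin ψ * sin φ * sin ψ ^ 2) 
        + 3 * π / 16 * (√(sin θ ^ 2 * sin φ ^ 2 + cos φ ^ 2) * sin φ) := by
    intro θ φ
    rw [← sin4_int, ← intervalIntegral.integral_mul_const, ← intervalIntegral.integral_add]
    · congr 1; ext ψ; ring
    · apply Continuous.intervalIntegrable; fun_prop
    · apply Continuous.intervalIntegrable; fun_prop
  have i2 : ∀ θ : ℝ, ∫ φ in (0:ℝ)..(π/2), ((∫ ψ in (0:ℝ)..(π/2), √(cos φ ^ 2 * sin ψ ^ 2 + cos ψ ^ 2) * sin ψ * sin φ * sin ψ ^ 2) 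
        + 3 * π / 16 * (√(sin θ ^ 2 * sin φ ^ 2 + cos φ ^ 2) * sin φ))
      = (5 + 2 * G) / 16 + 3 * π / 16 * ∫ φ in (0:ℝ)..(π/2), √(sin θ ^ 2 * sin φ ^ 2 + cos φ ^ 2) * sin φ := by
    intro θ
    rw [intervalIntegral.integral_add, J_int, ← hG, intervalIntegral.integral_const_mul]
    · refine (par_cont _ ?_ _ _).intervalIntegrable _ _
      fun_prop
    · apply Continuous.intervalIntegrable; fun_prop
  simp only [i, i2]
  rw [intervalIntegral.integral_add, intervalIntegral.integral_const_mul, L_int, intervalIntegral.integral_const]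
  · have := pi_pos
    simp only [smul_eq_mul]
    field_simp
    ring
  · exact intervalIntegrable_const
  · refine Continuous.intervalIntegrable (Continuous.mul continuous_const (par_cont _ ?_ _ _)) _ _
    fun_prop
end
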